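/- arXiv:1404.6939 — 10 statements merged into one kernel-verified Lean document; each statement's English description precedes it below -/
import Mathlib

section
/- Let (R,𝔪) be a Noetherian local ring and let a finite group G act on R by ring automorphisms, with |G| invertible in R. Then for every ideal I of the invariant ring R^G one has IR ∩ R^G = I; consequently R^G is a Noetherian ring, and R^G is a local ring with maximal ideal 𝔫 = 𝔪 ∩ R^G. -/
/-- The subring of invariants `R^G` of a ring `R` under an action of a group `G`
by ring automorphisms. -/
def fixedSubring (G R : Type*) [Group G] [CommRing R] [MulSemiringAction G R] :
    Subring R where
  carrier := {x | ∀ σ : G, σ • x = x}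
  mul_mem' := by intro a b ha hb σ; rw [smul_mul', ha σ, hb σ]
  one_mem' := by intro σ; exact smul_one σ
  add_mem' := by intro a b ha hb σ; rw [smul_add, ha σ, hb σ]
  zero_mem' := by intro σ; exact smul_zero σ
  neg_mem' := by intro a ha σ; rw [smul_neg, ha σ]

lemma fixedSubring_isLocalHom (R G : Type) [CommRing R] [Group G] [MulSemiringAction G R] :
    IsLocalHom (fixedSubring G R).subtype := by
  constructor
  rintro ⟨a, ha⟩ hu
  obtain ⟨b, hb⟩ := hu.exists_right_inv
  have hb' : a * b = 1 := hb
  have hbm : b ∈ fixedSubring G R := by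
    intro σ
    have h1 : a * (σ • b) = 1 := by
      have h2 : σ • (a * b) = 1 := by rw [hb', smul_one]
      rwa [smul_mul', ha σ] at h2
    calc σ • b = (a * b) * (σ • b) := by rw [hb', one_mul]
      _ = b * (a * (σ • b)) := by ring
      _ = b := by rw [h1, mul_one]
  exact IsUnit.of_mul_eq_one ⟨b, hbm⟩ (Subtype.ext hb')

/-- The trace map. -/
def fixedTrace (R G : Type) [CommRing R] [Group G] [Fintype G] [MulSemiringAction G R] (x : R) :
    fixedSubring G R :=
  ⟨∑ τ : G, τ • x, by
    intro σ
    rw [Finset.smul_sum]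
    simp_rw [smul_smul]
    exact Fintype.sum_equiv (Equiv.mulLeft σ) _ _ (fun _ => rfl)⟩

lemma fixed_contraction (R : Type) [CommRing R]
    (G : Type) [Group G] [Fintype G] [MulSemiringAction G R]
    (hG : IsUnit ((Fintype.card G : R))) (I : Ideal (fixedSubring G R)) :
    Ideal.comap (fixedSubring G R).subtype
      (Ideal.map (fixedSubring G R).subtype I) = I := by
  refine le_antisymm ?_ Ideal.le_comap_map
  have key : ∀ x ∈ Ideal.map (fixedSubring G R).subtype I, ∀ a : R,
      fixedTrace R G (a * x) ∈ I := by
    intro x hx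
    refine Submodule.span_induction ?_ ?_ ?_ ?_ hx
    · rintro _ ⟨s, hs, rfl⟩ a
      have : fixedTrace R G (a * (fixedSubring G R).subtype s) = fixedTrace R G a * s := by
        apply Subtype.ext
        change ∑ τ : G, τ • (a * (s : R)) = (∑ τ : G, τ • a) * (s : R)
        rw [Finset.sum_mul]
        refine Finset.sum_congr rfl fun τ _ => ?_
        rw [smul_mul', s.2 τ]
      rw [this]
      exact I.mul_mem_left _ hs
    · intro a
      have : fixedTrace R G (a * 0) = 0 := by
        apply Subtype.ext
        simp [fixedTrace]
      rw [this]
      exact I.zero_mem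
    · intro x y _ _ hx hy a
      have : fixedTrace R G (a * (x + y)) = fixedTrace R G (a * x) + fixedTrace R G (a * y) := by
        apply Subtype.ext
        simp [fixedTrace, mul_add, Finset.sum_add_distrib]
      rw [this]
      exact I.add_mem (hx a) (hy a)
    · intro b x _ hx a
      rw [smul_eq_mul, ← mul_assoc]
      exact hx _
  intro s hs
  have h1 := key _ (Ideal.mem_comap.1 hs) 1
  have h2 : fixedTrace R G (1 * (fixedSubring G R).subtype s)
      = (Fintype.card G : fixedSubring G R) * s := by
    apply Subtype.ext
    change ∑ τ : G, τ • (1 * (s : R)) = ((Fintype.card G : fixedSubring G R) : R) * (s : R)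
    rw [one_mul, Finset.sum_congr rfl (fun τ _ => s.2 τ)]
    simp
  have hu : IsUnit (Fintype.card G : fixedSubring G R) := by
    have := fixedSubring_isLocalHom R G
    apply this.map_nonunit
    simpa using hG
  rw [h2] at h1
  exact (Ideal.unit_mul_mem_iff_mem I hu).1 h1

/-- Let `(R,𝔪)` be a Noetherian local ring with a finite group `G` acting by ring
automorphisms, `|G|` invertible in `R`.  Then `IR ∩ R^G = I` for every ideal `I` of
`R^G`; consequently `R^G` is Noetherian and local with maximal ideal `𝔫 = 𝔪 ∩ R^G`. -/
theorem ideal_contraction_noetherian_local_of_invariants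
    (R : Type) [CommRing R] [IsNoetherianRing R] [IsLocalRing R]
    (G : Type) [Group G] [Fintype G] [MulSemiringAction G R]
    (hG : IsUnit ((Fintype.card G : R))) :
    (∀ I : Ideal (fixedSubring G R),
        Ideal.comap (fixedSubring G R).subtype
          (Ideal.map (fixedSubring G R).subtype I) = I) ∧
    IsNoetherianRing (fixedSubring G R) ∧
    ∃ h : IsLocalRing (fixedSubring G R),
      @IsLocalRing.maximalIdeal (fixedSubring G R) _ h =
        Ideal.comap (fixedSubring G R).subtype (IsLocalRing.maximalIdeal R) := by
  have hc := fixed_contraction R G hG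
  refine ⟨hc, ?_, ?_⟩
  · rw [isNoetherianRing_iff, isNoetherian_iff']
    have hmono : StrictMono (Ideal.map (fixedSubring G R).subtype) :=
      Monotone.strictMono_of_injective (fun _ _ h => Ideal.map_mono h)
        (Function.LeftInverse.injective hc)
    exact hmono.wellFoundedGT
  · have := fixedSubring_isLocalHom R G
    have h : IsLocalRing (fixedSubring G R) :=
      RingHom.domain_isLocalRing (fixedSubring G R).subtype
    exact ⟨h, (IsLocalRing.maximalIdeal_comap (fixedSubring G R).subtype).symm⟩
end

section
/- Let (R,𝔪) be a Noetherian local ring and let a finite group G act on R by ring automorphisms, with |G| invertible in R. For j ≥ 1 set 𝔫_j = 𝔪^j ∩ R^G. Then the filtration {𝔫_j} defines on R^G the same topology as the 𝔫-adic topology, where 𝔫 = 𝔪 ∩ R^G: one has 𝔫^j ⊆ 𝔫_j for all j ≥ 1, and for every t ≥ 1 there exists j ≥ 1 with 𝔫_j ⊆ 𝔫^t. -/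
section helpers

variable {R G : Type} [CommRing R] [Group G] [Fintype G] [MulSemiringAction G R]

theorem smul_mem_max [IsLocalRing R] (σ : G) {x : R} (hx : x ∈ IsLocalRing.maximalIdeal R) :
    σ • x ∈ IsLocalRing.maximalIdeal R := by
  rw [IsLocalRing.mem_maximalIdeal, mem_nonunits_iff] at hx ⊢
  intro h
  apply hx
  have := h.map (MulSemiringAction.toRingHom G R σ⁻¹)
  simpa using this

theorem trace_mem (x : R) : (∑ σ : G, σ • x) ∈ fixedSubring G R := by
  intro τ
  rw [Finset.smul_sum]
  simp_rw [smul_smul]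
  exact Fintype.sum_equiv (Equiv.mulLeft τ) _ _ (fun _ => rfl)

theorem max_le_radical [IsLocalRing R] :
    IsLocalRing.maximalIdeal R ≤
      ((Ideal.comap (fixedSubring G R).subtype (IsLocalRing.maximalIdeal R)).map
        (fixedSubring G R).subtype).radical := by
  classical
  intro x hx
  set J := (Ideal.comap (fixedSubring G R).subtype (IsLocalRing.maximalIdeal R)).map
        (fixedSubring G R).subtype
  let p : Polynomial R := ∏ σ : G, (Polynomial.X - Polynomial.C (σ • x))
  have hmon : p.Monic := Polynomial.monic_prod_of_monic _ _ (fun σ _ => Polynomial.monic_X_sub_C _)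
  have hev : p.eval x = 0 := by
    simp only [p, Polynomial.eval_prod]
    exact Finset.prod_eq_zero (Finset.mem_univ (1 : G)) (by simp)
  have hinv : ∀ i, p.coeff i ∈ fixedSubring G R := by
    intro i τ
    have h1 : p.map (MulSemiringAction.toRingHom G R τ) = p := by
      simp only [p, Polynomial.map_prod]
      refine Fintype.prod_equiv (Equiv.mulLeft τ) _ _ (fun σ => ?_)
      simp [smul_smul]
    have h2 := congrArg (fun q => Polynomial.coeff q i) h1
    simpa using h2
  have hmap : p.map (IsLocalRing.residue R) = Polynomial.X ^ Fintype.card G := by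
    simp only [p, Polynomial.map_prod]
    rw [Finset.prod_congr rfl (g := fun _ => Polynomial.X)]
    · simp
    · intro σ _
      have : IsLocalRing.residue R (σ • x) = 0 :=
        (IsLocalRing.residue_eq_zero_iff _).2 (smul_mem_max σ hx)
      simp [this]
  have hdeg : p.natDegree = Fintype.card G := by
    rw [← hmon.natDegree_map (IsLocalRing.residue R), hmap, Polynomial.natDegree_X_pow]
  have hc : ∀ i < p.natDegree, p.coeff i ∈ J := by
    intro i hi
    have h2 := congrArg (fun q => Polynomial.coeff q i) hmap
    simp only [Polynomial.coeff_map, Polynomial.coeff_X_pow] at h2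
    rw [if_neg (by omega), IsLocalRing.residue_eq_zero_iff] at h2
    exact Ideal.mem_map_of_mem (fixedSubring G R).subtype
      (x := (⟨p.coeff i, hinv i⟩ : fixedSubring G R)) h2
  refine ⟨p.natDegree, ?_⟩
  rw [Polynomial.eval_eq_sum_range, Finset.sum_range_succ, hmon.coeff_natDegree, one_mul] at hev
  rw [eq_neg_of_add_eq_zero_right hev]
  exact J.neg_mem (J.sum_mem fun i hi => J.mul_mem_right _ (hc i (Finset.mem_range.1 hi)))

theorem trace_mem_ideal (I : Ideal (fixedSubring G R)) {x : R}
    (hx : x ∈ I.map (fixedSubring G R).subtype) :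
    ∀ r : R, (⟨∑ σ : G, σ • (r * x), trace_mem _⟩ : fixedSubring G R) ∈ I := by
  induction hx using Submodule.span_induction with
  | mem y hy =>
    intro r
    obtain ⟨a, ha, rfl⟩ := hy
    have : (⟨∑ σ : G, σ • (r * (fixedSubring G R).subtype a), trace_mem _⟩ : fixedSubring G R)
        = ⟨∑ σ : G, σ • r, trace_mem r⟩ * a := by
      apply Subtype.ext
      have h : ∀ σ : G, σ • (a : R) = a := a.2
      simp [h, Finset.sum_mul]
    rw [this]
    exact I.mul_mem_left _ ha
  | zero => intro r; convert I.zero_mem; simp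
  | add y z _ _ hy hz =>
    intro r
    convert I.add_mem (hy r) (hz r)
    simp [mul_add, Finset.sum_add_distrib]
  | smul s y _ hy =>
    intro r
    simpa [mul_assoc] using hy (r * s)

theorem comap_map_le (hG : IsUnit ((Fintype.card G : R))) (I : Ideal (fixedSubring G R)) :
    (I.map (fixedSubring G R).subtype).comap (fixedSubring G R).subtype ≤ I := by
  intro x hx
  obtain ⟨u, hu⟩ := hG.exists_right_inv
  have hui : u ∈ fixedSubring G R := by
    intro σ
    have h1 : (Fintype.card G : R) * σ • u = 1 := by
      have := congrArg (MulSemiringAction.toRingHom G R σ) hu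
      rw [map_mul, map_natCast, map_one] at this
      exact this
    exact hG.mul_left_cancel (h1.trans hu.symm)
  have h := I.mul_mem_left ⟨u, hui⟩ (trace_mem_ideal I (Ideal.mem_comap.1 hx) 1)
  convert h
  apply Subtype.ext
  have hx' : ∀ σ : G, σ • (x : R) = x := x.2
  simp only [one_mul, Subring.subtype_apply, hx', Finset.sum_const, Finset.card_univ,
    nsmul_eq_mul, Subring.coe_mul]
  linear_combination (-(x : R)) * hu

end helpers

/-- For `𝔫_j = 𝔪^j ∩ R^G` and `𝔫 = 𝔪 ∩ R^G`: one has `𝔫^j ⊆ 𝔫_j` for all `j ≥ 1`,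
and for every `t ≥ 1` there is `j ≥ 1` with `𝔫_j ⊆ 𝔫^t`; so the filtration `{𝔫_j}`
defines the `𝔫`-adic topology on `R^G`. -/
theorem contraction_filtration_equiv_adic_topology
    (R : Type) [CommRing R] [IsNoetherianRing R] [IsLocalRing R]
    (G : Type) [Group G] [Fintype G] [MulSemiringAction G R]
    (hG : IsUnit ((Fintype.card G : R))) :
    (∀ j : ℕ, 1 ≤ j →
      (Ideal.comap (fixedSubring G R).subtype (IsLocalRing.maximalIdeal R)) ^ j ≤
        Ideal.comap (fixedSubring G R).subtype ((IsLocalRing.maximalIdeal R) ^ j)) ∧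
    (∀ t : ℕ, 1 ≤ t → ∃ j : ℕ, 1 ≤ j ∧
      Ideal.comap (fixedSubring G R).subtype ((IsLocalRing.maximalIdeal R) ^ j) ≤
        (Ideal.comap (fixedSubring G R).subtype (IsLocalRing.maximalIdeal R)) ^ t) := by
  refine ⟨fun j _ => Ideal.le_comap_pow _ j, fun t ht => ?_⟩
  obtain ⟨k, hk⟩ := Ideal.exists_pow_le_of_le_radical_of_fg (max_le_radical (R := R) (G := G))
    (IsNoetherian.noetherian _)
  refine ⟨(k + 1) * t, Nat.mul_pos k.succ_pos ht, ?_⟩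
  refine le_trans (Ideal.comap_mono ?_) (comap_map_le hG _)
  rw [Ideal.map_pow, pow_mul]
  exact Ideal.pow_right_mono ((Ideal.pow_le_pow_right k.le_succ).trans hk) t
end

section
/- Let (R,𝔪) be a Noetherian local ring and let a finite group G act on R by ring automorphisms, with |G| invertible in R. If R is complete with respect to the 𝔪-adic topology, then the invariant ring R^G is complete with respect to the 𝔫-adic topology, where 𝔫 = 𝔪 ∩ R^G. -/
/-- trace to the invariants -/
def trInv (G R : Type) [Group G] [Fintype G] [CommRing R] [MulSemiringAction G R] :
    R →ₗ[fixedSubring G R] fixedSubring G R where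
  toFun x := ⟨∑ σ : G, σ • x, fun τ => by
    rw [Finset.smul_sum]
    simp_rw [smul_smul]
    exact Fintype.sum_equiv (Equiv.mulLeft τ) _ _ (fun _ => rfl)⟩
  map_add' x y := by
    apply Subtype.ext
    simp [Finset.sum_add_distrib]
  map_smul' a x := by
    apply Subtype.ext
    simp only [Subring.smul_def, smul_eq_mul, RingHom.id_apply, Subring.coe_mul, Finset.mul_sum]
    refine Finset.sum_congr rfl fun σ _ => ?_
    rw [smul_mul', a.2 σ]

lemma mem_of_mem_map_inv (G R : Type) [Group G] [Fintype G] [CommRing R] [MulSemiringAction G R]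
    (hG : IsUnit ((Fintype.card G : R))) (I : Ideal (fixedSubring G R)) (a : fixedSubring G R)
    (ha : (a : R) ∈ I.map (fixedSubring G R).subtype) : a ∈ I := by
  have key : ∀ x ∈ I.map (fixedSubring G R).subtype, ∀ r : R, trInv G R (r * x) ∈ I := by
    intro x hx
    induction hx using Submodule.span_induction with
    | zero => simp
    | add x y _ _ h1 h2 =>
      intro r
      rw [mul_add, map_add]; exact I.add_mem (h1 r) (h2 r)
    | smul s x hx h =>
      intro r
      have := h (r * s)
      rwa [mul_assoc] at this
    | mem x h =>
      intro r
      obtain ⟨b, hb, rfl⟩ := h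
      have : trInv G R (r * (fixedSubring G R).subtype b) = b • trInv G R r := by
        rw [← map_smul, mul_comm]; rfl
      rw [this]
      exact I.mul_mem_right _ hb
  obtain ⟨u, hu⟩ := hG.exists_left_inv
  have h := key _ ha u
  suffices h2 : trInv G R (u * a) = a by rwa [h2] at h
  have hu' : ∀ σ : G, σ • u = u := by
    intro σ
    have h3 : σ • u * (Fintype.card G : R) = 1 := by
      have := congrArg (fun t => σ • t) hu
      simp only [smul_mul', smul_one] at this
      rwa [show σ • (Fintype.card G : R) = (Fintype.card G : R) from
        map_natCast (MulSemiringAction.toRingHom G R σ) _] at this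
    exact hG.mul_right_cancel (h3.trans hu.symm)
  apply Subtype.ext
  change ∑ σ : G, σ • (u * (a : R)) = a
  have : ∀ σ : G, σ • (u * (a : R)) = u * a := fun σ => by rw [smul_mul', hu', a.2 σ]
  simp only [this, Finset.sum_const, Finset.card_univ, nsmul_eq_mul]
  rw [← mul_assoc, mul_comm _ u, hu, one_mul]

lemma smul_mem_max_pow (G R : Type) [Group G] [CommRing R] [IsLocalRing R]
    [MulSemiringAction G R] (σ : G) (k : ℕ) (x : R)
    (hx : x ∈ IsLocalRing.maximalIdeal R ^ k) : σ • x ∈ IsLocalRing.maximalIdeal R ^ k := by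
  have h1 : (IsLocalRing.maximalIdeal R).map (MulSemiringAction.toRingHom G R σ) ≤
      IsLocalRing.maximalIdeal R := by
    rw [Ideal.map_le_iff_le_comap]
    intro y hy
    rw [Ideal.mem_comap, IsLocalRing.mem_maximalIdeal, mem_nonunits_iff]
    rw [IsLocalRing.mem_maximalIdeal, mem_nonunits_iff] at hy
    intro h
    apply hy
    have := h.map (MulSemiringAction.toRingHom G R σ⁻¹)
    simpa using this
  have h2 := Ideal.mem_map_of_mem (MulSemiringAction.toRingHom G R σ) hx
  rw [Ideal.map_pow] at h2
  exact Ideal.pow_right_mono h1 k h2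

lemma pow_card_mem_inv (G R : Type) [Group G] [Fintype G] [CommRing R] [IsLocalRing R]
    [MulSemiringAction G R] (x : R) (hx : x ∈ IsLocalRing.maximalIdeal R) :
    x ^ (MulSemiringAction.charpoly G x).natDegree ∈
    (Ideal.comap (fixedSubring G R).subtype (IsLocalRing.maximalIdeal R)).map
      (fixedSubring G R).subtype := by
  set P := MulSemiringAction.charpoly G x with hP
  have hm : P.Monic := MulSemiringAction.monic_charpoly G x
  have h0 : P.eval x = 0 := MulSemiringAction.eval_charpoly G x
  have hres : P.map (IsLocalRing.residue R) = Polynomial.X ^ Fintype.card G := by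
    rw [hP, MulSemiringAction.charpoly_eq, Polynomial.map_prod]
    have : ∀ σ : G, IsLocalRing.residue R (σ • x) = 0 := fun σ => by
      rw [IsLocalRing.residue_eq_zero_iff]
      simpa using smul_mem_max_pow G R σ 1 x (by simpa using hx)
    simp [this]
  have hd : P.natDegree = Fintype.card G := by
    rw [← hm.natDegree_map (IsLocalRing.residue R), hres, Polynomial.natDegree_X_pow]
  rw [Polynomial.eval_eq_sum_range, Finset.sum_range_succ, hm.coeff_natDegree, one_mul] at h0
  rw [eq_neg_of_add_eq_zero_right h0]
  refine neg_mem (Ideal.sum_mem _ fun i hi => Ideal.mul_mem_right _ _ ?_)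
  have hi' : i ≠ Fintype.card G := by
    rw [← hd]; exact (Finset.mem_range.1 hi).ne
  have hc : P.coeff i ∈ IsLocalRing.maximalIdeal R := by
    rw [← IsLocalRing.residue_eq_zero_iff, ← Polynomial.coeff_map, hres, Polynomial.coeff_X_pow,
      if_neg hi']
  exact Ideal.mem_map_of_mem (fixedSubring G R).subtype
    (I := Ideal.comap (fixedSubring G R).subtype (IsLocalRing.maximalIdeal R))
    (x := ⟨P.coeff i, fun σ => MulSemiringAction.smul_coeff_charpoly x i σ⟩) hc

/-- If `R` is a Noetherian local ring, complete in the `𝔪`-adic topology, with a finite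
group `G` acting by ring automorphisms and `|G|` invertible in `R`, then `R^G` is
complete in the `𝔫`-adic topology, where `𝔫 = 𝔪 ∩ R^G`. -/
theorem invariants_complete_of_complete
    (R : Type) [CommRing R] [IsNoetherianRing R] [IsLocalRing R]
    [IsAdicComplete (IsLocalRing.maximalIdeal R) R]
    (G : Type) [Group G] [Fintype G] [MulSemiringAction G R]
    (hG : IsUnit ((Fintype.card G : R))) :
    IsAdicComplete
      (Ideal.comap (fixedSubring G R).subtype (IsLocalRing.maximalIdeal R))
      (fixedSubring G R) := by
  set A := fixedSubring G R with hA
  set m := IsLocalRing.maximalIdeal R with hm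
  set n := Ideal.comap A.subtype m with hn
  have hJm : n.map A.subtype ≤ m := Ideal.map_comap_le
  obtain ⟨N, hN⟩ : ∃ N, m ^ N ≤ n.map A.subtype :=
    Ideal.exists_pow_le_of_le_radical_of_fg
      (fun x hx => ⟨_, pow_card_mem_inv G R x hx⟩) (IsNoetherian.noetherian m)
  have hup : ∀ k (a : A), a ∈ n ^ k → (a : R) ∈ (n.map A.subtype) ^ k := fun k a ha => by
    rw [← Ideal.map_pow]; exact Ideal.mem_map_of_mem A.subtype ha
  have hup' : ∀ k (a : A), a ∈ n ^ k → (a : R) ∈ m ^ k := fun k a ha =>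
    Ideal.pow_right_mono hJm k (hup k a ha)
  have hH : ∀ x : R, (∀ k, x ∈ m ^ k) → x = 0 := fun x hx =>
    IsHausdorff.haus (I := m) (M := R) inferInstance x fun k => by
      simpa [SModEq.zero] using hx k
  refine { haus' := ?_, prec' := ?_ }
  · intro x hx
    apply Subtype.ext
    refine hH _ fun k => hup' k x ?_
    simpa [SModEq.zero] using hx k
  · intro f hf
    have hf' : ∀ {i j}, i ≤ j → f i - f j ∈ n ^ i := fun {i j} hij => by
      simpa [SModEq.sub_mem] using hf hij
    obtain ⟨L, hL⟩ := IsPrecomplete.prec (I := m) (M := R) inferInstance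
      (f := fun i => (f i : R)) (fun {i j} hij => by
        simpa [SModEq.sub_mem] using hup' i _ (hf' hij))
    have hL' : ∀ k, (f k : R) - L ∈ m ^ k := fun k => by
      simpa [SModEq.sub_mem] using hL k
    have hinv : ∀ σ : G, σ • L = L := by
      intro σ
      rw [← sub_eq_zero]
      refine hH _ fun k => ?_
      have h1 := smul_mem_max_pow G R σ k _ (hL' k)
      rw [smul_sub, (f k).2 σ] at h1
      have := sub_mem (hL' k) h1
      rwa [sub_sub_sub_cancel_left] at this
    refine ⟨⟨L, hinv⟩, fun k => ?_⟩
    suffices h : f k - ⟨L, hinv⟩ ∈ n ^ k by simpa [SModEq.sub_mem] using h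
    apply mem_of_mem_map_inv G R hG
    rw [Ideal.map_pow]
    have h1 : (f k : R) - f (k + N * k) ∈ (n.map A.subtype) ^ k :=
      hup k _ (hf' (Nat.le_add_right _ _))
    have h2 : (f (k + N * k) : R) - L ∈ (n.map A.subtype) ^ k := by
      have := Ideal.pow_le_pow_right (Nat.le_add_left (N * k) k) (hL' (k + N * k))
      rw [pow_mul] at this
      exact Ideal.pow_right_mono hN k this
    have := add_mem h1 h2
    rwa [sub_add_sub_cancel] at this
end

section
/- Let (R,𝔪) be a Noetherian local ring and let a finite group G act on R by ring automorphisms, with |G| invertible in R. The G-action on R induces a G-action on the residue field k = R/𝔪; let k^G denote the fixed field of this action. Then the image of the natural ring map i: R^G/𝔫 → R/𝔪 (where 𝔫 = 𝔪 ∩ R^G) is exactly k^G. -/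
/-- The image of the natural map `i : R^G/𝔫 → R/𝔪` is exactly the fixed field `k^G`
of the induced `G`-action on `k = R/𝔪`.  (Here an element `t ∈ R/𝔪` is fixed by the
induced action of `σ ∈ G` iff `σ • x` represents `t` whenever `x` represents `t`.) -/
theorem image_of_invariants_in_residue_field_eq_fixed_field
    (R : Type) [CommRing R] [IsNoetherianRing R] [IsLocalRing R]
    (G : Type) [Group G] [Fintype G] [MulSemiringAction G R]
    (hG : IsUnit ((Fintype.card G : R))) :
    Set.range ⇑((Ideal.Quotient.mk (IsLocalRing.maximalIdeal R)).comp
        (fixedSubring G R).subtype) =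
      {t : R ⧸ IsLocalRing.maximalIdeal R | ∀ (σ : G) (x : R),
        Ideal.Quotient.mk (IsLocalRing.maximalIdeal R) x = t →
          Ideal.Quotient.mk (IsLocalRing.maximalIdeal R) (σ • x) = t} := by
  ext t
  simp only [Set.mem_range, Set.mem_setOf_eq]
  constructor
  · rintro ⟨⟨y, hy⟩, rfl⟩ σ x hx
    have hy' : σ • y = y := hy σ
    change Ideal.Quotient.mk _ x = Ideal.Quotient.mk _ y at hx
    change Ideal.Quotient.mk _ (σ • x) = Ideal.Quotient.mk _ y
    rw [Ideal.Quotient.eq, IsLocalRing.mem_maximalIdeal, mem_nonunits_iff] at hx ⊢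
    intro h
    apply hx
    have h2 := h.map (MulSemiringAction.toRingHom G R σ⁻¹)
    rw [MulSemiringAction.toRingHom_apply, smul_sub, inv_smul_smul, ← hy', inv_smul_smul] at h2
    exact h2
  · intro ht
    obtain ⟨x, rfl⟩ := Ideal.Quotient.mk_surjective t
    obtain ⟨u, hu⟩ := hG.exists_left_inv
    have hn : ∀ σ : G, σ • (Fintype.card G : R) = (Fintype.card G : R) := fun σ =>
      map_natCast (MulSemiringAction.toRingHom G R σ) _
    have hσu : ∀ σ : G, σ • u = u := by
      intro σ
      have h1 : σ • u * (Fintype.card G : R) = 1 := by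
        conv_lhs => rw [← hn σ]
        rw [← smul_mul', hu, smul_one]
      exact hG.mul_right_cancel (h1.trans hu.symm)
    refine ⟨⟨u * ∑ τ : G, τ • x, ?_⟩, ?_⟩
    · intro σ
      rw [smul_mul', hσu, Finset.smul_sum]
      congr 1
      simp only [smul_smul]
      exact Fintype.sum_equiv (Equiv.mulLeft σ) _ _ (fun _ => rfl)
    · change Ideal.Quotient.mk _ (u * ∑ τ : G, τ • x) = Ideal.Quotient.mk _ x
      rw [map_mul, map_sum, Finset.sum_congr rfl (fun τ _ => ht τ x rfl), Finset.sum_const,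
        Finset.card_univ, nsmul_eq_mul, ← map_natCast (Ideal.Quotient.mk _), ← mul_assoc,
        ← map_mul, hu, map_one, one_mul]
end

section
/- Let (R,𝔪) be a complete Noetherian local ring and let a finite group G act on R by ring automorphisms, with |G| invertible in R. Then every R-module E of finite length is finitely generated as an R^G-module. -/
theorem finite_residue_aux
    (R : Type) [CommRing R] [IsLocalRing R]
    (G : Type) [Group G] [Fintype G] [MulSemiringAction G R]
    (hG : IsUnit ((Fintype.card G : R))) :
    Module.Finite (fixedSubring G R) (IsLocalRing.ResidueField R) := by
  have key : ∀ x ∈ FixedPoints.subfield G (IsLocalRing.ResidueField R),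
      ∃ s : fixedSubring G R, IsLocalRing.residue R (s : R) = x := by
    intro x hx
    obtain ⟨r, rfl⟩ := IsLocalRing.residue_surjective x
    obtain ⟨c, hc⟩ := hG.exists_right_inv
    have hcinv : ∀ σ : G, σ • c = c := by
      intro σ
      have h1 : (Fintype.card G : R) * (σ • c) = 1 := by
        have := congrArg (fun y => σ • y) hc
        have h2 : σ • (Fintype.card G : R) = (Fintype.card G : R) :=
          map_natCast (MulSemiringAction.toRingHom G R σ) _
        simpa [smul_mul', h2] using this
      exact hG.mul_left_cancel (h1.trans hc.symm)
    refine ⟨⟨c * ∑ τ : G, τ • r, ?_⟩, ?_⟩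
    · intro σ
      rw [smul_mul', hcinv, Finset.smul_sum]
      congr 1
      simp_rw [smul_smul]
      exact Fintype.sum_equiv (Equiv.mulLeft σ) _ _ (fun _ => rfl)
    · have hx' : ∀ σ : G, σ • IsLocalRing.residue R r = IsLocalRing.residue R r := hx
      have hc' := congrArg (IsLocalRing.residue R) hc
      simp only [map_mul, map_natCast, map_one] at hc'
      simp only [map_mul, map_sum, IsLocalRing.ResidueField.residue_smul, hx',
        Finset.sum_const, Finset.card_univ, nsmul_eq_mul]
      linear_combination (IsLocalRing.residue R r) * hc'
  obtain ⟨t, ht⟩ := (inferInstance : Module.Finite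
    (FixedPoints.subfield G (IsLocalRing.ResidueField R)) (IsLocalRing.ResidueField R)).fg_top
  refine ⟨⟨t, ?_⟩⟩
  rw [eq_top_iff]
  rintro y -
  have hy : y ∈ Submodule.span (FixedPoints.subfield G (IsLocalRing.ResidueField R))
    (t : Set (IsLocalRing.ResidueField R)) := by rw [ht]; trivial
  induction hy using Submodule.span_induction with
  | mem x h => exact Submodule.subset_span h
  | zero => exact Submodule.zero_mem _
  | add x y _ _ hx hy => exact Submodule.add_mem _ hx hy
  | smul a x _ hx =>
    obtain ⟨s, hs⟩ := key a a.2
    have : a • x = s • x := by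
      change (a : IsLocalRing.ResidueField R) * x = (s : R) • x
      rw [← hs, Algebra.smul_def]; rfl
    rw [this]
    exact Submodule.smul_mem _ _ hx

/-- If `R` is a complete Noetherian local ring with a finite group `G` acting by ring
automorphisms and `|G|` invertible in `R`, then every `R`-module `E` of finite length
is finitely generated as a module over the invariant subring `R^G` (via restriction of
scalars). -/
theorem finite_over_invariants_of_finite_length
    (R : Type) [CommRing R] [IsNoetherianRing R] [IsLocalRing R]
    [IsAdicComplete (IsLocalRing.maximalIdeal R) R]
    (G : Type) [Group G] [Fintype G] [MulSemiringAction G R]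
    (hG : IsUnit ((Fintype.card G : R)))
    (E : Type) [AddCommGroup E] [Module R E] (hE : IsFiniteLength R E) :
    Module.Finite (fixedSubring G R) E := by
  induction hE with
  | of_subsingleton => infer_instance
  | @of_simple_quotient M _ _ N hs _ ih =>
    obtain ⟨I, hI, ⟨e⟩⟩ := isSimpleModule_iff_quot_maximal.mp hs
    obtain rfl := IsLocalRing.eq_maximalIdeal hI
    have : Module.Finite (fixedSubring G R) (R ⧸ IsLocalRing.maximalIdeal R) :=
      finite_residue_aux R G hG
    have hq : Module.Finite (fixedSubring G R) (M ⧸ N) :=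
      Module.Finite.equiv (e.symm.restrictScalars (fixedSubring G R))
    have hN : Module.Finite (fixedSubring G R) (N.restrictScalars (fixedSubring G R)) := ih
    have hq' : Module.Finite (fixedSubring G R) (M ⧸ N.restrictScalars (fixedSubring G R)) :=
      Module.Finite.equiv (Submodule.Quotient.restrictScalarsEquiv (fixedSubring G R) N).symm
    exact Module.Finite.of_submodule_quotient (N.restrictScalars (fixedSubring G R))
end

section
/- Let (R,𝔪) be a complete Noetherian local ring and let a finite group G act on R by ring automorphisms, with |G| invertible in R. Then R is a finitely generated module over its invariant ring R^G. -/
/-- If `R` is a complete Noetherian local ring with a finite group `G` acting by ring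
automorphisms and `|G|` invertible in `R`, then `R` is a finitely generated module over
its invariant subring `R^G`. -/
theorem finite_over_invariants
    (R : Type) [CommRing R] [IsNoetherianRing R] [IsLocalRing R]
    [IsAdicComplete (IsLocalRing.maximalIdeal R) R]
    (G : Type) [Group G] [Fintype G] [MulSemiringAction G R]
    (hG : IsUnit ((Fintype.card G : R))) :
    Module.Finite (fixedSubring G R) R := by
  classical
  obtain ⟨u, hu⟩ := hG
  have hcard : ∀ σ : G, σ • (Fintype.card G : R) = (Fintype.card G : R) := fun σ =>
    map_natCast (MulSemiringAction.toRingHom G R σ) _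
  have huinv : ∀ σ : G, σ • ((u⁻¹ : Rˣ) : R) = ((u⁻¹ : Rˣ) : R) := by
    intro σ
    have h1 : (u : R) * (σ • ((u⁻¹ : Rˣ) : R)) = 1 := by
      rw [hu, ← hcard σ, ← smul_mul', ← hu, Units.mul_inv, smul_one]
    calc σ • ((u⁻¹ : Rˣ) : R) = ((u⁻¹ : Rˣ) : R) * ((u : R) * (σ • ((u⁻¹ : Rˣ) : R))) := by
          rw [← mul_assoc, Units.inv_mul, one_mul]
      _ = _ := by rw [h1, mul_one]
  -- the Reynolds operator
  let ρ : R → fixedSubring G R := fun r => ⟨((u⁻¹ : Rˣ) : R) * ∑ σ : G, σ⁻¹ • r, by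
    intro τ
    rw [smul_mul', huinv, Finset.smul_sum]
    congr 1
    refine Fintype.sum_equiv (Equiv.mulRight τ⁻¹) _ _ fun σ => ?_
    simp [mul_smul]⟩
  let v : R → (G → R) := fun x σ => σ • x
  obtain ⟨t, ht, hspan⟩ := (Submodule.fg_span_iff_fg_span_finset_subset (R := R) (Set.range v)).1
    (IsNoetherian.noetherian _)
  choose! g hg using fun y (hy : y ∈ t) => ht hy
  refine ⟨⟨t.image g, ?_⟩⟩
  rw [eq_top_iff]
  rintro x -
  have hx : v x ∈ Submodule.span R (t : Set (G → R)) := by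
    rw [← hspan]; exact Submodule.subset_span ⟨x, rfl⟩
  obtain ⟨c, -, hc⟩ := Submodule.mem_span_finset.1 hx
  have key : ∀ σ : G, x = ∑ y ∈ t, (σ⁻¹ • c y) * g y := by
    intro σ
    have h1 : σ • x = ∑ y ∈ t, c y * (σ • g y) := by
      have := congrFun hc σ
      rw [Finset.sum_apply] at this
      rw [show σ • x = v x σ from rfl, ← this]
      refine Finset.sum_congr rfl fun y hy => ?_
      rw [Pi.smul_apply, smul_eq_mul, ← congrFun (hg y hy) σ]
    rw [← inv_smul_smul σ x, h1, Finset.smul_sum]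
    exact Finset.sum_congr rfl fun y _ => by rw [smul_mul', inv_smul_smul]
  have hfin : x = ∑ y ∈ t, ρ (c y) • g y := by
    have h2 : (u : R) * x = ∑ y ∈ t, (∑ σ : G, σ⁻¹ • c y) * g y := by
      calc (u : R) * x = ∑ _σ : G, x := by simp [hu]
        _ = ∑ σ : G, ∑ y ∈ t, (σ⁻¹ • c y) * g y := Finset.sum_congr rfl fun σ _ => key σ
        _ = _ := by
          rw [Finset.sum_comm]
          exact Finset.sum_congr rfl fun y _ => (Finset.sum_mul _ _ _).symm
    calc x = ((u⁻¹ : Rˣ) : R) * ((u : R) * x) := by rw [← mul_assoc, Units.inv_mul, one_mul]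
      _ = _ := by
        rw [h2, Finset.mul_sum]
        exact Finset.sum_congr rfl fun y _ => (mul_assoc _ _ _).symm
  rw [hfin]
  refine Submodule.sum_mem _ fun y hy => Submodule.smul_mem _ _ (Submodule.subset_span ?_)
  exact Finset.mem_coe.2 (Finset.mem_image_of_mem g hy)
end

section
/- Let (R,𝔪) be a two-dimensional complete regular local ring and let a finite group G act on R by ring automorphisms, with |G| a unit in R. Then: (1) R^G is a normal Cohen–Macaulay local domain of dimension two; (2) R is a maximal Cohen–Macaulay R^G-module; (3) every indecomposable maximal Cohen–Macaulay R^G-module is a direct summand of R as an R^G-module; consequently (4) R^G has only finitely many indecomposable maximal Cohen–Macaulay modules up to isomorphism, i.e., R^G is of finite Cohen–Macaulay type. -/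
/-- A finitely generated module `M` over a (two-dimensional) local ring `A` is maximal
Cohen–Macaulay iff it admits a regular sequence of length two consisting of nonunits
(i.e. of elements of the maximal ideal); note that `RingTheory.Sequence.IsRegular`
includes `M/(x,y)M ≠ 0`, so in particular `M ≠ 0`. -/
def IsMCM₂ (A : Type*) [CommRing A] (M : Type*) [AddCommGroup M] [Module A M] : Prop :=
  Module.Finite A M ∧
    ∃ x y : A, ¬ IsUnit x ∧ ¬ IsUnit y ∧ RingTheory.Sequence.IsRegular M [x, y]

/-- A module is indecomposable iff it is nontrivial and admits no nontrivial
direct sum decomposition. -/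
def IsIndecomposableModule (A : Type*) [CommRing A] (M : Type*) [AddCommGroup M]
    [Module A M] : Prop :=
  Nontrivial M ∧ ∀ N₁ N₂ : Submodule A M, IsCompl N₁ N₂ → N₁ = ⊥ ∨ N₂ = ⊥


set_option linter.unusedSectionVars false

section part1
open IsLocalRing

theorem aux_unit_pow {S : Type*} [CommRing S] [IsNoetherianRing S] [IsLocalRing S] (t : S)
    (ht : maximalIdeal S = Ideal.span {t}) (s : S) (hs : s ≠ 0) :
    ∃ (n : ℕ) (u : S), IsUnit u ∧ s = u * t ^ n := by
  by_contra hcon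
  push Not at hcon
  have key : ∀ n : ℕ, t ^ n ∣ s := by
    intro n
    induction n with
    | zero => simp
    | succ n ih =>
      obtain ⟨c, hc⟩ := ih
      have hnu : ¬ IsUnit c := fun h => hcon n c h (by rw [hc, mul_comm])
      have : c ∈ maximalIdeal S := (mem_maximalIdeal c).2 hnu
      rw [ht, Ideal.mem_span_singleton] at this
      obtain ⟨d, rfl⟩ := this
      exact ⟨d, by rw [hc]; ring⟩
  have : s ∈ (⨅ i : ℕ, (maximalIdeal S) ^ i) := by
    rw [Ideal.mem_iInf]
    intro i
    rw [ht, Ideal.span_singleton_pow, Ideal.mem_span_singleton]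
    exact key i
  rw [Ideal.iInf_pow_eq_bot_of_isLocalRing _ (Ideal.IsPrime.ne_top inferInstance)] at this
  exact hs (by simpa using this)

theorem aux_domain {S : Type*} [CommRing S] [IsNoetherianRing S] [IsLocalRing S] (t : S)
    (ht : maximalIdeal S = Ideal.span {t}) (hn : ¬ IsNilpotent t) : IsDomain S := by
  have : NoZeroDivisors S := by
    refine ⟨fun {p q} hpq => ?_⟩
    by_contra hcon
    push Not at hcon
    obtain ⟨n, u, hu, rfl⟩ := aux_unit_pow t ht p hcon.1
    obtain ⟨m, v, hv, rfl⟩ := aux_unit_pow t ht q hcon.2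
    apply hn
    refine ⟨n + m, ?_⟩
    have h : (u * v) * t ^ (n + m) = 0 := by rw [← hpq]; ring
    exact ((hu.mul hv).mul_right_eq_zero).1 h
  exact NoZeroDivisors.to_isDomain S

theorem aux_pid {S : Type*} [CommRing S] [IsNoetherianRing S] [IsLocalRing S] [IsDomain S] (t : S)
    (ht : maximalIdeal S = Ideal.span {t}) : IsPrincipalIdealRing S :=
  ((tfae_of_isNoetherianRing_of_isLocalRing_of_isDomain S).out 0 4 :
    IsPrincipalIdealRing S ↔ Submodule.IsPrincipal (maximalIdeal S)).2 ⟨t, ht⟩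

theorem aux_notnil {S : Type*} [CommRing S] [IsLocalRing S] (t : S)
    (ht : maximalIdeal S = Ideal.span {t}) (hd : 1 ≤ ringKrullDim S) : ¬ IsNilpotent t := by
  intro hn
  obtain ⟨p, q, hpq⟩ := Order.one_le_krullDim_iff.1 hd
  have h1 : t ∈ p.asIdeal := by
    obtain ⟨n, hn⟩ := hn
    exact p.2.mem_of_pow_mem n (by rw [hn]; exact zero_mem _)
  have h2 : maximalIdeal S ≤ p.asIdeal := by
    rw [ht, Ideal.span_singleton_le_iff_mem]; exact h1
  have h3 : q.asIdeal ≤ maximalIdeal S := le_maximalIdeal q.2.ne_top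
  exact absurd (PrimeSpectrum.asIdeal_le_asIdeal _ _ |>.1 (h3.trans h2)) (not_le_of_gt hpq)

variable {R : Type*} [CommRing R] [IsNoetherianRing R] [IsLocalRing R]

theorem R_quot_max (a b : R) (hab : maximalIdeal R = Ideal.span {a, b}) :
    ∃ _ : IsLocalRing (R ⧸ Ideal.span {a}),
      maximalIdeal (R ⧸ Ideal.span {a}) = Ideal.span {Ideal.Quotient.mk _ b} := by
  have ha : a ∈ maximalIdeal R := by rw [hab]; exact Ideal.subset_span (by simp)
  have hne : Ideal.span {a} ≠ (⊤ : Ideal R) := by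
    intro h
    exact (Ideal.IsPrime.ne_top (inferInstance : (maximalIdeal R).IsPrime))
      (top_le_iff.1 (h ▸ (Ideal.span_singleton_le_iff_mem _).2 ha))
  have : Nontrivial (R ⧸ Ideal.span {a}) := Ideal.Quotient.nontrivial_iff.2 hne
  have hl : IsLocalRing (R ⧸ Ideal.span {a}) :=
    IsLocalRing.of_surjective' (Ideal.Quotient.mk _) Ideal.Quotient.mk_surjective
  refine ⟨hl, ?_⟩
  have := IsLocalRing.map_maximalIdeal_of_surjective (Ideal.Quotient.mk (Ideal.span {a}))
    Ideal.Quotient.mk_surjective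
  rw [← this, hab, Ideal.map_span, Set.image_pair]
  have h0 : (Ideal.Quotient.mk (Ideal.span {a})) a = 0 :=
    Ideal.Quotient.eq_zero_iff_mem.2 (Ideal.mem_span_singleton_self a)
  rw [h0]
  simp [Ideal.span_insert]

theorem R_quot_domain (hdim : ringKrullDim R = 2) (a b : R)
    (hab : maximalIdeal R = Ideal.span {a, b}) : IsDomain (R ⧸ Ideal.span {a}) := by
  obtain ⟨hl, hm⟩ := R_quot_max a b hab
  refine aux_domain _ hm (aux_notnil _ hm ?_)
  have ha : a ∈ maximalIdeal R := by rw [hab]; exact Ideal.subset_span (by simp)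
  have := ringKrullDim_le_ringKrullDim_quotient_add_encard ({a} : Set R)
    (by simpa [IsLocalRing.ringJacobson_eq_maximalIdeal] using ha)
  rw [hdim, Set.encard_singleton] at this
  have h2 : (2 : WithBot ℕ∞) = 1 + 1 := by norm_num
  rw [h2] at this
  by_contra hcon
  push Not at hcon
  have h3 : ringKrullDim (R ⧸ Ideal.span {a}) ≤ 0 := by
    have h6 := (ENat.WithBot.lt_add_one_iff (n := ringKrullDim (R ⧸ Ideal.span {a})) (m := 0)).1
      (by simpa using hcon)
    simpa using h6
  have h4 : ringKrullDim (R ⧸ Ideal.span {a}) + 1 ≤ 0 + 1 := by gcongr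
  have h5 := this.trans h4
  exact absurd h5 (by decide)

/-- elements outside `(a)` are unit times power of `b` mod `a` -/
theorem R_unit_pow (a b : R)
    (hab : maximalIdeal R = Ideal.span {a, b}) (z : R) (hz : z ∉ Ideal.span {a}) :
    ∃ n : ℕ, b ^ n ∈ Ideal.span {a, z} := by
  obtain ⟨hl, hm⟩ := R_quot_max a b hab
  obtain ⟨n, u, hu, h⟩ := aux_unit_pow _ hm (Ideal.Quotient.mk (Ideal.span {a}) z)
    (fun h => hz (Ideal.Quotient.eq_zero_iff_mem.1 h))
  refine ⟨n, ?_⟩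
  obtain ⟨v, hv⟩ := hu.exists_left_inv
  obtain ⟨v, rfl⟩ := Ideal.Quotient.mk_surjective v
  have : Ideal.Quotient.mk (Ideal.span {a}) (b ^ n) = Ideal.Quotient.mk (Ideal.span {a}) (v * z) := by
    rw [map_mul, h, ← mul_assoc, hv, one_mul, map_pow]
  rw [Ideal.Quotient.eq, Ideal.mem_span_singleton] at this
  obtain ⟨c, hc⟩ := this
  rw [Ideal.mem_span_pair]
  exact ⟨c, v, by linear_combination -hc⟩

theorem R_domain (hdim : ringKrullDim R = 2) (a b : R)
    (hab : maximalIdeal R = Ideal.span {a, b}) : IsDomain R := by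
  have hS := R_quot_domain hdim a b hab
  have hpa : (Ideal.span {a}).IsPrime := (Ideal.Quotient.isDomain_iff_prime _).1 hS
  have ha : a ∈ maximalIdeal R := by rw [hab]; exact Ideal.subset_span (by simp)
  obtain ⟨l, hl⟩ := (Order.le_krullDim_iff (α := PrimeSpectrum R) (n := 2)).1 hdim.ge
  let p0 := l ⟨0, by omega⟩
  let p1 := l ⟨1, by omega⟩
  let p2 := l ⟨2, by omega⟩
  have h01 : p0 < p1 := l.strictMono (by simp [Fin.lt_def])
  have h12 : p1 < p2 := l.strictMono (by simp [Fin.lt_def])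
  have h1m : p1.asIdeal < maximalIdeal R :=
    lt_of_lt_of_le (PrimeSpectrum.asIdeal_lt_asIdeal _ _ |>.2 h12) (le_maximalIdeal p2.2.ne_top)
  have h01' : p0.asIdeal < p1.asIdeal := PrimeSpectrum.asIdeal_lt_asIdeal _ _ |>.2 h01
  -- primes containing a and something outside (a) are maximal
  have hmax : ∀ P : Ideal R, P.IsPrime → a ∈ P → ∀ z ∈ P, z ∉ Ideal.span {a} →
      maximalIdeal R ≤ P := by
    intro P hP haP z hz hza
    obtain ⟨n, hn⟩ := R_unit_pow a b hab z hza
    have hb : b ∈ P := by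
      refine hP.mem_of_pow_mem n ?_
      refine (Ideal.span_le.2 ?_ : Ideal.span {a, z} ≤ P) hn
      rintro x (rfl | rfl) <;> assumption
    rw [hab, Ideal.span_le]
    rintro x (rfl | rfl) <;> assumption
  have ha0 : a ∉ p0.asIdeal := by
    intro h
    obtain ⟨z, hz1, hz0⟩ := SetLike.exists_of_lt h01'
    refine absurd (hmax p1.asIdeal p1.2 (h01'.le h) z hz1 ?_) (not_le_of_gt h1m)
    intro hza
    exact hz0 ((Ideal.span_singleton_le_iff_mem _).2 h hza)
  have hle : p0.asIdeal ≤ Ideal.span {a} := by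
    intro z hz
    by_contra hza
    have hmin : maximalIdeal R ∈ (Ideal.span (insert a (p0.asIdeal : Set R))).minimalPrimes := by
      refine ⟨⟨inferInstance, ?_⟩, ?_⟩
      · rw [Ideal.span_le]
        rintro x (rfl | hx)
        · exact ha
        · exact le_maximalIdeal p0.2.ne_top hx
      · rintro P ⟨hP, hPle⟩ -
        exact hmax P hP (hPle (Ideal.subset_span (by simp))) z
          (hPle (Ideal.subset_span (by simp [hz]))) hza
    have := Ideal.mem_minimalPrimes_span_of_mem_minimalPrimes_span_insert h1m a
      (p0.asIdeal : Set R) hmin (p0.asIdeal : Set R) h01'.le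
      (fun x hx => Ideal.le_radical (Ideal.subset_span (by simp [show x ∈ p0.asIdeal from hx])))
    rw [Ideal.span_eq] at this
    exact absurd (this.2 ⟨p0.2, le_rfl⟩ h01'.le) (not_le_of_gt h01')
  have hbot : p0.asIdeal = ⊥ := by
    refine Submodule.eq_bot_of_le_smul_of_le_jacobson_bot (Ideal.span {a}) _
      (IsNoetherian.noetherian _) ?_ ?_
    · intro z hz
      obtain ⟨c, rfl⟩ := Ideal.mem_span_singleton.1 (hle hz)
      have hc : c ∈ p0.asIdeal := (p0.2.mem_or_mem hz).resolve_left ha0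
      exact Submodule.smul_mem_smul (Ideal.mem_span_singleton_self a) hc
    · rw [IsLocalRing.jacobson_eq_maximalIdeal _ bot_ne_top, Ideal.span_singleton_le_iff_mem]
      exact ha
  have := p0.2
  rw [hbot] at this
  exact IsDomain.of_bot_isPrime R

theorem R_prime [IsDomain R] (hdim : ringKrullDim R = 2) (a b : R)
    (hab : maximalIdeal R = Ideal.span {a, b}) : Prime a ∧ b ∉ Ideal.span {a} := by
  have hS := R_quot_domain hdim a b hab
  have hpa : (Ideal.span {a}).IsPrime := (Ideal.Quotient.isDomain_iff_prime _).1 hS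
  have hb : b ∉ Ideal.span {a} := by
    intro hb
    have h1 : maximalIdeal R = Ideal.span {a} := by
      rw [hab]
      apply le_antisymm
      · rw [Ideal.span_le]
        rintro x (rfl | rfl)
        · exact Ideal.mem_span_singleton_self _
        · exact hb
      · exact Ideal.span_mono (by simp)
    have h2 : (maximalIdeal R).height ≤ 1 := by
      rw [h1]
      apply Ideal.height_span_singleton_le_one
      intro h
      exact hpa.ne_top (Ideal.span_singleton_eq_top.2 h)
    have h3 := IsLocalRing.maximalIdeal_height_eq_ringKrullDim (R := R)
    rw [hdim] at h3
    have h4 : ((maximalIdeal R).height : WithBot ℕ∞) ≤ (1 : ℕ∞) := by exact_mod_cast h2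
    rw [h3] at h4
    exact absurd h4 (by decide)
  refine ⟨(Ideal.span_singleton_prime ?_).1 hpa, hb⟩
  rintro rfl
  -- a = 0 : then R is PID of dim 1
  have h1 : maximalIdeal R = Ideal.span {b} := by rw [hab]; simp [Ideal.span_insert]
  have h2 : (maximalIdeal R).height ≤ 1 := by
    rw [h1]
    apply Ideal.height_span_singleton_le_one
    intro h
    have : b ∈ maximalIdeal R := by rw [h1]; exact Ideal.mem_span_singleton_self _
    exact ((mem_maximalIdeal b).1 this) h
  have h3 := IsLocalRing.maximalIdeal_height_eq_ringKrullDim (R := R)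
  rw [hdim] at h3
  have h4 : ((maximalIdeal R).height : WithBot ℕ∞) ≤ (1 : ℕ∞) := by exact_mod_cast h2
  rw [h3] at h4
  exact absurd h4 (by decide)

end part1

section part2
open IsLocalRing Pointwise

/-- elementwise version of a weakly regular sequence of length two -/
def WReg {A : Type*} [CommRing A] (x y : A) (M : Type*) [AddCommGroup M] [Module A M] : Prop :=
  (∀ h : M, x • h = 0 → h = 0) ∧ ∀ h u : M, y • h = x • u → ∃ w : M, h = x • w

theorem mk_quotSMulTop_eq_zero {A : Type*} [CommRing A] (x : A) {M : Type*} [AddCommGroup M]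
    [Module A M] (h : M) : (Submodule.Quotient.mk h : QuotSMulTop x M) = 0 ↔ ∃ w, h = x • w := by
  rw [Submodule.Quotient.mk_eq_zero, Submodule.mem_smul_pointwise_iff_exists]
  constructor
  · rintro ⟨w, -, rfl⟩; exact ⟨w, rfl⟩
  · rintro ⟨w, rfl⟩; exact ⟨w, trivial, rfl⟩

theorem wreg_iff {A : Type*} [CommRing A] (x y : A) (M : Type*) [AddCommGroup M] [Module A M] :
    RingTheory.Sequence.IsWeaklyRegular M [x, y] ↔ WReg x y M := by
  rw [RingTheory.Sequence.isWeaklyRegular_cons_iff, RingTheory.Sequence.isWeaklyRegular_cons_iff]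
  simp only [RingTheory.Sequence.IsWeaklyRegular.nil, and_true]
  rw [isSMulRegular_iff_right_eq_zero_of_smul, isSMulRegular_iff_right_eq_zero_of_smul]
  refine and_congr Iff.rfl ?_
  constructor
  · intro H h u hu
    rw [← mk_quotSMulTop_eq_zero]
    apply H
    rw [← Submodule.Quotient.mk_smul, mk_quotSMulTop_eq_zero]
    exact ⟨u, hu⟩
  · intro H h hh
    obtain ⟨h, rfl⟩ := Submodule.Quotient.mk_surjective _ h
    rw [← Submodule.Quotient.mk_smul, mk_quotSMulTop_eq_zero] at hh
    obtain ⟨u, hu⟩ := hh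
    rw [mk_quotSMulTop_eq_zero]
    exact H h u hu

theorem reg_of_wreg {A : Type*} [CommRing A] [IsLocalRing A] (x y : A) (hx : ¬ IsUnit x)
    (hy : ¬ IsUnit y) (M : Type*) [AddCommGroup M] [Module A M] [Nontrivial M] [Module.Finite A M]
    (h : WReg x y M) : RingTheory.Sequence.IsRegular M [x, y] := by
  rw [IsLocalRing.isRegular_iff_isWeaklyRegular_of_subset_maximalIdeal, wreg_iff]
  · exact h
  · intro r hr
    simp only [List.mem_cons, List.not_mem_nil, or_false] at hr
    rcases hr with rfl | rfl <;> simpa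

variable {R : Type*} [CommRing R] [IsNoetherianRing R] [IsLocalRing R]

theorem free_of_wreg_ab (hdim : ringKrullDim R = 2) (a b : R)
    (hab : maximalIdeal R = Ideal.span {a, b}) (H : Type*) [AddCommGroup H] [Module R H]
    [Module.Finite R H] (hw : WReg a b H) : Module.Free R H := by
  have ha : a ∈ maximalIdeal R := by rw [hab]; exact Ideal.subset_span (by simp)
  have hS := R_quot_domain hdim a b hab
  obtain ⟨hl, hm⟩ := R_quot_max a b hab
  have hpid := aux_pid _ hm
  have : Module.FinitePresentation R H := Module.finitePresentation_of_finite R H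
  rw [← Module.free_quotSMulTop_iff_free (x := a) R H]
  · have : Module.Finite (R ⧸ Ideal.span {a}) (QuotSMulTop a H) :=
      Module.Finite.of_restrictScalars_finite R _ _
    have : Module.IsTorsionFree (R ⧸ Ideal.span {a}) (QuotSMulTop a H) := by
      refine ⟨fun s hs => ?_⟩
      have hs0 : s ≠ 0 := hs.ne_zero
      obtain ⟨n, u, hu, rfl⟩ := aux_unit_pow _ hm s hs0
      have h1 : IsSMulRegular (QuotSMulTop a H) (Ideal.Quotient.mk (Ideal.span {a}) b) := by
        rw [isSMulRegular_iff_right_eq_zero_of_smul]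
        intro h hh
        obtain ⟨h, rfl⟩ := Submodule.Quotient.mk_surjective _ h
        have : (Submodule.Quotient.mk (b • h) : QuotSMulTop a H) = 0 := hh
        rw [mk_quotSMulTop_eq_zero] at this
        obtain ⟨u, hu⟩ := this
        rw [mk_quotSMulTop_eq_zero]
        exact hw.2 h u hu
      exact (hu.isSMulRegular _).mul (h1.pow n)
    exact Module.free_of_finite_type_torsion_free'
  · rw [IsLocalRing.jacobson_eq_maximalIdeal _ bot_ne_top]; exact ha
  · rw [isSMulRegular_iff_right_eq_zero_of_smul]; exact hw.1

theorem free_of_wreg (hdim : ringKrullDim R = 2) (a b : R)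
    (hab : maximalIdeal R = Ideal.span {a, b}) (H : Type*) [AddCommGroup H] [Module R H]
    [Module.Finite R H] (x y : R) (hx : x ∈ maximalIdeal R) (hy : y ∈ maximalIdeal R)
    (hw : WReg x y H) : Module.Free R H := by
  have := R_domain hdim a b hab
  obtain ⟨hpa, hba⟩ := R_prime hdim a b hab
  have ha : ∀ h : H, a • h = 0 → h = 0 := by
    by_cases hxa : x ∈ Ideal.span {a}
    · obtain ⟨c, rfl⟩ := Ideal.mem_span_singleton.1 hxa
      intro h hh
      apply hw.1
      rw [mul_comm, mul_smul, hh, smul_zero]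
    · -- y ^ k ∈ (a, x)
      obtain ⟨n, hn⟩ := R_unit_pow a b hab x hxa
      have hyk : ∃ k, y ^ k ∈ Ideal.span {a, x} := by
        have hyr : y ∈ (Ideal.span {a, x}).radical := by
          have : maximalIdeal R ≤ (Ideal.span {a, x}).radical := by
            rw [hab, Ideal.span_le]
            rintro z (rfl | rfl)
            · exact Ideal.le_radical (Ideal.subset_span (by simp))
            · exact ⟨n, hn⟩
          exact this hy
        exact hyr
      obtain ⟨k, hk⟩ := hyk
      obtain ⟨c, d, hcd⟩ := Ideal.mem_span_pair.1 hk
      have hpow : ∀ (k : ℕ) (h u : H), y ^ k • h = x • u → ∃ w, h = x • w := by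
        intro k
        induction k with
        | zero => intro h u hu; exact ⟨u, by simpa using hu⟩
        | succ k ih =>
          intro h u hu
          rw [pow_succ, mul_smul] at hu
          obtain ⟨w, hw'⟩ := ih _ _ hu
          exact hw.2 _ _ hw'
      -- T = ker a
      let T : Submodule R H := LinearMap.ker (LinearMap.lsmul R H a)
      have hT : T = ⊥ := by
        refine Submodule.eq_bot_of_le_smul_of_le_jacobson_bot (Ideal.span {x}) _
          (IsNoetherian.noetherian _) ?_ ?_
        · intro h hh
          have hh' : a • h = 0 := hh
          obtain ⟨w, rfl⟩ := hpow k h (d • h) (by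
            rw [← hcd, add_smul, mul_smul, mul_smul, hh', smul_zero, zero_add, smul_comm])
          refine Submodule.smul_mem_smul (Ideal.mem_span_singleton_self x) ?_
          change a • w = 0
          apply hw.1
          rw [smul_comm, hh']
        · rw [IsLocalRing.jacobson_eq_maximalIdeal _ bot_ne_top, Ideal.span_singleton_le_iff_mem]
          exact hx
      intro h hh
      have : h ∈ T := hh
      rw [hT] at this
      simpa using this
  refine free_of_wreg_ab hdim a b hab H ⟨ha, ?_⟩
  intro h u hu
  have hm : ∀ z ∈ maximalIdeal R, ∃ v, z • h = a • v := by
    intro z hz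
    rw [hab, Ideal.mem_span_pair] at hz
    obtain ⟨c, d, rfl⟩ := hz
    refine ⟨c • h + d • u, ?_⟩
    rw [add_smul, mul_smul, mul_smul, hu, smul_add, smul_comm c a, smul_comm d a]
  obtain ⟨v1, h1⟩ := hm x hx
  obtain ⟨v2, h2⟩ := hm y hy
  have h3 : y • v1 = x • v2 := by
    rw [← sub_eq_zero]
    apply ha
    rw [smul_sub, smul_comm a y, ← h1, smul_comm a x, ← h2, smul_comm, sub_self]
  obtain ⟨w, rfl⟩ := hw.2 _ _ h3
  refine ⟨w, ?_⟩
  rw [← sub_eq_zero]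
  apply hw.1
  rw [smul_sub, h1, smul_comm, sub_self]

theorem R_ufd [IsDomain R] (hdim : ringKrullDim R = 2) (a b : R)
    (hab : maximalIdeal R = Ideal.span {a, b}) : UniqueFactorizationMonoid R := by
  obtain ⟨hpa, hba⟩ := R_prime hdim a b hab
  rw [UniqueFactorizationMonoid.iff_exists_prime_mem_of_isPrime]
  intro P hP0 hP
  by_cases haP : a ∈ P
  · exact ⟨a, haP, hpa⟩
  have hfree : Module.Free R P := by
    refine free_of_wreg_ab hdim a b hab P ⟨?_, ?_⟩
    · rintro ⟨h, hh⟩ h0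
      have : a * h = 0 := congrArg Subtype.val h0
      ext
      exact (mul_eq_zero.1 this).resolve_left hpa.ne_zero
    · rintro ⟨h, hh⟩ ⟨u, hu⟩ h0
      have h1 : b * h = a * u := congrArg Subtype.val h0
      have h2 : a ∣ b * h := ⟨u, h1⟩
      obtain ⟨w, rfl⟩ := (hpa.dvd_or_dvd h2).resolve_left
        (fun h => hba (Ideal.mem_span_singleton.2 h))
      exact ⟨⟨w, (hP.mem_or_mem hh).resolve_left haP⟩, rfl⟩
  have hpr : Submodule.IsPrincipal P := by
    rw [← Submodule.rank_le_one_iff_isPrincipal]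
    exact (Submodule.rank_le P).trans (by simp)
  obtain ⟨q, rfl⟩ := hpr
  rw [Ideal.submodule_span_eq] at *
  refine ⟨q, Ideal.mem_span_singleton_self q, (Ideal.span_singleton_prime ?_).1 hP⟩
  rintro rfl
  simp at hP0

end part2

section part3
open IsLocalRing Polynomial

theorem precomplete_of_finite {A : Type*} [CommRing A] (I : Ideal A) [IsPrecomplete I A]
    (M : Type*) [AddCommGroup M] [Module A M] [Module.Finite A M] : IsPrecomplete I M := by
  obtain ⟨n, f, hf⟩ := Module.Finite.exists_fin' A M
  rw [← AdicCompletion.of_surjective_iff]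
  intro x
  obtain ⟨y, rfl⟩ := AdicCompletion.map_surjective I hf x
  have hpi : ∃ z, AdicCompletion.of I (Fin n → A) z = y := by
    have h1 : ∀ i, ∃ z, AdicCompletion.of I A z = AdicCompletion.piEquivFin I n y i :=
      fun i => AdicCompletion.of_surjective I A _
    choose z hz using h1
    refine ⟨z, ?_⟩
    apply (AdicCompletion.piEquivFin I n).injective
    ext1 i
    rw [← hz i]
    rfl
  obtain ⟨z, rfl⟩ := hpi
  exact ⟨f z, by rw [AdicCompletion.map_of]⟩

theorem henselian_of_finite {A : Type*} [CommRing A] [IsNoetherianRing A] [IsLocalRing A]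
    [IsPrecomplete (maximalIdeal A) A] (B : Type*) [CommRing B] [Algebra A B] [Module.Finite A B] :
    HenselianRing B ((maximalIdeal A).map (algebraMap A B)) := by
  have h1 : IsPrecomplete (maximalIdeal A) B := precomplete_of_finite _ _
  have h2 : IsHausdorff (maximalIdeal A) B := inferInstance
  have h3 : IsAdicComplete ((maximalIdeal A).map (algebraMap A B)) B :=
    { toIsHausdorff := IsHausdorff.map_algebraMap_iff.2 h2
      toIsPrecomplete := IsPrecomplete.map_algebraMap_iff.2 h1 }
  infer_instance

theorem isUnit_add_of_mem_jac {B : Type*} [CommRing B] {J : Ideal B} (hJ : J ≤ Ideal.jacobson ⊥)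
    {z : B} (hz : z ∈ J) : IsUnit (1 + z) := by
  have := Ideal.mem_jacobson_bot.1 (hJ hz) 1
  rwa [mul_one, add_comm] at this

/-- the key dichotomy, in a commutative finite algebra -/
theorem exists_idem_aux {A : Type*} [CommRing A] [IsNoetherianRing A] [IsLocalRing A]
    [IsPrecomplete (maximalIdeal A) A] (B : Type*) [CommRing B] [Algebra A B] [Module.Finite A B]
    (t : B) : ∃ (k : ℕ) (e g : B), 0 < k ∧ e * e = e ∧
      e - t ^ k * g ∈ (maximalIdeal A).map (algebraMap A B) ∧
      t ^ k - t ^ (2 * k) * g ∈ (maximalIdeal A).map (algebraMap A B) := by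
  have hH := henselian_of_finite (A := A) B
  set J := (maximalIdeal A).map (algebraMap A B) with hJ
  have hart : IsArtinianRing (B ⧸ J) := by
    let : Module (A ⧸ maximalIdeal A) (B ⧸ J) := inferInstance
    have h0 : IsArtinianRing (A ⧸ maximalIdeal A) := by
      let := Ideal.Quotient.field (maximalIdeal A)
      infer_instance
    have : Module.Finite (A ⧸ maximalIdeal A) (B ⧸ J) :=
      Module.Finite.of_restrictScalars_finite A _ _
    exact IsArtinianRing.of_finite (A ⧸ maximalIdeal A) (B ⧸ J)
  obtain ⟨n, y, hy⟩ := IsArtinian.exists_pow_succ_smul_dvd (M := B ⧸ J)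
    (Ideal.Quotient.mk J t) (1 : B ⧸ J)
  obtain ⟨y, rfl⟩ := Ideal.Quotient.mk_surjective y
  have hit : ∀ m : ℕ, (Ideal.Quotient.mk J t) ^ n =
      (Ideal.Quotient.mk J t) ^ (n + m) * (Ideal.Quotient.mk J y) ^ m := by
    intro m
    induction m with
    | zero => simp
    | succ m ih =>
      simp only [smul_eq_mul, mul_one, Nat.succ_eq_add_one] at hy
      rw [ih, pow_add, ← hy]; ring
  have hJ1 : t ^ (n + 1) - t ^ (2 * (n + 1)) * y ^ (n + 1) ∈ J := by
    rw [← Ideal.Quotient.eq_zero_iff_mem]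
    simp only [map_sub, map_mul, map_pow]
    rw [pow_succ (Ideal.Quotient.mk J t) n]
    conv_lhs => rw [hit (n + 1)]
    ring
  have hJ2 : (t ^ (n + 1) * y ^ (n + 1)) ^ 2 - t ^ (n + 1) * y ^ (n + 1) ∈ J := by
    have := J.mul_mem_left (-(y ^ (n + 1))) hJ1
    convert this using 1
    ring
  obtain ⟨e, he, hee⟩ := hH.is_henselian (X ^ 2 - X) (by monicity!) (t ^ (n + 1) * y ^ (n + 1))
    (by simpa using hJ2)
    (by
      refine IsUnit.of_mul_eq_one (Ideal.Quotient.mk J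
        (2 * (t ^ (n + 1) * y ^ (n + 1)) - 1)) ?_
      rw [← map_mul, ← map_one (Ideal.Quotient.mk J), Ideal.Quotient.eq]
      have := J.mul_mem_left 4 hJ2
      convert this using 1
      simp
      ring)
  refine ⟨n + 1, e, y ^ (n + 1), by omega, ?_, hee, hJ1⟩
  have : e ^ 2 - e = 0 := by simpa [IsRoot] using he
  linear_combination this

theorem end_local {A : Type*} [CommRing A] [IsNoetherianRing A] [IsLocalRing A]
    [IsPrecomplete (maximalIdeal A) A] (M : Type*) [AddCommGroup M] [Module A M]
    [Module.Finite A M] [Nontrivial M]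
    (hM : ∀ N₁ N₂ : Submodule A M, IsCompl N₁ N₂ → N₁ = ⊥ ∨ N₂ = ⊥) :
    IsLocalRing (Module.End A M) := by
  refine IsLocalRing.of_isUnit_or_isUnit_one_sub_self fun f => ?_
  obtain ⟨P, hP, hPf⟩ := (Algebra.IsIntegral.isIntegral (R := A) f : IsIntegral A f)
  have : Module.Finite A (AdjoinRoot P) := hP.finite_adjoinRoot
  let φ : AdjoinRoot P →ₐ[A] Module.End A M :=
    Ideal.Quotient.liftₐ _ (aeval f) (by
      intro q hq
      obtain ⟨c, rfl⟩ := Ideal.mem_span_singleton.1 hq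
      rw [map_mul, show aeval f P = 0 from hPf, zero_mul])
  have hφ : φ (AdjoinRoot.root P) = f := by
    change (aeval f) X = f
    simp
  obtain ⟨k, e, g, hk, he, h1, h2⟩ := exists_idem_aux (A := A) (AdjoinRoot P) (AdjoinRoot.root P)
  have hH := henselian_of_finite (A := A) (AdjoinRoot P)
  set J := (maximalIdeal A).map (algebraMap A (AdjoinRoot P)) with hJ
  set t := AdjoinRoot.root P with ht
  have hidem : IsIdempotentElem (φ e) := by
    change φ e * φ e = φ e
    rw [← map_mul, he]
  have hcase : φ e = 1 ∨ φ e = 0 := by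
    rcases hM _ _ (LinearMap.IsIdempotentElem.isCompl hidem) with h | h
    · right; rwa [LinearMap.range_eq_bot] at h
    · left
      rw [LinearMap.ker_eq_bot] at h
      ext m
      apply h
      change (φ e * φ e) m = φ e m
      rw [hidem.eq]
  have comm1 : Commute f (φ g) := by
    change f * φ g = φ g * f
    rw [← hφ, ← map_mul, ← map_mul, mul_comm]
  rcases hcase with h | h
  · left
    have hu : IsUnit (1 + -(e - t ^ k * g)) := isUnit_add_of_mem_jac hH.jac (J.neg_mem h1)
    have hu2 : IsUnit (φ (1 + -(e - t ^ k * g))) := hu.map φ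
    have h3 : φ (1 + -(e - t ^ k * g)) = f ^ k * φ g := by
      simp [h, hφ]
    rw [h3] at hu2
    have := ((comm1.pow_left k).isUnit_mul_iff.1 hu2).1
    exact (isUnit_pow_iff hk.ne').1 this
  · right
    have hu : IsUnit (1 + (e - t ^ k * g)) := isUnit_add_of_mem_jac hH.jac h1
    obtain ⟨w, hw⟩ := hu.exists_right_inv
    have hmem : -(w * (t ^ k - t ^ (2 * k) * g)) ∈ J := J.neg_mem (J.mul_mem_left w h2)
    have hu2 := (isUnit_add_of_mem_jac hH.jac hmem).map φ
    have h3 : φ (1 + -(w * (t ^ k - t ^ (2 * k) * g))) = 1 - f ^ k := by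
      have h4 : (1 + -(w * (t ^ k - t ^ (2 * k) * g))) = 1 - t ^ k + t ^ k * w * e := by
        linear_combination (-t ^ k) * hw
      rw [h4]
      simp [h, hφ]
    rw [h3] at hu2
    have h5 : (1 - f) * ∑ i ∈ Finset.range k, f ^ i = 1 - f ^ k := mul_neg_geom_sum f k
    have h6 : Commute (1 - f) (∑ i ∈ Finset.range k, f ^ i) :=
      Commute.sum_right _ _ _ (fun i _ =>
        ((Commute.one_left f).sub_left (Commute.refl f)).pow_right i)
    rw [← h5] at hu2
    exact (h6.isUnit_mul_iff.1 hu2).1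

theorem exists_unit_of_mem_closure {E : Type*} [Ring E] [IsLocalRing E] (T : Set E)
    (h : (1 : E) ∈ AddSubmonoid.closure T) : ∃ t ∈ T, IsUnit t := by
  by_contra hcon
  push Not at hcon
  have : ∀ x ∈ AddSubmonoid.closure T, x ∈ nonunits E := by
    intro x hx
    induction hx using AddSubmonoid.closure_induction with
    | mem x hx => exact hcon x hx
    | zero => exact zero_mem_nonunits.2 zero_ne_one
    | add x y _ _ hx hy => exact IsLocalRing.nonunits_add hx hy
  exact this 1 h isUnit_one

/-- `M` with local endomorphism ring, `id_M` factoring additively through `N`s, is a summand of one -/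
theorem summand_of_unit {A : Type*} [CommRing A] {M N : Type*} [AddCommGroup M] [Module A M]
    [AddCommGroup N] [Module A N] (p : M →ₗ[A] N) (q : N →ₗ[A] M)
    (h : IsUnit (q ∘ₗ p : Module.End A M)) :
    Function.Injective p ∧ ∃ N' : Submodule A N, IsCompl (LinearMap.range p) N' := by
  obtain ⟨u, hu⟩ := h.exists_left_inv
  have hinj : (u ∘ₗ q) ∘ₗ p = LinearMap.id := by
    rw [LinearMap.comp_assoc]; exact hu
  refine ⟨fun x y hxy => ?_, LinearMap.ker (u ∘ₗ q), ?_⟩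
  · have h1 := LinearMap.congr_fun hinj x
    have h2 := LinearMap.congr_fun hinj y
    simp only [LinearMap.comp_apply, LinearMap.id_apply] at h1 h2
    rw [← h1, ← h2, hxy]
  · have h0 : ∀ m, u (q (p m)) = m := fun m => LinearMap.congr_fun hinj m
    constructor
    · rw [Submodule.disjoint_def]
      rintro _ ⟨m, rfl⟩ hm
      have h1 : u (q (p m)) = 0 := hm
      rw [h0] at h1
      rw [h1, map_zero]
    · rw [codisjoint_iff, eq_top_iff]
      intro y _
      refine Submodule.mem_sup.2 ⟨p (u (q y)), ⟨_, rfl⟩, y - p (u (q y)), ?_, by abel⟩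
      change u (q (y - p (u (q y)))) = 0
      rw [map_sub, map_sub, h0, sub_self]
end part3

section part4
open IsLocalRing

/-- `Hom_A(R,M)` as an `R`-module. -/
def HomMod (A R M : Type*) [CommRing A] [CommRing R] [Algebra A R] [AddCommGroup M] [Module A M] :
    Type _ := R →ₗ[A] M

variable {A R M : Type*} [CommRing A] [CommRing R] [Algebra A R] [AddCommGroup M] [Module A M]

instance : AddCommGroup (HomMod A R M) := inferInstanceAs (AddCommGroup (R →ₗ[A] M))
instance : Module A (HomMod A R M) := inferInstanceAs (Module A (R →ₗ[A] M))

/-- underlying linear map -/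
def toL (φ : HomMod A R M) : R →ₗ[A] M := φ

/-- converse of `toL` -/
def ofL (φ : R →ₗ[A] M) : HomMod A R M := φ

theorem homMod_ext {φ ψ : HomMod A R M} (h : ∀ s, toL φ s = toL ψ s) : φ = ψ :=
  LinearMap.ext h

instance instHomModModule : Module R (HomMod A R M) where
  smul r φ := ofL <| (toL φ) ∘ₗ LinearMap.mulLeft A r
  one_smul φ := homMod_ext fun s => by
    change (toL φ) (1 * s) = (toL φ) s
    rw [one_mul]
  mul_smul r t φ := homMod_ext fun s => by
    change (toL φ) (r * t * s) = (toL φ) (t * (r * s))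
    congr 1; ring
  smul_zero r := rfl
  zero_smul φ := homMod_ext fun s => by
    change (toL φ) (0 * s) = 0
    rw [zero_mul, map_zero]
  smul_add r φ ψ := rfl
  add_smul r t φ := homMod_ext fun s => by
    change (toL φ) ((r + t) * s) = (toL φ) (r * s) + (toL φ) (t * s)
    rw [add_mul, map_add]

theorem homMod_smul_apply (r : R) (φ : HomMod A R M) (s : R) :
    toL (r • φ : HomMod A R M) s = (toL φ) (r * s) := rfl

instance : IsScalarTower A R (HomMod A R M) where
  smul_assoc a r φ := homMod_ext fun s => by
    change (toL φ) ((a • r) * s) = a • (toL φ) (r * s)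
    rw [smul_mul_assoc, map_smul]

theorem homMod_finite [IsNoetherianRing A] [Module.Finite A R] [Module.Finite A M] :
    Module.Finite R (HomMod A R M) := by
  have : Module.Finite A (HomMod A R M) :=
    inferInstanceAs (Module.Finite A (R →ₗ[A] M))
  exact Module.Finite.of_restrictScalars_finite A R _

theorem homMod_wreg (x y : A) (h : WReg x y M) :
    WReg (algebraMap A R x) (algebraMap A R y) (HomMod A R M) := by
  obtain ⟨h1, h2⟩ := h
  have hinj : ∀ u v : M, x • u = x • v → u = v := by
    intro u v huv
    rw [← sub_eq_zero]
    apply h1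
    rw [smul_sub, huv, sub_self]
  have key : ∀ (z : A) (φ : HomMod A R M), algebraMap A R z • φ = z • φ := fun z φ =>
    algebraMap_smul R z φ
  constructor
  · intro φ hφ
    rw [key] at hφ
    refine homMod_ext fun s => h1 _ ?_
    exact congrArg (fun f => toL f s) hφ
  · intro φ ψ hφ
    rw [key, key] at hφ
    have h3 : ∀ s : R, ∃ w : M, (toL φ) s = x • w := fun s =>
      h2 _ ((toL ψ) s) (congrArg (fun f => toL f s) hφ)
    choose w hw using h3
    let W : R →ₗ[A] M :=
      { toFun := w
        map_add' := fun s t => hinj _ _ (by rw [← hw, smul_add, ← hw, ← hw, map_add])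
        map_smul' := fun c s => hinj _ _ (by
          rw [← hw, map_smul, hw, RingHom.id_apply, smul_comm]) }
    refine ⟨ofL W, ?_⟩
    rw [key]
    exact homMod_ext fun s => hw s

/-- the set of endomorphisms of `M` factoring through `N` -/
def factorSet (A M N : Type*) [CommRing A] [AddCommGroup M] [Module A M]
    [AddCommGroup N] [Module A N] : Set (Module.End A M) :=
  {f | ∃ (p : M →ₗ[A] N) (q : N →ₗ[A] M), f = q ∘ₗ p}

theorem factor_of_free (ρ : R →ₗ[A] A) (hρ : ρ 1 = 1) [Module.Free R (HomMod A R M)]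
    [Module.Finite R (HomMod A R M)] :
    (1 : Module.End A M) ∈ AddSubmonoid.closure (factorSet A M R) := by
  classical
  let B := Module.Free.chooseBasis R (HomMod A R M)
  let ι : M →ₗ[A] HomMod A R M :=
    { toFun := fun m => ofL (LinearMap.toSpanSingleton A M m ∘ₗ ρ)
      map_add' := fun m n => homMod_ext fun s => by
        change ρ s • (m + n) = ρ s • m + ρ s • n
        rw [smul_add]
      map_smul' := fun c m => homMod_ext fun s => by
        change ρ s • (c • m) = c • ρ s • m
        rw [smul_comm] }
  let ev : HomMod A R M →ₗ[A] M :=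
    { toFun := fun φ => (toL φ) 1
      map_add' := fun _ _ => rfl
      map_smul' := fun _ _ => rfl }
  have h : (1 : Module.End A M) = ∑ i, (ev ∘ₗ ((LinearMap.toSpanSingleton R _ (B i)).restrictScalars A)) ∘ₗ
      (((B.coord i).restrictScalars A) ∘ₗ ι) := by
    ext m
    have h1 : ev (ι m) = m := by
      change ρ 1 • m = m
      rw [hρ, one_smul]
    have h2 := congrArg ev (B.sum_repr (ι m))
    rw [h1, map_sum] at h2
    rw [LinearMap.sum_apply]
    exact h2.symm
  rw [h]
  exact sum_mem fun i _ => AddSubmonoid.subset_closure ⟨_, _, rfl⟩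

end part4

section part5
open IsLocalRing
variable {A : Type*} [CommRing A] 

/-- endomorphisms factoring through a member of `S` -/
def factS {N : Type*} [AddCommGroup N] [Module A N] (M : Type*) [AddCommGroup M] [Module A M]
    (S : Set (Submodule A N)) : Set (Module.End A M) :=
  {f | ∃ L ∈ S, f ∈ factorSet A M L}

theorem factS_mono {N : Type*} [AddCommGroup N] [Module A N] (M : Type*) [AddCommGroup M]
    [Module A M] {S T : Set (Submodule A N)} (h : S ⊆ T) : factS M S ⊆ factS M T := by
  rintro f ⟨L, hL, hf⟩
  exact ⟨L, h hL, hf⟩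

theorem factS_comp {N : Type*} [AddCommGroup N] [Module A N] {M M' : Type*} [AddCommGroup M]
    [Module A M] [AddCommGroup M'] [Module A M'] {S : Set (Submodule A N)}
    (p : M' →ₗ[A] M) (q : M →ₗ[A] M') (f : Module.End A M)
    (hf : f ∈ AddSubmonoid.closure (factS M S)) :
    ((q ∘ₗ f) ∘ₗ p : Module.End A M') ∈ AddSubmonoid.closure (factS M' S) := by
  induction hf using AddSubmonoid.closure_induction with
  | mem x hx =>
    obtain ⟨L, hL, p', q', rfl⟩ := hx
    exact AddSubmonoid.subset_closure ⟨L, hL, p' ∘ₗ p, q ∘ₗ q', rfl⟩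
  | zero => rw [LinearMap.comp_zero, LinearMap.zero_comp]; exact zero_mem _
  | add x y _ _ hx hy =>
    rw [LinearMap.comp_add, LinearMap.add_comp]; exact add_mem hx hy

theorem exists_proj {N : Type*} [AddCommGroup N] [Module A N] {X Y : Submodule A N}
    (h : IsCompl X Y) : ∃ π : N →ₗ[A] X, (∀ x (hx : x ∈ X), π x = ⟨x, hx⟩) ∧
      ∀ y ∈ Y, π y = 0 :=
  ⟨X.projectionOnto Y h, fun x hx => Submodule.projectionOnto_apply_left h ⟨x, hx⟩,
    fun y hy => (Submodule.projectionOnto_apply_eq_zero_iff h).2 hy⟩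

theorem decomp {N : Type*} [AddCommGroup N] [Module A N] [IsNoetherian A N]
    (Y : Submodule A N) : ∀ X, IsCompl X Y → ∃ S : Set (Submodule A N), S.Finite ∧
      (∀ L ∈ S, IsIndecomposableModule A L) ∧
      ∃ f ∈ AddSubmonoid.closure (factS N S), ∀ x ∈ X, f x = x := by
  induction Y using WellFoundedGT.induction with
  | ind Y ih =>
  intro X hXY
  by_cases hX : X = ⊥
  · refine ⟨∅, Set.finite_empty, by simp, 0, zero_mem _, ?_⟩
    subst hX
    intro x hx
    rw [Submodule.mem_bot] at hx
    rw [hx, map_zero]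
  by_cases hI : IsIndecomposableModule A X
  · obtain ⟨π, h1, h2⟩ := exists_proj hXY
    refine ⟨{X}, Set.finite_singleton _, by simpa using hI, X.subtype ∘ₗ π,
      AddSubmonoid.subset_closure ⟨X, rfl, _, _, rfl⟩, fun x hx => ?_⟩
    rw [LinearMap.comp_apply, h1 x hx]; rfl
  have hnt : Nontrivial X := Submodule.nontrivial_iff_ne_bot.2 hX
  rw [IsIndecomposableModule] at hI
  push Not at hI
  obtain ⟨N₁, N₂, hN, h1, h2⟩ := hI hnt
  have inj := X.injective_subtype
  set X₁ := N₁.map X.subtype with hX1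
  set X₂ := N₂.map X.subtype with hX2
  have hb1 : X₁ ≠ ⊥ := by
    intro h
    exact h1 (Submodule.map_injective_of_injective inj (h.trans (Submodule.map_bot _).symm))
  have hb2 : X₂ ≠ ⊥ := by
    intro h
    exact h2 (Submodule.map_injective_of_injective inj (h.trans (Submodule.map_bot _).symm))
  have hsup : X₁ ⊔ X₂ = X := by
    rw [hX1, hX2, ← Submodule.map_sup, hN.sup_eq_top, Submodule.map_top, Submodule.range_subtype]
  have hdis : Disjoint X₁ X₂ := by
    rw [disjoint_iff, hX1, hX2, ← Submodule.map_inf _ inj, hN.inf_eq_bot, Submodule.map_bot]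
  have hc1 : IsCompl X₁ (X₂ ⊔ Y) := by
    refine ⟨Disjoint.disjoint_sup_right_of_disjoint_sup_left hdis (hsup ▸ hXY.disjoint), ?_⟩
    rw [codisjoint_iff, ← sup_assoc, hsup, hXY.sup_eq_top]
  have hc2 : IsCompl X₂ (X₁ ⊔ Y) := by
    refine ⟨Disjoint.disjoint_sup_right_of_disjoint_sup_left hdis.symm
      (by rw [sup_comm, hsup]; exact hXY.disjoint), ?_⟩
    rw [codisjoint_iff, ← sup_assoc, sup_comm X₂, hsup, hXY.sup_eq_top]
  have hlt : ∀ Z : Submodule A N, Z ≤ X → Z ≠ ⊥ → Y < Z ⊔ Y := by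
    intro Z hZ hZ0
    refine lt_of_le_of_ne le_sup_right fun h => hZ0 ?_
    rw [eq_bot_iff, ← hXY.inf_eq_bot]
    exact le_inf hZ (h ▸ le_sup_left)
  obtain ⟨S₁, hS1, hi1, f₁, hf1, hx1⟩ := ih _ (hlt X₂ (hsup ▸ le_sup_right) hb2) X₁ hc1
  obtain ⟨S₂, hS2, hi2, f₂, hf2, hx2⟩ := ih _ (hlt X₁ (hsup ▸ le_sup_left) hb1) X₂ hc2
  obtain ⟨π₁, h11, h12⟩ := exists_proj hc1
  obtain ⟨π₂, h21, h22⟩ := exists_proj hc2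
  refine ⟨S₁ ∪ S₂, hS1.union hS2, fun L hL => hL.elim (hi1 L) (hi2 L),
    (LinearMap.id ∘ₗ f₁) ∘ₗ (X₁.subtype ∘ₗ π₁) + (LinearMap.id ∘ₗ f₂) ∘ₗ (X₂.subtype ∘ₗ π₂), add_mem ?_ ?_, ?_⟩
  · exact factS_comp _ _ _
      (AddSubmonoid.closure_mono (factS_mono N Set.subset_union_left) hf1)
  · exact factS_comp _ _ _
      (AddSubmonoid.closure_mono (factS_mono N Set.subset_union_right) hf2)
  · intro x hx
    rw [← hsup] at hx
    obtain ⟨u, hu, v, hv, rfl⟩ := Submodule.mem_sup.1 hx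
    simp only [LinearMap.add_apply, LinearMap.comp_apply, LinearMap.id_apply, map_add]
    rw [h11 u hu, h12 v (Submodule.mem_sup_left hv), h21 v hv, h22 u (Submodule.mem_sup_left hu)]
    simp [hx1 u hu, hx2 v hv]

theorem finite_types [IsNoetherianRing A] [IsLocalRing A]
    [IsPrecomplete (maximalIdeal A) A] (N : Type*) [AddCommGroup N] [Module A N]
    [Module.Finite A N] : ∃ (n : ℕ) (L : Fin n → Submodule A N),
      ∀ (M : Type) [AddCommGroup M] [Module A M], Module.Finite A M →
        IsIndecomposableModule A M →
        (1 : Module.End A M) ∈ AddSubmonoid.closure (factorSet A M N) →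
        (∃ K K' : Submodule A N, IsCompl K K' ∧ Nonempty (M ≃ₗ[A] K)) ∧
          ∃ i : Fin n, Nonempty (M ≃ₗ[A] L i) := by
  obtain ⟨S, hS, hind, f, hf, hid⟩ := decomp (A := A) (N := N) ⊥ ⊤ isCompl_top_bot
  have hf1 : f = LinearMap.id := LinearMap.ext fun x => hid x trivial
  obtain ⟨n, L, hL⟩ := hS.fin_param
  refine ⟨n, L, ?_⟩
  intro M _ _ hfin hM h1
  have := hM.1
  have hloc := end_local (A := A) M hM.2
  obtain ⟨g, ⟨p, q, rfl⟩, hu⟩ := exists_unit_of_mem_closure _ h1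
  constructor
  · obtain ⟨hinj, K', hK⟩ := summand_of_unit p q hu
    exact ⟨_, K', hK, ⟨LinearEquiv.ofInjective p hinj⟩⟩
  · obtain ⟨u, hu'⟩ := hu.exists_left_inv
    have h2 := factS_comp p (u ∘ₗ q) f hf
    have h3 : ((u ∘ₗ q) ∘ₗ f) ∘ₗ p = (1 : Module.End A M) := by
      rw [hf1, LinearMap.comp_id, LinearMap.comp_assoc]
      exact hu'
    rw [h3] at h2
    obtain ⟨g, ⟨L', hL', p', q', rfl⟩, hu2⟩ := exists_unit_of_mem_closure _ h2
    obtain ⟨hinj, K', hK⟩ := summand_of_unit p' q' hu2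
    have hsurj : Function.Surjective p' := by
      rw [← LinearMap.range_eq_top]
      rcases (hind L' hL').2 _ _ hK with h | h
      · exfalso
        rw [LinearMap.range_eq_bot] at h
        obtain ⟨m, hm⟩ := exists_ne (0 : M)
        apply hm
        apply hinj
        rw [h]; rfl
      · rw [h] at hK
        simpa using hK.sup_eq_top
    have : L' ∈ Set.range L := hL.2 ▸ hL'
    obtain ⟨i, rfl⟩ := this
    exact ⟨i, ⟨LinearEquiv.ofBijective p' ⟨hinj, hsurj⟩⟩⟩

end part5

section part6
open IsLocalRing
variable {R : Type*} [CommRing R] {G : Type*} [Group G] [Fintype G] [MulSemiringAction G R]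

theorem fix_smul (σ : G) (x : fixedSubring G R) : σ • (x : R) = x := x.2 σ

theorem exists_reynolds (hG : IsUnit ((Fintype.card G : R))) :
    ∃ ρ : R →ₗ[fixedSubring G R] fixedSubring G R, (∀ z : fixedSubring G R, ρ (z : R) = z) := by
  obtain ⟨v, hv⟩ := hG.exists_left_inv
  have hvi : ∀ σ : G, σ • v = v := by
    intro σ
    have h : σ • v * (Fintype.card G : R) = 1 := by
      have := congrArg (fun t => σ • t) hv
      have h2 : σ • (Fintype.card G : R) = Fintype.card G :=
        map_natCast (MulSemiringAction.toRingHom G R σ) _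
      simpa [smul_mul', h2] using this
    calc σ • v = σ • v * (v * (Fintype.card G : R)) := by rw [hv, mul_one]
      _ = (σ • v * (Fintype.card G : R)) * v := by ring
      _ = v := by rw [h, one_mul]
  have hmem : ∀ r : R, v * ∑ σ : G, σ • r ∈ fixedSubring G R := by
    intro r τ
    rw [smul_mul', hvi, Finset.smul_sum]
    congr 1
    simp only [← mul_smul]
    exact Fintype.sum_equiv (Equiv.mulLeft τ) _ _ (fun _ => rfl)
  refine ⟨{ toFun := fun r => ⟨_, hmem r⟩, map_add' := ?_, map_smul' := ?_ }, ?_⟩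
  · intro r s
    ext
    simp [Finset.sum_add_distrib, mul_add]
  · intro c r
    ext
    change v * ∑ σ : G, σ • ((c : R) * r) = (c : R) * (v * ∑ σ : G, σ • r)
    simp only [smul_mul', fix_smul, ← Finset.mul_sum]
    ring
  · intro z
    ext
    change v * ∑ σ : G, σ • (z : R) = z
    simp only [fix_smul, Finset.sum_const, Finset.card_univ, nsmul_eq_mul]
    rw [← mul_assoc, hv, one_mul]

theorem fix_isUnit (x : fixedSubring G R) (h : IsUnit (x : R)) : IsUnit x := by
  obtain ⟨v, hv⟩ := h.exists_right_inv
  have hvi : v ∈ fixedSubring G R := by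
    intro σ
    have h : (x : R) * σ • v = 1 := by
      have := congrArg (fun t => σ • t) hv
      simpa [smul_mul', fix_smul] using this
    calc σ • v = σ • v * (x * v) := by rw [hv, mul_one]
      _ = ((x : R) * σ • v) * v := by ring
      _ = v := by rw [h, one_mul]
  exact IsUnit.of_mul_eq_one ⟨v, hvi⟩ (Subtype.ext hv)

theorem fix_local [IsLocalRing R] : IsLocalRing (fixedSubring G R) := by
  refine IsLocalRing.of_isUnit_or_isUnit_one_sub_self fun a => ?_
  rcases IsLocalRing.isUnit_or_isUnit_one_sub_self (a : R) with h | h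
  · exact Or.inl (fix_isUnit _ h)
  · exact Or.inr (fix_isUnit _ h)

/-- contraction of extension -/
theorem map_reynolds (ρ : R →ₗ[fixedSubring G R] fixedSubring G R)
    (I : Ideal (fixedSubring G R)) (z : R) (hz : z ∈ I.map (algebraMap (fixedSubring G R) R)) :
    ρ z ∈ I := by
  refine Submodule.span_induction ?_ ?_ ?_ ?_ hz (p := fun z _ => ∀ r : R, ρ (r * z) ∈ I) |> fun h => by simpa using h 1
  · rintro _ ⟨i, hi, rfl⟩ r
    have : r * algebraMap (fixedSubring G R) R i = i • r := by
      rw [Algebra.smul_def, mul_comm]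
    rw [this, map_smul]
    exact I.mul_mem_right _ hi
  · intro r; rw [mul_zero, map_zero]; exact I.zero_mem
  · intro x y _ _ hx hy r
    rw [mul_add, map_add]; exact I.add_mem (hx r) (hy r)
  · intro s x _ hx r
    rw [smul_eq_mul, ← mul_assoc]; exact hx _

theorem fix_noeth [IsNoetherianRing R] (hG : IsUnit ((Fintype.card G : R))) :
    IsNoetherianRing (fixedSubring G R) := by
  obtain ⟨ρ, hρ⟩ := exists_reynolds (G := G) (R := R) hG
  have hle : ∀ I J : Ideal (fixedSubring G R),
      I.map (algebraMap (fixedSubring G R) R) ≤ J.map (algebraMap (fixedSubring G R) R) → I ≤ J := by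
    intro I J h i hi
    have := map_reynolds ρ J _ (h (Ideal.mem_map_of_mem _ hi))
    rwa [show ρ (algebraMap (fixedSubring G R) R i) = i from hρ i] at this
  rw [isNoetherianRing_iff, isNoetherian_iff']
  exact (OrderEmbedding.ofMapLEIff (fun I : Ideal (fixedSubring G R) =>
    I.map (algebraMap (fixedSubring G R) R)) (fun I J => ⟨hle I J, fun h => Ideal.map_mono h⟩)).wellFoundedGT

theorem fix_intClosed [IsDomain R] [IsIntegrallyClosed R] : IsIntegrallyClosed (fixedSubring G R) := by
  rw [isIntegrallyClosed_iff (FractionRing (fixedSubring G R))]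
  intro q hq
  obtain ⟨n, d, hd, rfl⟩ := IsFractionRing.div_surjective (A := fixedSubring G R) q
  have hd0 : d ≠ 0 := nonZeroDivisors.ne_zero hd
  have hd0' : (d : R) ≠ 0 := fun h => hd0 (Subtype.ext h)
  let φ : FractionRing (fixedSubring G R) →+* FractionRing R :=
    IsFractionRing.map (A := fixedSubring G R) (B := R) (j := algebraMap (fixedSubring G R) R) Subtype.val_injective
  have hφ : ∀ a : fixedSubring G R, φ (algebraMap _ _ a) = algebraMap R (FractionRing R) a := by
    intro a
    exact IsLocalization.map_eq _ a
  have h1 : IsIntegral R (φ (algebraMap _ _ n / algebraMap _ _ d)) := by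
    obtain ⟨P, hP, hP0⟩ := hq
    refine ⟨P.map (algebraMap (fixedSubring G R) R), hP.map _, ?_⟩
    rw [Polynomial.eval₂_map]
    have h2 := congrArg φ hP0
    rw [Polynomial.hom_eval₂, map_zero] at h2
    have h3 : φ.comp (algebraMap (fixedSubring G R) (FractionRing (fixedSubring G R))) =
        (algebraMap R (FractionRing R)).comp (algebraMap (fixedSubring G R) R) :=
      RingHom.ext fun a => hφ a
    rw [h3] at h2
    exact h2
  obtain ⟨r, hr⟩ := IsIntegrallyClosed.isIntegral_iff.1 h1
  rw [map_div₀, hφ, hφ, eq_div_iff (by simpa using hd0), ← map_mul] at hr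
  have hr2 : r * d = n := IsFractionRing.injective R (FractionRing R) hr
  have hri : r ∈ fixedSubring G R := by
    intro σ
    have := congrArg (fun t => σ • t) hr2
    simp only [smul_mul', fix_smul] at this
    exact mul_right_cancel₀ hd0' (this.trans hr2.symm)
  refine ⟨⟨r, hri⟩, ?_⟩
  rw [eq_div_iff (by simpa using hd0), ← map_mul]
  congr 1
  exact Subtype.ext hr2

theorem fix_invariant : Algebra.IsInvariant (fixedSubring G R) R G :=
  ⟨fun b hb => ⟨⟨b, hb⟩, rfl⟩⟩

instance fix_smulComm : SMulCommClass G (fixedSubring G R) R :=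
  ⟨fun σ c r => by
    change σ • ((c : R) * r) = (c : R) * σ • r
    rw [smul_mul', fix_smul]⟩

theorem fix_integral : Algebra.IsIntegral (fixedSubring G R) R := by
  have := fix_invariant (R := R) (G := G)
  exact Algebra.IsInvariant.isIntegral _ _ G

end part6

section part7
open IsLocalRing
variable {R : Type*} [CommRing R] {G : Type*} [Group G] [Fintype G] [MulSemiringAction G R]

theorem fix_finite [IsDomain R] [IsIntegrallyClosed R] [IsNoetherianRing R]
    (hG : IsUnit ((Fintype.card G : R))) : Module.Finite (fixedSubring G R) R := by
  have hn := fix_noeth (R := R) (G := G) hG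
  have hic := fix_intClosed (R := R) (G := G)
  have hint := fix_integral (R := R) (G := G)
  let G' : Subgroup (R ≃+* R) := (MulSemiringAction.toRingAut G R).range
  have hfin : Finite G' := Finite.of_surjective _ (MulSemiringAction.toRingAut G R).rangeRestrict_surjective
  have hgal : IsGaloisGroup G' (fixedSubring G R) R := by
    refine ⟨⟨fun {σ τ} h => Subtype.ext (RingEquiv.ext h)⟩, ⟨?_⟩, ⟨?_⟩⟩
    · rintro ⟨_, σ, rfl⟩ c r
      change σ • ((c : R) * r) = (c : R) * σ • r
      rw [smul_mul', fix_smul]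
    · intro b hb
      exact ⟨⟨b, fun σ => hb ⟨_, σ, rfl⟩⟩, rfl⟩
  let := FractionRing.liftAlgebra (fixedSubring G R) (FractionRing R)
  let := IsFractionRing.mulSemiringAction G' R (FractionRing R)
  have := IsGaloisGroup.to_isFractionRing_of_isIntegral G' (fixedSubring G R) R
    (FractionRing (fixedSubring G R)) (FractionRing R)
  have := IsGaloisGroup.isGalois G' (FractionRing (fixedSubring G R)) (FractionRing R)
  have := IsGaloisGroup.finiteDimensional G' (FractionRing (fixedSubring G R)) (FractionRing R)
  have hcl : IsIntegralClosure R (fixedSubring G R) (FractionRing R) :=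
    IsIntegralClosure.of_isIntegrallyClosed _ _ _
  have := IsIntegralClosure.isNoetherian (fixedSubring G R) (FractionRing (fixedSubring G R))
    (FractionRing R) R
  infer_instance

section
variable [IsNoetherianRing R] [IsLocalRing R]

theorem exists_params [IsDomain R] (hdim : ringKrullDim R = 2) (a b : R)
    (hab : maximalIdeal R = Ideal.span {a, b}) :
    ∃ x y : fixedSubring G R, ¬ IsUnit x ∧ ¬ IsUnit y ∧ WReg (x : R) (y : R) R ∧
      ∀ P : Ideal R, P.IsPrime → (x : R) ∈ P → (y : R) ∈ P → P = maximalIdeal R := by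
  classical
  obtain ⟨hpa, hba⟩ := R_prime hdim a b hab
  have ha : a ∈ maximalIdeal R := by rw [hab]; exact Ideal.subset_span (by simp)
  have hps : ∀ σ : G, Prime (σ • a) := fun σ =>
    (MulEquiv.prime_iff (MulSemiringAction.toRingEquiv G R σ)).2 hpa
  have hmax : ∀ (σ : G) (z : R), z ∈ maximalIdeal R → σ • z ∈ maximalIdeal R := by
    intro σ z hz
    rw [mem_maximalIdeal, mem_nonunits_iff] at hz ⊢
    intro h
    apply hz
    have := h.map (MulSemiringAction.toRingEquiv G R σ⁻¹)
    simpa using this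
  have hht : (maximalIdeal R).height = 2 := by
    have := maximalIdeal_height_eq_ringKrullDim (R := R)
    rw [hdim] at this
    exact WithBot.coe_injective this
  -- a prime strictly containing a principal one
  have hprime : ∀ (σ : G) (P : Ideal R), P.IsPrime → σ • a ∈ P → ∀ z ∈ P,
      z ∉ Ideal.span {σ • a} → P = maximalIdeal R := by
    intro σ P hP h1 z hz hz'
    have hlt : Ideal.span {σ • a} < P := by
      refine lt_of_le_of_ne ?_ fun h => hz' (h ▸ hz)
      rwa [Ideal.span_singleton_le_iff_mem]
    have hp1 : (Ideal.span {σ • a}).IsPrime :=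
      (Ideal.span_singleton_prime (hps σ).ne_zero).2 (hps σ)
    by_contra hne
    have hlt2 : P < maximalIdeal R := lt_of_le_of_ne (le_maximalIdeal hP.ne_top) hne
    have hlt0 : (⊥ : Ideal R) < Ideal.span {σ • a} := by
      rw [bot_lt_iff_ne_bot, Ne, Ideal.span_singleton_eq_bot]
      exact (hps σ).ne_zero
    have e1 := Ideal.height_add_one_le_of_lt_of_isPrime hlt0
    have e2 := Ideal.height_add_one_le_of_lt_of_isPrime hlt
    have e3 := Ideal.height_add_one_le_of_lt_of_isPrime hlt2
    rw [hht] at e3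
    have : (3 : ℕ∞) ≤ 2 := by
      calc (3 : ℕ∞) = 0 + 1 + 1 + 1 := by norm_num
        _ ≤ (⊥ : Ideal R).height + 1 + 1 + 1 := by gcongr; exact bot_le
        _ ≤ _ := (by gcongr : _ ≤ (Ideal.span {σ • a}).height + 1 + 1).trans
            ((by gcongr : _ ≤ P.height + 1).trans e3)
    exact absurd this (by decide)
  obtain ⟨c, hc, hca⟩ : ∃ c ∈ maximalIdeal R, ∀ σ : G, c ∉ Ideal.span {σ • a} := by
    by_contra hcon
    push Not at hcon
    have hsub : (maximalIdeal R : Set R) ⊆ ⋃ σ ∈ ((Finset.univ : Finset G) : Set G),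
        (Ideal.span {σ • a} : Ideal R) := by
      intro c hc
      obtain ⟨σ, hσ⟩ := hcon c hc
      simp only [Set.mem_iUnion]
      exact ⟨σ, by simp, hσ⟩
    obtain ⟨σ, -, h⟩ := (Ideal.subset_union_prime (1 : G) 1 (fun σ _ _ _ =>
      (Ideal.span_singleton_prime (hps σ).ne_zero).2 (hps σ))).1 hsub
    have h1 := Ideal.height_mono h
    have h2 := Ideal.height_span_singleton_le_one (hps σ).not_isUnit
    rw [hht] at h1
    exact absurd (h1.trans h2) (by decide)
  have hfix : ∀ z : R, ∏ σ : G, σ • z ∈ fixedSubring G R := by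
    intro z τ
    rw [Finset.smul_prod']
    simp only [← mul_smul]
    exact Fintype.prod_equiv (Equiv.mulLeft τ) _ _ (fun _ => rfl)
  have hnu : ∀ z : R, z ∈ maximalIdeal R → ¬ IsUnit (⟨_, hfix z⟩ : fixedSubring G R) := by
    intro z hz hu
    have h1 : IsUnit (∏ σ : G, σ • z) := hu.map (fixedSubring G R).subtype
    have h2 : ∏ σ : G, σ • z ∈ maximalIdeal R :=
      Ideal.mem_of_dvd _ (Finset.dvd_prod_of_mem _ (Finset.mem_univ (1 : G))) (by simpa using hz)
    exact (mem_maximalIdeal _).1 h2 h1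
  have hcd : ∀ σ τ : G, ¬ (σ • a ∣ τ • c) := by
    intro σ τ ⟨u, hu⟩
    apply hca (τ⁻¹ * σ)
    rw [Ideal.mem_span_singleton]
    refine ⟨τ⁻¹ • u, ?_⟩
    rw [mul_smul, ← smul_mul', ← hu, inv_smul_smul]
  refine ⟨⟨_, hfix a⟩, ⟨_, hfix c⟩, hnu a ha, hnu c hc, ⟨?_, ?_⟩, ?_⟩
  · intro h hh
    rw [smul_eq_mul, mul_eq_zero] at hh
    rcases hh with hh | hh
    · exfalso
      exact Finset.prod_ne_zero_iff.2 (fun σ _ => (hps σ).ne_zero) hh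
    · exact hh
  · intro h u hu
    simp only [smul_eq_mul] at hu ⊢
    suffices H : ∀ s : Finset G, ∏ σ ∈ s, σ • a ∣ (∏ σ : G, σ • c) * h → ∏ σ ∈ s, σ • a ∣ h by
      exact H Finset.univ ⟨u, hu⟩
    intro s
    induction s using Finset.induction_on with
    | empty => intro _; simp
    | insert τ s hτ ih =>
      intro hdvd
      rw [Finset.prod_insert hτ] at hdvd ⊢
      obtain ⟨w, hw⟩ := ih (dvd_trans (Dvd.intro_left _ rfl) hdvd)
      have hne : ∏ σ ∈ s, σ • a ≠ 0 := Finset.prod_ne_zero_iff.2 (fun σ _ => (hps σ).ne_zero)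
      have h3 : τ • a ∣ (∏ σ : G, σ • c) * w := by
        rw [hw, mul_left_comm, mul_comm (τ • a)] at hdvd
        exact (mul_dvd_mul_iff_left hne).1 hdvd
      rcases (hps τ).dvd_or_dvd h3 with h4 | h4
      · obtain ⟨σ, -, h5⟩ := (hps τ).exists_mem_finset_dvd h4
        exact absurd h5 (hcd τ σ)
      · rw [hw, mul_comm (τ • a)]
        exact mul_dvd_mul_left _ h4
  · intro P hP hx hy
    have hx' : ∏ σ : G, σ • a ∈ P := hx
    have hy' : ∏ σ : G, σ • c ∈ P := hy
    rw [hP.prod_mem_iff] at hx' hy'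
    obtain ⟨σ, -, hσ⟩ := hx'
    obtain ⟨τ, -, hτ⟩ := hy'
    exact hprime σ P hP hσ _ hτ (fun h => hcd σ τ (Ideal.mem_span_singleton.1 h))
end
end part7

section part8
open IsLocalRing
variable {R : Type*} [CommRing R] {G : Type*} [Group G] [Fintype G] [MulSemiringAction G R]

theorem fix_wreg (hG : IsUnit ((Fintype.card G : R))) (x y : fixedSubring G R)
    (h : WReg (x : R) (y : R) R) : WReg x y (fixedSubring G R) := by
  obtain ⟨ρ, hρ⟩ := exists_reynolds (G := G) (R := R) hG
  obtain ⟨h1, h2⟩ := h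
  refine ⟨fun z hz => Subtype.ext (h1 z (congrArg Subtype.val hz)), fun z u hz => ?_⟩
  obtain ⟨w, hw⟩ := h2 z u (congrArg Subtype.val hz)
  refine ⟨ρ w, ?_⟩
  rw [← map_smul, ← hρ z, hw]
  rfl

theorem fix_map_le [IsLocalRing R] [IsLocalRing (fixedSubring G R)] :
    (maximalIdeal (fixedSubring G R)).map (algebraMap (fixedSubring G R) R) ≤ maximalIdeal R := by
  rw [Ideal.map_le_iff_le_comap]
  intro z hz
  rw [Ideal.mem_comap, mem_maximalIdeal]
  intro h
  exact (mem_maximalIdeal _).1 hz (fix_isUnit z h)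

theorem fix_dim [IsDomain R] [IsNoetherianRing R] [IsLocalRing R]
    [IsNoetherianRing (fixedSubring G R)] [IsLocalRing (fixedSubring G R)]
    (x y : fixedSubring G R) (hreg : RingTheory.Sequence.IsRegular (fixedSubring G R) [x, y])
    (hx : ¬ IsUnit x) (hy : ¬ IsUnit y)
    (hP : ∀ P : Ideal R, P.IsPrime → (x : R) ∈ P → (y : R) ∈ P → P = maximalIdeal R) :
    ringKrullDim (fixedSubring G R) = 2 := by
  have hint := fix_integral (R := R) (G := G)
  have h1 := ringKrullDim_add_length_eq_ringKrullDim_of_isRegular [x, y] hreg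
  have hle : Ideal.ofList [x, y] ≤ maximalIdeal (fixedSubring G R) := by
    rw [Ideal.ofList, Ideal.span_le]
    intro z hz
    simp only [List.mem_cons, List.not_mem_nil, or_false, Set.mem_ofPred_eq] at hz
    rcases hz with rfl | rfl
    · exact (mem_maximalIdeal _).2 hx
    · exact (mem_maximalIdeal _).2 hy
  have hnt : Nontrivial (fixedSubring G R ⧸ Ideal.ofList [x, y]) :=
    Ideal.Quotient.nontrivial_iff.2 (fun h => (maximalIdeal.isMaximal (fixedSubring G R)).ne_top
      (top_le_iff.1 (h ▸ hle)))
  have h0 : ringKrullDim (fixedSubring G R ⧸ Ideal.ofList [x, y]) = 0 := by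
    rw [← ringKrullDimZero_iff_ringKrullDim_eq_zero, Ring.krullDimLE_zero_iff]
    intro I hI
    have hIp : (I.comap (Ideal.Quotient.mk (Ideal.ofList [x, y]))).IsPrime := hI.comap _
    obtain ⟨Q, hQ, hQI⟩ := Ideal.exists_ideal_over_prime_of_isIntegral_of_isDomain (S := R)
      (I.comap (Ideal.Quotient.mk (Ideal.ofList [x, y]))) (by
        rw [(RingHom.injective_iff_ker_eq_bot _).1 (Subtype.val_injective :
          Function.Injective (algebraMap (fixedSubring G R) R))]
        exact bot_le)
    have hmem : ∀ z ∈ [x, y], (z : R) ∈ Q := by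
      intro z hz
      have hzz : z ∈ Ideal.ofList [x, y] :=
        Ideal.subset_span (s := {r | r ∈ [x, y]}) hz
      have : z ∈ Q.comap (algebraMap (fixedSubring G R) R) := by
        rw [hQI, Ideal.mem_comap,
          Ideal.Quotient.eq_zero_iff_mem.2 hzz]
        exact I.zero_mem
      exact this
    have hQm := hP Q hQ (hmem x (by simp)) (hmem y (by simp))
    subst hQm
    have hmx : (I.comap (Ideal.Quotient.mk (Ideal.ofList [x, y]))) =
        maximalIdeal (fixedSubring G R) := by
      apply le_antisymm (le_maximalIdeal hIp.ne_top)
      rw [← hQI, ← Ideal.map_le_iff_le_comap]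
      exact fix_map_le
    have : (I.comap (Ideal.Quotient.mk (Ideal.ofList [x, y]))).IsMaximal := by
      rw [hmx]; infer_instance
    exact Ideal.isMaximal_of_isIntegral_of_isMaximal_comap'
      (Ideal.Quotient.mk (Ideal.ofList [x, y]))
      (RingHom.isIntegral_of_surjective _ Ideal.Quotient.mk_surjective) I this
  rw [h0] at h1
  rw [← h1]
  norm_num

theorem fix_precomplete [IsNoetherianRing R] [IsLocalRing R]
    [IsPrecomplete (maximalIdeal R) R] (hG : IsUnit ((Fintype.card G : R)))
    [IsLocalRing (fixedSubring G R)]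
    (x y : fixedSubring G R) 
    (hx : ¬ IsUnit x) (hy : ¬ IsUnit y)
    (hP : ∀ P : Ideal R, P.IsPrime → (x : R) ∈ P → (y : R) ∈ P → P = maximalIdeal R) :
    IsPrecomplete (maximalIdeal (fixedSubring G R)) (fixedSubring G R) := by
  obtain ⟨ρ, hρ⟩ := exists_reynolds (G := G) (R := R) hG
  set n := maximalIdeal (fixedSubring G R) with hn
  have hrad : maximalIdeal R ≤ (n.map (algebraMap (fixedSubring G R) R)).radical := by
    rw [Ideal.radical_eq_sInf]
    refine le_sInf ?_
    rintro P ⟨hP1, hP2⟩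
    rw [hP P hP2 (hP1 (Ideal.mem_map_of_mem _ ((mem_maximalIdeal _).2 hx)))
      (hP1 (Ideal.mem_map_of_mem _ ((mem_maximalIdeal _).2 hy)))]
  obtain ⟨c, hc⟩ := Ideal.exists_pow_le_of_le_radical_of_fg hrad (IsNoetherian.noetherian _)
  constructor
  intro f hf
  simp only [SModEq.sub_mem, smul_eq_mul, Ideal.mul_top] at hf ⊢
  have hf' : ∀ {m k : ℕ}, m ≤ k → ((f m : R) - f k) ∈
      (n ^ m).map (algebraMap (fixedSubring G R) R) := by
    intro m k hmk
    exact Ideal.mem_map_of_mem (algebraMap (fixedSubring G R) R) (hf hmk)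
  obtain ⟨L, hL⟩ := IsPrecomplete.prec' (I := maximalIdeal R) (M := R) (fun k => (f k : R)) (by
    intro m k hmk
    simp only [SModEq.sub_mem, smul_eq_mul, Ideal.mul_top]
    have := hf' hmk
    rw [Ideal.map_pow] at this
    exact Ideal.pow_right_mono fix_map_le m this)
  simp only [SModEq.sub_mem, smul_eq_mul, Ideal.mul_top] at hL
  refine ⟨ρ L, fun k => ?_⟩
  have h1 : (f k : R) - L ∈ (n ^ k).map (algebraMap (fixedSubring G R) R) := by
    have h2 := hf' (show k ≤ c * k + k by omega)
    have h3 : (f (c * k + k) : R) - L ∈ (n ^ k).map (algebraMap (fixedSubring G R) R) := by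
      rw [Ideal.map_pow]
      apply Ideal.pow_right_mono hc k
      rw [← pow_mul]
      exact Ideal.pow_le_pow_right (by omega) (hL _)
    simpa using Ideal.add_mem _ h2 h3
  have := map_reynolds ρ _ _ h1
  rwa [map_sub, hρ] at this

end part8


/-- Herzog's theorem: if `(R,𝔪)` is a two-dimensional complete regular local ring
(`dim R = 2` and `𝔪` is generated by two elements) with a finite group `G` acting by
ring automorphisms, `|G|` a unit in `R`, then `R^G` is a normal Cohen–Macaulay local
domain of dimension two, `R` is a maximal Cohen–Macaulay `R^G`-module, every
indecomposable maximal Cohen–Macaulay `R^G`-module is a direct summand of `R`, and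
`R^G` has finite Cohen–Macaulay type. -/
theorem invariants_of_two_dim_regular_finite_CM_type
    (R : Type) [CommRing R] [IsNoetherianRing R] [IsLocalRing R]
    [IsAdicComplete (IsLocalRing.maximalIdeal R) R]
    (hdim : ringKrullDim R = 2)
    (hreg : ∃ a b : R, IsLocalRing.maximalIdeal R = Ideal.span {a, b})
    (G : Type) [Group G] [Fintype G] [MulSemiringAction G R]
    (hG : IsUnit ((Fintype.card G : R))) :
    IsDomain (fixedSubring G R) ∧
    IsIntegrallyClosed (fixedSubring G R) ∧
    IsLocalRing (fixedSubring G R) ∧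
    ringKrullDim (fixedSubring G R) = 2 ∧
    IsMCM₂ (fixedSubring G R) (fixedSubring G R) ∧
    IsMCM₂ (fixedSubring G R) R ∧
    (∀ (M : Type) [AddCommGroup M] [Module (fixedSubring G R) M],
      IsMCM₂ (fixedSubring G R) M → IsIndecomposableModule (fixedSubring G R) M →
        ∃ N N' : Submodule (fixedSubring G R) R,
          IsCompl N N' ∧ Nonempty (M ≃ₗ[fixedSubring G R] N)) ∧
    (∃ (n : ℕ) (L : Fin n → Submodule (fixedSubring G R) R),
      ∀ (M : Type) [AddCommGroup M] [Module (fixedSubring G R) M],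
        IsMCM₂ (fixedSubring G R) M → IsIndecomposableModule (fixedSubring G R) M →
          ∃ i : Fin n, Nonempty (M ≃ₗ[fixedSubring G R] L i)) := by
  obtain ⟨a, b, hab⟩ := hreg
  have hdom : IsDomain R := R_domain hdim a b hab
  have hufd : UniqueFactorizationMonoid R := R_ufd hdim a b hab
  have hloc : IsLocalRing (fixedSubring G R) := fix_local
  have hnoe : IsNoetherianRing (fixedSubring G R) := fix_noeth hG
  have hfin : Module.Finite (fixedSubring G R) R := fix_finite hG
  obtain ⟨x, y, hx, hy, hw, hP⟩ := exists_params (G := G) hdim a b hab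
  have hpre : IsPrecomplete (IsLocalRing.maximalIdeal (fixedSubring G R)) (fixedSubring G R) :=
    fix_precomplete hG x y hx hy hP
  have hregA : RingTheory.Sequence.IsRegular (fixedSubring G R) [x, y] :=
    reg_of_wreg x y hx hy _ (fix_wreg hG x y hw)
  have hwR : WReg x y R := hw
  have hregR : RingTheory.Sequence.IsRegular R [x, y] := reg_of_wreg x y hx hy R hwR
  obtain ⟨ρ, hρ⟩ := exists_reynolds (G := G) (R := R) hG
  have hρ1 : ρ 1 = 1 := hρ 1
  have hfac : ∀ (M : Type) [AddCommGroup M] [Module (fixedSubring G R) M],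
      IsMCM₂ (fixedSubring G R) M → (1 : Module.End (fixedSubring G R) M) ∈
        AddSubmonoid.closure (factorSet (fixedSubring G R) M R) := by
    intro M _ _ hM
    obtain ⟨hMf, x', y', hx', hy', hr⟩ := hM
    have hwM : WReg x' y' M := (wreg_iff x' y' M).1 hr.toIsWeaklyRegular
    have h1 := homMod_wreg (R := R) x' y' hwM
    have h2 : Module.Finite R (HomMod (fixedSubring G R) R M) := homMod_finite
    have hmem : ∀ z : fixedSubring G R, ¬ IsUnit z →
        algebraMap (fixedSubring G R) R z ∈ IsLocalRing.maximalIdeal R := fun z hz =>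
      (IsLocalRing.mem_maximalIdeal _).2 (fun h => hz (fix_isUnit z h))
    have h3 : Module.Free R (HomMod (fixedSubring G R) R M) :=
      free_of_wreg hdim a b hab _ _ _ (hmem x' hx') (hmem y' hy') h1
    exact factor_of_free ρ hρ1
  obtain ⟨n, L, hL⟩ := finite_types (A := fixedSubring G R) R
  refine ⟨inferInstance, fix_intClosed, hloc, fix_dim x y hregA hx hy hP,
    ⟨inferInstance, x, y, hx, hy, hregA⟩, ⟨hfin, x, y, hx, hy, hregR⟩, ?_, n, L, ?_⟩
  · intro M _ _ hM hI
    exact (hL M hM.1 hI (hfac M hM)).1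
  · intro M _ _ hM hI
    exact (hL M hM.1 hI (hfac M hM)).2
end

section
/- Let (V,π) be a complete discrete valuation ring of characteristic zero whose residue field k = V/(π) is algebraically closed of characteristic p > 0. Let n ≥ 1 and let H be a finite subgroup of GL_n(ℂ) with p ∤ |H|. Then there exists a finite subgroup G of GL_n(V) that is isomorphic to H as an abstract group. Furthermore, if H ⊆ SL_n(ℂ), then G can be chosen with G ⊆ SL_n(V). -/
open IsLocalRing

lemma aux_geom {A : Type*} [Ring A] (h : A) (N : ℕ) (hN : h ^ N = 1) :
    (∑ i ∈ Finset.range N, h ^ i) * (h - 1) = 0 := by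
  rw [geom_sum_mul, hN, sub_self]

/-- Reduction is injective on prime-to-`p` torsion. -/
lemma aux_matrix_inj {R F : Type*} [CommRing R] [IsDomain R] [Field F] (f : R →+* F)
    {n : ℕ} (h : Matrix (Fin n) (Fin n) R) (N : ℕ) (hN : h ^ N = 1) (hF : (N : F) ≠ 0)
    (h1 : f.mapMatrix h = 1) : h = 1 := by
  have h2 := aux_geom h N hN
  set S := ∑ i ∈ Finset.range N, h ^ i with hS
  have h3 : f.mapMatrix S = (N : Matrix (Fin n) (Fin n) F) := by
    simp [hS, map_sum, map_pow, h1]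
  have h4 : S.det ≠ 0 := by
    intro h0
    have h5 : (f.mapMatrix S).det = 0 := by rw [← RingHom.map_det, h0, map_zero]
    rw [h3, ← Matrix.diagonal_natCast, Matrix.det_diagonal, Finset.prod_const] at h5
    exact pow_ne_zero _ hF h5
  have h6 : S.adjugate * (S * (h - 1)) = 0 := by rw [h2, mul_zero]
  rw [← mul_assoc, Matrix.adjugate_mul, smul_mul_assoc, one_mul] at h6
  have := (smul_eq_zero.1 h6).resolve_left h4
  exact sub_eq_zero.1 this

lemma aux_elt_inj {R F : Type*} [CommRing R] [IsDomain R] [Field F] (f : R →+* F)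
    (h : R) (N : ℕ) (hN : h ^ N = 1) (hF : (N : F) ≠ 0)
    (h1 : f h = 1) : h = 1 := by
  have h2 := aux_geom h N hN
  rcases mul_eq_zero.1 h2 with h3 | h3
  · have := congrArg f h3
    simp [map_sum, map_pow, h1] at this
    exact absurd this hF
  · exact sub_eq_zero.1 h3

/-- Vanishing of the second cohomology. -/
lemma aux_cocycle {G F M : Type*} [Group G] [Fintype G] [Field F] [Ring M] [Algebra F M]
    (hG : (Fintype.card G : F) ≠ 0) (r : G →* M) (D : G → G → M)
    (hD : ∀ x y z, D x y * r z + D (x * y) z = r x * D y z + D x (y * z)) :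
    ∃ a : G → M, ∀ x y, D x y + a (x * y) = a x * r y + r x * a y := by
  refine ⟨fun x => (Fintype.card G : F)⁻¹ • ∑ z, D x z * r z⁻¹, fun x y => ?_⟩
  have key : (Fintype.card G : F) • D x y + ∑ z, D (x * y) z * r z⁻¹ =
      r x * (∑ z, D y z * r z⁻¹) + (∑ z, D x z * r z⁻¹) * r y := by
    have e1 : (∑ z, D x z * r z⁻¹) * r y = ∑ z, D x (y * z) * r z⁻¹ := by
      rw [Finset.sum_mul, ← Equiv.sum_comp (Equiv.mulLeft y)]
      refine Finset.sum_congr rfl fun z _ => ?_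
      simp only [Equiv.coe_mulLeft]
      rw [mul_assoc, ← map_mul]
      congr 2
      group
    have e2 : (Fintype.card G : F) • D x y = ∑ z, D x y * r z * r z⁻¹ := by
      simp [mul_assoc, ← map_mul, Nat.cast_smul_eq_nsmul]
    rw [e1, e2, Finset.mul_sum, ← Finset.sum_add_distrib, ← Finset.sum_add_distrib]
    refine Finset.sum_congr rfl fun z _ => ?_
    rw [← add_mul, hD, add_mul, mul_assoc]
  have := congrArg (fun t => (Fintype.card G : F)⁻¹ • t) key
  simp only [smul_add, smul_smul, inv_mul_cancel₀ hG, one_smul] at this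
  rw [this, smul_mul_assoc, mul_smul_comm, add_comm]

section lifting
variable {V : Type*} [CommRing V] [IsDomain V] [IsDiscreteValuationRing V] {n : ℕ}

lemma aux_div (π : V) (hπ : maximalIdeal V = Ideal.span {π})
    (X : Matrix (Fin n) (Fin n) V) (hX : (residue V).mapMatrix X = 0) :
    ∃ Y : Matrix (Fin n) (Fin n) V, X = π • Y := by
  have : ∀ i j, ∃ y, X i j = π * y := by
    intro i j
    have h1 : residue V (X i j) = 0 := by simpa using congrFun (congrFun hX i) j
    rw [residue_eq_zero_iff, hπ, Ideal.mem_span_singleton] at h1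
    exact h1
  choose Y hY using this
  exact ⟨Matrix.of Y, by ext i j; simp [hY]⟩

lemma aux_step {G : Type*} [Group G] [Fintype G]
    (hG : (Fintype.card G : ResidueField V) ≠ 0)
    (π : V) (hπ : maximalIdeal V = Ideal.span {π}) (hπ0 : π ≠ 0)
    (r : G →* Matrix (Fin n) (Fin n) (ResidueField V)) (m : ℕ)
    (ρ : G → Matrix (Fin n) (Fin n) V) (hρ : ∀ g, (residue V).mapMatrix (ρ g) = r g)
    (hm : ∀ x y, ∃ D, ρ (x * y) = ρ x * ρ y + π ^ (m + 1) • D) :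
    ∃ ρ' : G → Matrix (Fin n) (Fin n) V, (∀ g, (residue V).mapMatrix (ρ' g) = r g) ∧
      (∀ x y, ∃ D, ρ' (x * y) = ρ' x * ρ' y + π ^ (m + 2) • D) ∧
      ∀ x, ∃ a, ρ' x = ρ x + π ^ (m + 1) • a := by
  choose D hD using hm
  set t := π ^ (m + 1) with ht
  have ht0 : t ≠ 0 := pow_ne_zero _ hπ0
  have hrt : residue V t = 0 := by
    rw [residue_eq_zero_iff, hπ, Ideal.mem_span_singleton]
    exact dvd_pow_self _ (by omega)
  have hc : ∀ x y z, D x y * ρ z + D (x * y) z = ρ x * D y z + D x (y * z) := by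
    intro x y z
    have h1 := hD (x * y) z
    have h2 := hD x (y * z)
    rw [mul_assoc, h2, hD y z, hD x y] at h1
    have h3 : t • (D x y * ρ z + D (x * y) z) = t • (ρ x * D y z + D x (y * z)) := by
      simp only [add_mul, mul_add, smul_mul_assoc, mul_smul_comm, smul_add, mul_assoc] at h1 ⊢
      have := h1
      rw [add_assoc, add_assoc] at this
      exact (add_left_cancel this).symm
    exact smul_right_injective _ ht0 h3
  obtain ⟨a, ha⟩ := aux_cocycle hG r (fun x y => (residue V).mapMatrix (D x y)) (by
    intro x y z
    have := congrArg (residue V).mapMatrix (hc x y z)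
    simpa only [map_add, map_mul, hρ] using this)
  have hs : ∀ x, ∃ A, (residue V).mapMatrix A = a x := by
    intro x
    choose A hA using fun i j => residue_surjective (R := V) (a x i j)
    exact ⟨Matrix.of A, by ext i j; simp [hA]⟩
  choose A hA using hs
  have hsm : ∀ X : Matrix (Fin n) (Fin n) V, (residue V).mapMatrix (t • X) = 0 := by
    intro X; ext i j; simp [hrt]
  refine ⟨fun x => ρ x + t • A x, ?_, ?_, fun x => ⟨A x, rfl⟩⟩
  · intro g; rw [map_add, hsm, hρ, add_zero]
  · intro x y
    obtain ⟨Y, hY⟩ := aux_div π hπ (D x y + A (x * y) - A x * ρ y - ρ x * A y - t • (A x * A y)) (by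
      rw [map_sub, hsm, map_sub, map_sub, map_add, map_mul, map_mul, hA, hA, hA, hρ, hρ, ha]
      abel)
    refine ⟨Y, ?_⟩
    have : π ^ (m + 2) • Y = t • (D x y + A (x * y) - A x * ρ y - ρ x * A y - t • (A x * A y)) := by
      rw [hY, smul_smul, ht, ← pow_succ]
    rw [this]
    beta_reduce
    rw [hD]
    simp only [add_mul, mul_add, smul_mul_assoc, mul_smul_comm, smul_add, smul_sub]
    abel

lemma aux_lift [IsAdicComplete (maximalIdeal V) V] {G : Type*} [Group G] [Fintype G]
    (hG : (Fintype.card G : ResidueField V) ≠ 0)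
    (r : G →* Matrix (Fin n) (Fin n) (ResidueField V)) :
    ∃ τ : G →* Matrix (Fin n) (Fin n) V, ∀ g, (residue V).mapMatrix (τ g) = r g := by
  obtain ⟨π, hirr⟩ := IsDiscreteValuationRing.exists_irreducible V
  have hπ := hirr.maximalIdeal_eq
  have hπ0 := hirr.ne_zero
  have hs : ∀ X : Matrix (Fin n) (Fin n) (ResidueField V), ∃ A, (residue V).mapMatrix A = X := by
    intro x
    choose A hA using fun i j => residue_surjective (R := V) (x i j)
    exact ⟨Matrix.of A, by ext i j; simp [hA]⟩
  choose ρ0 hρ0 using fun g => hs (r g)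
  let P : ℕ → (G → Matrix (Fin n) (Fin n) V) → Prop := fun m ρ =>
    (∀ g, (residue V).mapMatrix (ρ g) = r g) ∧
      (∀ x y, ∃ D, ρ (x * y) = ρ x * ρ y + π ^ (m + 1) • D)
  have h0 : P 0 ρ0 := by
    refine ⟨hρ0, fun x y => ?_⟩
    obtain ⟨Y, hY⟩ := aux_div π hπ (ρ0 (x * y) - ρ0 x * ρ0 y) (by simp only [map_sub, map_mul, hρ0, sub_self])
    exact ⟨Y, by rw [zero_add, pow_one, ← hY]; abel⟩
  choose! nx hn1 hn2 hn3 using fun m ρ (h : P m ρ) => aux_step hG π hπ hπ0 r m ρ h.1 h.2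
  let s : ℕ → G → Matrix (Fin n) (Fin n) V := fun m => Nat.rec ρ0 (fun m ρ => nx m ρ) m
  have hs : ∀ m, P m (s m) := by
    intro m
    induction m with
    | zero => exact h0
    | succ m ih => exact ⟨hn1 m _ ih, hn2 m _ ih⟩
  have hstep : ∀ m x, ∃ a, s (m + 1) x = s m x + π ^ (m + 1) • a := fun m x => hn3 m _ (hs m) x
  have hpow : ∀ m, ((maximalIdeal V) ^ m • ⊤ : Submodule V V) = Ideal.span {π ^ m} := by
    intro m; rw [hπ, Ideal.span_singleton_pow]; simp
  have hcau : ∀ m l, m ≤ l → ∀ x i j, π ^ m ∣ s l x i j - s m x i j := by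
    intro m l hml x i j
    induction l, hml using Nat.le_induction with
    | base => simp
    | succ l hl ih =>
      obtain ⟨a, ha⟩ := hstep l x
      have e : s (l + 1) x i j - s m x i j = (s l x i j - s m x i j) + π ^ (l + 1) * a i j := by
        rw [ha]; simp; ring
      rw [e]
      exact dvd_add ih (Dvd.dvd.mul_right (pow_dvd_pow _ (by omega)) _)
  have hlim : ∀ x i j, ∃ L : V, ∀ m, π ^ m ∣ s m x i j - L := by
    intro x i j
    obtain ⟨L, hL⟩ := IsPrecomplete.prec' (I := maximalIdeal V) (M := V) (fun m => s m x i j) (by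
      intro m l hml
      rw [SModEq.sub_mem, hpow, Ideal.mem_span_singleton, ← dvd_neg, neg_sub]
      exact hcau m l hml x i j)
    refine ⟨L, fun m => ?_⟩
    have := hL m
    rwa [SModEq.sub_mem, hpow, Ideal.mem_span_singleton] at this
  choose L hL using hlim
  have hL' : ∀ x m, ∃ E, s m x = Matrix.of (L x) + π ^ m • E := by
    intro x m
    choose E hE using fun i j => hL x i j m
    refine ⟨Matrix.of E, ?_⟩
    ext i j
    simp [← hE]
  have hhaus : ∀ X : Matrix (Fin n) (Fin n) V, (∀ m, ∃ E, X = π ^ m • E) → X = 0 := by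
    intro X hX
    ext i j
    refine IsHausdorff.haus' (I := maximalIdeal V) _ fun m => ?_
    obtain ⟨E, hE⟩ := hX m
    rw [SModEq.sub_mem, hpow, Ideal.mem_span_singleton, sub_zero, hE]
    exact ⟨E i j, rfl⟩
  have hmul : ∀ x y, Matrix.of (L (x * y)) = Matrix.of (L x) * Matrix.of (L y) := by
    intro x y
    rw [← sub_eq_zero]
    refine hhaus _ fun m => ?_
    obtain ⟨E1, h1⟩ := hL' (x * y) m
    obtain ⟨E2, h2⟩ := hL' x m
    obtain ⟨E3, h3⟩ := hL' y m
    obtain ⟨D, h4⟩ := (hs m).2 x y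
    rw [← sub_eq_iff_eq_add] at h1 h2 h3
    rw [← h1, ← h2, ← h3, h4]
    refine ⟨π • D - E1 + s m x * E3 + E2 * s m y - π ^ m • (E2 * E3), ?_⟩
    simp only [sub_mul, mul_sub, smul_mul_assoc, mul_smul_comm, smul_add, smul_sub, smul_smul, pow_succ]
    abel
  have hres : ∀ x, (residue V).mapMatrix (Matrix.of (L x)) = r x := by
    intro x
    obtain ⟨E1, h1⟩ := hL' x 1
    rw [← (hs 1).1 x, h1, map_add]
    have : (residue V).mapMatrix (π ^ 1 • E1) = 0 := by
      have : residue V π = 0 := by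
        rw [residue_eq_zero_iff, hπ]; exact Ideal.mem_span_singleton_self _
      ext i j; simp [this]
    rw [this, add_zero]
  have hone : Matrix.of (L 1) = 1 := by
    have h1 := hmul 1 1
    rw [mul_one] at h1
    have hu : IsUnit (Matrix.of (L 1)) := by
      rw [Matrix.isUnit_iff_isUnit_det]
      by_contra hne
      have h2 : residue V (Matrix.of (L 1)).det = 0 := by
        rw [residue_eq_zero_iff]; exact hne
      rw [RingHom.map_det, hres, map_one, Matrix.det_one] at h2
      exact one_ne_zero h2
    exact hu.mul_left_cancel (by rw [← h1, mul_one])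
  exact ⟨{ toFun := fun x => Matrix.of (L x), map_one' := hone, map_mul' := hmul }, hres⟩

end lifting

lemma aux_val (p : ℕ) (hp : p.Prime) : ∃ A : ValuationSubring ℂ, ((p : ℂ)⁻¹) ∉ A := by
  let Z : Subring ℂ := (Int.castRingHom ℂ).range
  let I : Ideal Z := Ideal.span {(p : Z)}
  have hI : I ≠ ⊤ := by
    intro h
    rw [Ideal.span_singleton_eq_top] at h
    obtain ⟨⟨_, z, rfl⟩, hb⟩ := isUnit_iff_exists_inv.1 h
    have h2 : ((p : ℤ) * z : ℤ) = 1 := by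
      have := congrArg (Subtype.val) hb
      simp at this
      exact_mod_cast this
    have h3 : (p : ℤ) ∣ 1 := ⟨z, h2.symm⟩
    have : p ∣ 1 := by exact_mod_cast h3
    exact hp.one_lt.ne' (Nat.dvd_one.1 this)
  obtain ⟨B, -, hB⟩ := Ideal.image_subset_nonunits_valuationSubring I hI
  refine ⟨B, ?_⟩
  have h1 : (p : ℂ) ∈ B.nonunits := hB ⟨(p : Z), Ideal.mem_span_singleton_self _, by simp⟩
  rw [B.mem_nonunits_iff_or] at h1
  exact h1.resolve_left (by exact_mod_cast hp.ne_zero)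

lemma aux_field (p : ℕ) (hp : p.Prime) (k Q : Type*) [Field k] [IsAlgClosed k] [CharP k p]
    [Field Q] [CharP Q p] {R : Type*} [CommRing R] [Algebra.FiniteType ℤ R]
    (g : R →+* Q) (hg : Function.Surjective g) : Nonempty (Q →+* k) := by
  have : Algebra.FiniteType ℤ Q := Algebra.FiniteType.of_surjective g.toIntAlgHom hg
  have : Fact p.Prime := ⟨hp⟩
  let _ : Algebra (ZMod p) Q := ZMod.algebra _ p
  let _ : Algebra (ZMod p) k := ZMod.algebra _ p
  have : Algebra.FiniteType (ZMod p) Q := Algebra.FiniteType.of_restrictScalars_finiteType ℤ _ _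
  have : Module.Finite (ZMod p) Q := finite_of_finite_type_of_isJacobsonRing _ _
  let f : Q →ₐ[ZMod p] k := IsAlgClosed.lift
  exact ⟨f.toRingHom⟩

lemma aux_red (p : ℕ) (hp : p.Prime) (k : Type*) [Field k] [IsAlgClosed k] [CharP k p]
    (A : ValuationSubring ℂ) (hA : ((p : ℂ)⁻¹) ∉ A) (S : Set ℂ) (hS : S.Finite)
    (hSA : ∀ x ∈ S, x ∈ A) :
    ∃ R : Subalgebra ℤ ℂ, (∀ x ∈ S, x ∈ R) ∧ Nonempty (R →+* k) := by
  have : Fact p.Prime := ⟨hp⟩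
  let R := Algebra.adjoin ℤ S
  have hRA : ∀ x ∈ R, x ∈ A := by
    intro x hx
    induction hx using Algebra.adjoin_induction with
    | mem x hx => exact hSA x hx
    | algebraMap z => exact intCast_mem A z
    | add x y _ _ hx hy => exact add_mem hx hy
    | mul x y _ _ hx hy => exact mul_mem hx hy
  refine ⟨R, fun x hx => Algebra.subset_adjoin hx, ?_⟩
  have hft : Algebra.FiniteType ℤ R := by
    rw [← Subalgebra.fg_iff_finiteType]
    exact Subalgebra.fg_def.2 ⟨S, hS, rfl⟩
  let I : Ideal R := Ideal.span {(p : R)}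
  have hI : I ≠ ⊤ := by
    intro h
    rw [Ideal.span_singleton_eq_top] at h
    obtain ⟨b, hb⟩ := isUnit_iff_exists_inv.1 h
    have h2 : (p : ℂ) * b = 1 := by
      have := congrArg (Subtype.val) hb
      simpa using this
    rw [inv_eq_of_mul_eq_one_right h2] at hA
    exact hA (hRA _ b.2)
  obtain ⟨m, hm, hIm⟩ := I.exists_le_maximal hI
  let _ := Ideal.Quotient.field m
  have hpm : ((p : ℕ) : R ⧸ m) = 0 := by
    have : Ideal.Quotient.mk m (p : R) = 0 :=
      Ideal.Quotient.eq_zero_iff_mem.2 (hIm (Ideal.mem_span_singleton_self _))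
    simpa using this
  have : CharP (R ⧸ m) p := by
    refine ⟨fun x => ⟨fun hx => ?_, ?_⟩⟩
    · by_contra hnd
      have hc : IsCoprime (p : ℤ) (x : ℤ) :=
        Nat.isCoprime_iff_coprime.2 ((Nat.Prime.coprime_iff_not_dvd hp).2 hnd)
      obtain ⟨u, v, huv⟩ := hc
      have h1 := congrArg (Int.cast : ℤ → R ⧸ m) huv
      push_cast at h1
      rw [hx, hpm, mul_zero, mul_zero, add_zero] at h1
      exact zero_ne_one h1
    · rintro ⟨c, rfl⟩
      rw [Nat.cast_mul, hpm, zero_mul]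
  have hft2 : Algebra.FiniteType ℤ R := by
    convert hft
  obtain ⟨f⟩ := aux_field p hp k (R ⧸ m) (Ideal.Quotient.mk m) Ideal.Quotient.mk_surjective
  exact ⟨f.comp (Ideal.Quotient.mk m)⟩

/-- An invariant lattice. -/
lemma aux_lattice (A : ValuationSubring ℂ) {n : ℕ} (H : Subgroup (GL (Fin n) ℂ)) [Finite H] :
    ∃ b : Module.Basis (Fin n) ℂ (Fin n → ℂ), ∀ h ∈ H, ∀ i j,
      LinearMap.toMatrix b b (Matrix.toLin' (h : Matrix (Fin n) (Fin n) ℂ)) i j ∈ A := by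
  let s : Set (Fin n → ℂ) := Set.range fun q : H × Fin n =>
    Matrix.toLin' ((q.1 : GL (Fin n) ℂ) : Matrix (Fin n) (Fin n) ℂ) (Pi.single q.2 1)
  let L : Submodule A (Fin n → ℂ) := Submodule.span A s
  have hL : ∀ h ∈ H, ∀ v ∈ L, Matrix.toLin' (h : Matrix (Fin n) (Fin n) ℂ) v ∈ L := by
    intro h hh v hv
    induction hv using Submodule.span_induction with
    | mem v hv =>
      obtain ⟨⟨g, i⟩, rfl⟩ := hv
      refine Submodule.subset_span ⟨(⟨h, hh⟩ * g, i), ?_⟩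
      simp
    | zero => simp
    | add v w _ _ hv hw => rw [map_add]; exact L.add_mem hv hw
    | smul a v _ hv =>
      have : Matrix.toLin' (h : Matrix (Fin n) (Fin n) ℂ) (a • v) =
        a • Matrix.toLin' (h : Matrix (Fin n) (Fin n) ℂ) v :=
        map_smul (Matrix.toLin' (h : Matrix (Fin n) (Fin n) ℂ)) (a : ℂ) v
      rw [this]; exact L.smul_mem a hv
  have hfin : Module.Finite A L := Module.Finite.span_of_finite A (Set.finite_range _)
  have htf : Module.IsTorsionFree A L := inferInstance
  have hflat : Module.Flat A L := by
    rw [Module.Flat.flat_iff_torsion_eq_bot_of_isBezout, ← Submodule.isTorsionFree_iff_torsion_eq_bot]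
    exact htf
  have hfree : Module.Free A L := Module.free_of_flat_of_isLocalRing
  let c := Module.Free.chooseBasis A L
  let v : Module.Free.ChooseBasisIndex A L → (Fin n → ℂ) := fun i => (c i : Fin n → ℂ)
  have hli : LinearIndependent ℂ v := by
    rw [← LinearIndependent.iff_fractionRing A ℂ]
    exact c.linearIndependent.map' L.subtype (Submodule.ker_subtype L)
  have hLv : ∀ x ∈ L, x ∈ Submodule.span ℂ (Set.range v) := by
    intro x hx
    have := congrArg (L.subtype) (c.sum_repr ⟨x, hx⟩)
    rw [map_sum] at this
    simp only [map_smul, Submodule.subtype_apply] at this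
    rw [← this]
    exact Submodule.sum_mem _ fun i _ => 
      Submodule.smul_mem _ ((c.repr ⟨x, hx⟩ i : A) : ℂ) (Submodule.subset_span ⟨i, rfl⟩)
  have hsp : ⊤ ≤ Submodule.span ℂ (Set.range v) := by
    rw [← (Pi.basisFun ℂ (Fin n)).span_eq, Submodule.span_le]
    rintro _ ⟨i, rfl⟩
    refine hLv _ (Submodule.subset_span ⟨(1, i), ?_⟩)
    simp
  let b0 := Module.Basis.mk hli hsp
  let e := b0.indexEquiv (Pi.basisFun ℂ (Fin n))
  have hrepr : ∀ x ∈ L, ∀ i, b0.repr x i ∈ A := by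
    intro x hx i
    have := congrArg (L.subtype) (c.sum_repr ⟨x, hx⟩)
    rw [map_sum] at this
    simp only [map_smul, Submodule.subtype_apply] at this
    have h2 : x = ∑ i, ((c.repr ⟨x, hx⟩ i : A) : ℂ) • b0 i := by
      conv_lhs => rw [← this]
      refine Finset.sum_congr rfl fun i _ => ?_
      rw [Module.Basis.mk_apply]
      rfl
    rw [h2, b0.repr_sum_self]
    exact (c.repr ⟨x, hx⟩ i).2
  refine ⟨b0.reindex e, fun h hh i j => ?_⟩
  rw [LinearMap.toMatrix_apply, Module.Basis.repr_reindex_apply, Module.Basis.reindex_apply]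
  refine hrepr _ (hL h hh _ ?_) _
  rw [Module.Basis.mk_apply]
  exact (c _).2

lemma aux_main
    (V : Type) [CommRing V] [IsDomain V] [IsDiscreteValuationRing V]
    [IsAdicComplete (maximalIdeal V) V]
    (p : ℕ) (hp : p.Prime)
    [CharP (ResidueField V) p] [IsAlgClosed (ResidueField V)]
    (n : ℕ)
    (H : Subgroup (GL (Fin n) ℂ)) [Finite H] (hH : ¬ (p ∣ Nat.card H)) :
    ∃ G : Subgroup (GL (Fin n) V), Nonempty (H ≃* G) ∧
      ((∀ h ∈ H, Matrix.det (h : Matrix (Fin n) (Fin n) ℂ) = 1) →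
        ∀ g ∈ G, Matrix.det (g : Matrix (Fin n) (Fin n) V) = 1) := by
  have := Fintype.ofFinite H
  have hN : ((Nat.card H : ℕ) : ResidueField V) ≠ 0 := by
    rwa [Ne, CharP.cast_eq_zero_iff (ResidueField V) p]
  have hpow : ∀ h : H, h ^ Nat.card H = 1 := fun h => pow_card_eq_one'
  obtain ⟨A, hA⟩ := aux_val p hp
  obtain ⟨b, hb⟩ := aux_lattice A H
  let M : H → Matrix (Fin n) (Fin n) ℂ := fun h =>
    LinearMap.toMatrix b b (Matrix.toLin' ((h : GL (Fin n) ℂ) : Matrix (Fin n) (Fin n) ℂ))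
  have hM1 : M 1 = 1 := by simp [M]
  have hMm : ∀ x y, M (x * y) = M x * M y := by
    intro x y
    simp only [M, Subgroup.coe_mul, Units.val_mul, Matrix.toLin'_mul]
    rw [LinearMap.toMatrix_comp b b b]
  have hMinj : ∀ x, M x = 1 → x = 1 := by
    intro x hx
    rw [← hM1] at hx
    have h1 := (LinearMap.toMatrix b b).injective hx
    have h2 := Matrix.toLin'.injective h1
    exact Subtype.ext (Units.ext h2)
  have hMdet : ∀ x, (M x).det = ((x : GL (Fin n) ℂ) : Matrix (Fin n) (Fin n) ℂ).det := by
    intro x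
    rw [LinearMap.det_toMatrix, LinearMap.det_toLin']
  obtain ⟨R, hR, ⟨f⟩⟩ := aux_red p hp (ResidueField V) A hA
    (Set.range fun q : H × Fin n × Fin n => M q.1 q.2.1 q.2.2) (Set.finite_range _) (by
      rintro _ ⟨⟨h, i, j⟩, rfl⟩
      exact hb h h.2 i j)
  let ι : R →+* ℂ := R.val.toRingHom
  have hι : Function.Injective ι := Subtype.val_injective
  have hιM : Function.Injective (ι.mapMatrix (m := Fin n)) := Matrix.map_injective hι
  let r0 : H → Matrix (Fin n) (Fin n) R := fun h => Matrix.of fun i j =>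
    ⟨M h i j, hR _ ⟨(h, i, j), rfl⟩⟩
  have hr0 : ∀ h, ι.mapMatrix (r0 h) = M h := fun h => rfl
  let r : H →* Matrix (Fin n) (Fin n) R :=
    { toFun := r0
      map_one' := hιM (by rw [hr0, hM1, map_one])
      map_mul' := fun x y => hιM (by rw [map_mul, hr0, hr0, hr0, hMm]) }
  let rb : H →* Matrix (Fin n) (Fin n) (ResidueField V) :=
    (f.mapMatrix (m := Fin n)).toMonoidHom.comp r
  have hrb : ∀ x, rb x = 1 → x = 1 := by
    intro x hx
    have h1 : r x = 1 := aux_matrix_inj f (r x) (Nat.card H)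
      (by rw [← map_pow, hpow, map_one]) hN hx
    apply hMinj
    rw [← hr0]
    change ι.mapMatrix (r x) = 1
    rw [h1, map_one]
  obtain ⟨τ, hτ⟩ := aux_lift (V := V) (by rwa [← Nat.card_eq_fintype_card]) rb
  have hτinj : Function.Injective τ.toHomUnits := by
    rw [injective_iff_map_eq_one]
    intro x hx
    apply hrb
    have : τ x = 1 := by
      have := congrArg Units.val hx
      simpa using this
    rw [← hτ, this, map_one]
  refine ⟨τ.toHomUnits.range, ⟨MonoidHom.ofInjective hτinj⟩, ?_⟩
  rintro hdet _ ⟨x, rfl⟩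
  rw [MonoidHom.coe_toHomUnits]
  refine aux_elt_inj (residue V) _ (Nat.card H) ?_ hN ?_
  · rw [← Matrix.det_pow, ← map_pow, hpow, map_one, Matrix.det_one]
  · have h1 : (r x).det = 1 := by
      apply hι
      rw [RingHom.map_det, map_one]
      change (M x).det = 1
      rw [hMdet]
      exact hdet x x.2
    rw [RingHom.map_det, hτ]
    change (f.mapMatrix (r x)).det = 1
    rw [← RingHom.map_det, h1, map_one]

/-- Let `(V,π)` be a complete DVR of characteristic zero whose residue field is
algebraically closed of characteristic `p > 0`, let `n ≥ 1` and let `H` be a finite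
subgroup of `GL_n(ℂ)` with `p ∤ |H|`.  Then there is a finite subgroup `G` of
`GL_n(V)` isomorphic to `H` as an abstract group; moreover if `H ⊆ SL_n(ℂ)` then `G`
can be chosen inside `SL_n(V)` (i.e. all its elements have determinant one). -/
theorem lift_finite_complex_linear_group_to_DVR
    (V : Type) [CommRing V] [IsDomain V] [IsDiscreteValuationRing V] [CharZero V]
    [IsAdicComplete (maximalIdeal V) V]
    (p : ℕ) (hp : p.Prime)
    [CharP (ResidueField V) p] [IsAlgClosed (ResidueField V)]
    (n : ℕ) (hn : 1 ≤ n)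
    (H : Subgroup (GL (Fin n) ℂ)) [Finite H] (hH : ¬ (p ∣ Nat.card H)) :
    (∃ G : Subgroup (GL (Fin n) V), Nonempty (H ≃* G)) ∧
    ((∀ h ∈ H, Matrix.det (h : Matrix (Fin n) (Fin n) ℂ) = 1) →
      ∃ G : Subgroup (GL (Fin n) V), Nonempty (H ≃* G) ∧
        ∀ g ∈ G, Matrix.det (g : Matrix (Fin n) (Fin n) V) = 1) := by
  obtain ⟨G, h1, h2⟩ := aux_main V p hp n H hH
  exact ⟨⟨G, h1⟩, fun h => ⟨G, h1, h2 h⟩⟩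
end

section
/- Let (V,π) be a complete discrete valuation ring of characteristic zero whose residue field k = V/(π) is algebraically closed of characteristic p > 0, and let G ⊆ GL₂(V) be a finite subgroup with p ∤ |G| having no pseudo-reflections except the identity, acting linearly on S = V[[x₁,x₂]]. Then every height-one prime of S^G is unramified in S; equivalently, for every height-one prime ideal 𝔟 of S, the inertia group T_𝔟 = {σ ∈ G : σ(a) − a ∈ 𝔟 for all a ∈ S} is trivial, i.e., if σ ∈ G satisfies σ(a) − a ∈ 𝔟 for all a ∈ S then σ = 1. -/
open MvPowerSeries IsLocalRing

theorem rank_le_one_of_det_zero {K : Type*} [Field K] (A : Matrix (Fin 2) (Fin 2) K)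
    (h : A.det = 0) : A.rank ≤ 1 := by
  by_contra hr
  have h2 : A.rank ≤ 2 := A.rank_le_width
  have h3 : A.rank = 2 := by omega
  have htop : LinearMap.range A.mulVecLin = ⊤ := by
    apply Submodule.eq_top_of_finrank_eq
    rw [Module.finrank_fin_fun]
    exact h3
  have hs : Function.Surjective A.mulVec := fun v => by
    obtain ⟨w, hw⟩ := LinearMap.range_eq_top.mp htop v
    exact ⟨w, hw⟩
  have hu := (Matrix.isUnit_iff_isUnit_det A).mp (Matrix.mulVec_surjective_iff_isUnit.mp hs)
  exact hu.ne_zero h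

/-- Let `(V,π)` be a complete DVR of characteristic zero with algebraically closed
residue field `k` of characteristic `p > 0`, and let `G ⊆ GL₂(V)` be a finite
subgroup with `p ∤ |G|`, acting linearly on `S = V[[x₁,x₂]]` (each `σ ∈ G` fixes the
coefficient ring `V` and sends `xᵢ` to the corresponding linear form), and having no
pseudo-reflections except the identity (for `σ ≠ 1` the reduction of `σ` mod `π`
satisfies `rank(σ̄ − 1) > 1`).  Then every height-one prime `𝔟` of `S` has trivial
inertia group: if `σ ∈ G` satisfies `σ(a) − a ∈ 𝔟` for all `a ∈ S`, then `σ = 1`.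
(Hence height-one primes of `S^G` are unramified in `S`.) -/
theorem inertia_trivial_of_no_pseudoreflections
    (V : Type) [CommRing V] [IsDomain V] [IsDiscreteValuationRing V] [CharZero V]
    [IsAdicComplete (maximalIdeal V) V]
    (p : ℕ) (hp : p.Prime)
    [CharP (ResidueField V) p] [IsAlgClosed (ResidueField V)]
    (G : Subgroup (GL (Fin 2) V)) [Finite G] (hG : ¬ (p ∣ Nat.card G))
    [MulSemiringAction G (MvPowerSeries (Fin 2) V)]
    (hlin : ∀ (σ : G) (i : Fin 2),
      σ • (X i : MvPowerSeries (Fin 2) V) =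
        ∑ j : Fin 2, C (σ := Fin 2) (R := V) (((σ : GL (Fin 2) V) : Matrix (Fin 2) (Fin 2) V) j i) * X j)
    (hconst : ∀ (σ : G) (v : V),
      σ • (C (σ := Fin 2) (R := V) v) = C (σ := Fin 2) (R := V) v)
    (hpr : ∀ σ : G, σ ≠ 1 →
      ¬ Matrix.rank
          ((((σ : GL (Fin 2) V) : Matrix (Fin 2) (Fin 2) V)).map (residue V) - 1) ≤ 1) :
    ∀ 𝔟 : Ideal (MvPowerSeries (Fin 2) V), 𝔟.IsPrime → 𝔟 ≠ ⊥ →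
      (∀ Q : Ideal (MvPowerSeries (Fin 2) V), Q.IsPrime → Q < 𝔟 → Q = ⊥) →
      ∀ σ : G, (∀ a : MvPowerSeries (Fin 2) V, σ • a - a ∈ 𝔟) → σ = 1 := by
  intro 𝔟 hb _ hmin σ hσ
  by_contra hne
  set M : Matrix (Fin 2) (Fin 2) V := ((σ : GL (Fin 2) V) : Matrix (Fin 2) (Fin 2) V) with hM
  have hdet : IsUnit ((M - 1).det) := by
    by_contra hu
    apply hpr σ hne
    apply rank_le_one_of_det_zero
    have h1 : M.map (residue V) - 1 = (residue V).mapMatrix (M - 1) := by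
      rw [map_sub, map_one]; rfl
    rw [← hM, h1, ← RingHom.map_det]
    exact (residue_eq_zero_iff _).mpr ((mem_maximalIdeal _).mpr hu)
  have e0 := hσ (X 0)
  have e1 := hσ (X 1)
  rw [hlin, Fin.sum_univ_two, ← hM] at e0 e1
  have hd : (M - 1).det = (M 0 0 - 1) * (M 1 1 - 1) - M 0 1 * M 1 0 := by
    rw [Matrix.det_fin_two]; simp
  have hCu : IsUnit (C (σ := Fin 2) (R := V) (M - 1).det) := hdet.map _
  have m0 : (X 0 : MvPowerSeries (Fin 2) V) ∈ 𝔟 := by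
    rw [← Ideal.unit_mul_mem_iff_mem 𝔟 hCu]
    convert 𝔟.sub_mem (𝔟.mul_mem_left (C (M 1 1 - 1)) e0) (𝔟.mul_mem_left (C (M 1 0)) e1) using 1
    rw [hd]; simp only [map_sub, map_mul, map_one]; ring
  have m1 : (X 1 : MvPowerSeries (Fin 2) V) ∈ 𝔟 := by
    rw [← Ideal.unit_mul_mem_iff_mem 𝔟 hCu]
    convert 𝔟.sub_mem (𝔟.mul_mem_left (C (M 0 0 - 1)) e1) (𝔟.mul_mem_left (C (M 0 1)) e0) using 1
    rw [hd]; simp only [map_sub, map_mul, map_one]; ring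
  have hX : Prime (X 0 : MvPowerSeries (Fin 2) V) := by
    rw [← MulEquiv.prime_iff (finSuccEquiv V 1), finSuccEquiv_X_zero]
    haveI : IsDomain (MvPowerSeries (Fin 1) V) := NoZeroDivisors.to_isDomain _
    exact PowerSeries.X_prime
  have hlt : Ideal.span {(X 0 : MvPowerSeries (Fin 2) V)} < 𝔟 := by
    refine lt_of_le_of_ne ((Ideal.span_singleton_le_iff_mem _).mpr m0) ?_
    intro h
    rw [← h, Ideal.mem_span_singleton, X_dvd_iff] at m1
    have := m1 (Finsupp.single 1 1) (by simp)
    rw [coeff_index_single_self_X] at this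
    exact one_ne_zero this
  have := hmin _ ((Ideal.span_singleton_prime hX.ne_zero).mpr hX) hlt
  exact hX.ne_zero (Ideal.span_singleton_eq_bot.mp this)
end

section
/- Let (V,π) be a complete discrete valuation ring of characteristic zero whose residue field k = V/(π) is algebraically closed of characteristic p > 0, and let G ⊆ GL₂(V) be a finite subgroup with p ∤ |G| having no pseudo-reflections except the identity, acting linearly on S = V[[x₁,x₂]]. Let θ = π − g where g ∈ (x₁,x₂)² ∩ S^G (g = 0 allowed), and set B = S^G/(θ). Then for all L₁, L₂ ∈ add_{S^G}(S), the natural map induces an isomorphism Hom_B(L₁/θL₁, L₂/θL₂) ≅ Hom_{S^G}(L₁,L₂)/θ·Hom_{S^G}(L₁,L₂). -/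
/-- `M ∈ add_A(S)`: `M` is (isomorphic to) a direct summand of a finite direct sum of
copies of `S`, as an `A`-module. -/
def MemAdd (A : Type*) [CommRing A] (S : Type*) [AddCommGroup S] [Module A S]
    (M : Type*) [AddCommGroup M] [Module A M] : Prop :=
  ∃ (n : ℕ) (N N' : Submodule A (Fin n → S)), IsCompl N N' ∧ Nonempty (M ≃ₗ[A] N)

open MvPowerSeries IsLocalRing


section Aux
open scoped TensorProduct

variable {G S : Type*} [Group G] [CommRing S] [MulSemiringAction G S]

/-- the ring map `a ⊗ b ↦ a * σ b` -/
noncomputable def mTau (σ : G) : S ⊗[ℤ] S →ₐ[ℤ] S :=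
  Algebra.TensorProduct.lift (AlgHom.id ℤ S) ((MulSemiringAction.toRingHom G S σ).toIntAlgHom)
    (fun _ _ => Commute.all _ _)

theorem mTau_tmul (σ : G) (a b : S) : mTau σ (a ⊗ₜ[ℤ] b) = a * σ • b := by
  simp [mTau]

theorem exists_sep (σ : G) (x : S) (hx : x ∈ Ideal.span (Set.range fun b : S => b - σ • b)) :
    ∃ e : S ⊗[ℤ] S, mTau (1 : G) e = x ∧ mTau σ e = 0 := by
  induction hx using Submodule.span_induction with
  | mem x h =>
    obtain ⟨b, rfl⟩ := h
    refine ⟨1 ⊗ₜ b - (σ • b) ⊗ₜ 1, ?_, ?_⟩ <;> simp [mTau_tmul]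
  | zero => exact ⟨0, by simp, by simp⟩
  | add x y _ _ hx hy =>
    obtain ⟨e, h1, h2⟩ := hx
    obtain ⟨e', h1', h2'⟩ := hy
    exact ⟨e + e', by simp [h1, h1'], by simp [h2, h2']⟩
  | smul a x _ hx =>
    obtain ⟨e, h1, h2⟩ := hx
    exact ⟨(a ⊗ₜ 1) * e, by simp [mTau_tmul, h1], by simp [h2]⟩

theorem exists_dual [Fintype G] [DecidableEq G] (x : S)
    (hx : ∀ σ : G, σ ≠ 1 → x ∈ Ideal.span (Set.range fun b : S => b - σ • b)) :
    ∃ s : Finset (S × S), ∀ τ : G, ∑ i ∈ s, i.1 * τ • i.2 =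
      if τ = 1 then x ^ (Fintype.card G - 1) else 0 := by
  have h : ∀ σ : G, ∃ e : S ⊗[ℤ] S, σ ≠ 1 → mTau (1 : G) e = x ∧ mTau σ e = 0 := by
    intro σ
    by_cases hσ : σ = 1
    · exact ⟨0, fun h => absurd hσ h⟩
    · obtain ⟨e, he⟩ := exists_sep σ x (hx σ hσ)
      exact ⟨e, fun _ => he⟩
  choose e he using h
  obtain ⟨s, hs⟩ := TensorProduct.exists_finset (∏ σ ∈ Finset.univ.erase (1 : G), e σ)
  refine ⟨s, fun τ => ?_⟩
  have h1 : mTau τ (∏ σ ∈ Finset.univ.erase (1 : G), e σ) = ∑ i ∈ s, i.1 * τ • i.2 := by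
    rw [hs, map_sum]
    exact Finset.sum_congr rfl fun i _ => mTau_tmul τ _ _
  rw [← h1, map_prod]
  split_ifs with hτ
  · subst hτ
    rw [Finset.prod_congr rfl (fun σ hσ => (he σ (Finset.ne_of_mem_erase hσ)).1)]
    simp [Finset.card_erase_of_mem]
  · exact Finset.prod_eq_zero (Finset.mem_erase.2 ⟨hτ, Finset.mem_univ _⟩) (he τ hτ).2

/-- Auslander-type statement, modulo an invariant element. -/
theorem auslander_mod [Fintype G] (θ : fixedSubring G S) (x y : S)
    (hx : ∀ σ : G, σ ≠ 1 → x ∈ Ideal.span (Set.range fun b : S => b - σ • b))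
    (hy : ∀ σ : G, σ ≠ 1 → y ∈ Ideal.span (Set.range fun b : S => b - σ • b))
    (h2 : ∀ s : S, (θ : S) ∣ s * x → (θ : S) ∣ s)
    (h3 : ∀ (N : ℕ) (s t : S), (θ : S) ∣ s * y ^ N - t * x ^ N → ∃ u, (θ : S) ∣ s - u * x ^ N)
    (φ : S →+ S ⧸ Ideal.span {(θ : S)})
    (hφ : ∀ (r : fixedSubring G S) (s : S), φ (r * s) = Ideal.Quotient.mk _ (r : S) * φ s) :
    ∃ u : G → S, ∀ t, φ t = Ideal.Quotient.mk _ (∑ τ : G, u τ * τ • t) := by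
  classical
  set q := Ideal.Quotient.mk (Ideal.span {(θ : S)}) with hq
  have q0 : ∀ s, q s = 0 ↔ (θ : S) ∣ s := fun s => by
    rw [hq, Ideal.Quotient.eq_zero_iff_mem, Ideal.mem_span_singleton]
  have hθG : ∀ (σ : G) (s : S), (θ : S) ∣ s → (θ : S) ∣ σ • s := by
    rintro σ s ⟨c, rfl⟩
    exact ⟨σ • c, by rw [smul_mul', θ.2 σ]⟩
  set N := Fintype.card G - 1 with hN
  have h2' : ∀ (n : ℕ) (σ : G) (s : S), q (s * σ • x ^ n) = 0 → q s = 0 := by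
    intro n σ s h
    rw [q0] at h ⊢
    have h := hθG σ⁻¹ _ h
    rw [smul_mul', inv_smul_smul] at h
    have : ∀ n : ℕ, ∀ s, (θ : S) ∣ s * x ^ n → (θ : S) ∣ s := by
      intro n
      induction n with
      | zero => intro s; simp
      | succ n ih =>
        intro s hs
        rw [pow_succ, ← mul_assoc] at hs
        exact ih _ (h2 _ hs)
    have h := hθG σ _ (this n _ h)
    rwa [smul_inv_smul] at h
  -- traces
  have key : ∀ z : S, (∀ σ : G, σ ≠ 1 → z ∈ Ideal.span (Set.range fun b : S => b - σ • b)) →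
      ∃ s : G → S, ∀ t, φ (z ^ N * t) = q (∑ τ : G, s τ * τ • t) := by
    intro z hz
    obtain ⟨I, hI⟩ := exists_dual z hz
    have lift : ∀ a : S, ∃ b : S, q b = φ a := fun a => Ideal.Quotient.mk_surjective _
    choose l hl using lift
    refine ⟨fun τ => ∑ i ∈ I, l i.1 * τ • i.2, fun t => ?_⟩
    have e1 : z ^ N * t = ∑ i ∈ I, (∑ τ : G, τ • (i.2 * t)) * i.1 := by
      calc z ^ N * t = ∑ τ : G, (∑ i ∈ I, i.1 * τ • i.2) * τ • t := by
            simp only [hI]; simp [hN]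
        _ = _ := by
            simp only [Finset.sum_mul]
            rw [Finset.sum_comm]
            refine Finset.sum_congr rfl fun i _ => Finset.sum_congr rfl fun τ _ => ?_
            rw [smul_mul']; ring
    have tr : ∀ b : S, (∑ τ : G, τ • b) ∈ fixedSubring G S := by
      intro b σ
      rw [Finset.smul_sum]
      exact Fintype.sum_equiv (Equiv.mulLeft σ) _ _ (fun τ => by simp [mul_smul])
    rw [e1, map_sum]
    have e2 : ∀ i ∈ I, φ ((∑ τ : G, τ • (i.2 * t)) * i.1) = q ((∑ τ : G, τ • (i.2 * t)) * l i.1) := by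
      intro i _
      have := hφ ⟨_, tr (i.2 * t)⟩ i.1
      rw [q.map_mul, hl]
      exact this
    rw [Finset.sum_congr rfl e2, ← map_sum]
    congr 1
    simp only [Finset.sum_mul]
    rw [Finset.sum_comm]
    refine Finset.sum_congr rfl fun i _ => Finset.sum_congr rfl fun τ _ => ?_
    rw [smul_mul']; ring
  -- independence
  have indep : ∀ c : G → S, (∀ t, q (∑ τ : G, c τ * τ • t) = 0) → ∀ σ, q (c σ) = 0 := by
    intro c hc σ
    obtain ⟨I, hI⟩ := exists_dual x hx
    apply h2' N σ
    have : c σ * σ • x ^ N = ∑ i ∈ I, σ • i.1 * (∑ τ : G, c τ * τ • i.2) := by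
      calc c σ * σ • x ^ N = ∑ τ : G, c τ * σ • (∑ i ∈ I, i.1 * (σ⁻¹ * τ) • i.2) := by
            simp only [hI]
            rw [Finset.sum_eq_single σ]
            · simp [hN]
            · intro τ _ hτ
              have : σ⁻¹ * τ ≠ 1 := fun h => hτ (inv_mul_eq_one.1 h).symm
              simp [this]
            · simp
        _ = _ := by
            simp only [Finset.smul_sum, Finset.mul_sum]
            rw [Finset.sum_comm]
            refine Finset.sum_congr rfl fun i _ => Finset.sum_congr rfl fun τ _ => ?_
            rw [smul_mul', smul_smul, mul_inv_cancel_left]; ring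
    rw [this, map_sum]
    exact Finset.sum_eq_zero fun i _ => by rw [map_mul, hc, mul_zero]
  obtain ⟨s, hs⟩ := key x hx
  obtain ⟨s', hs'⟩ := key y hy
  have hu : ∀ τ : G, ∃ u, q (s τ) = q (u * τ • x ^ N) := by
    intro τ
    have := indep (fun τ => s τ * τ • y ^ N - s' τ * τ • x ^ N) (by
      intro t
      have e1 := hs (y ^ N * t)
      have e2 := hs' (x ^ N * t)
      rw [mul_left_comm, e1] at e2
      rw [← sub_eq_zero, ← map_sub, ← Finset.sum_sub_distrib] at e2
      rw [← e2]
      congr 1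
      refine Finset.sum_congr rfl fun τ _ => ?_
      rw [smul_mul', smul_mul']; ring) τ
    rw [q0] at this
    have := hθG τ⁻¹ _ this
    rw [smul_sub, smul_mul', smul_mul', inv_smul_smul, inv_smul_smul] at this
    obtain ⟨u, hu⟩ := h3 _ _ _ this
    refine ⟨τ • u, ?_⟩
    rw [← sub_eq_zero, ← map_sub, q0]
    have := hθG τ _ hu
    rwa [smul_sub, smul_mul', smul_inv_smul] at this
  choose u hu using hu
  refine ⟨u, fun t => ?_⟩
  have e1 : ∀ t, φ (x ^ N * t) = q (∑ τ : G, u τ * τ • (x ^ N * t)) := by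
    intro t
    rw [hs, map_sum, map_sum]
    refine Finset.sum_congr rfl fun τ _ => ?_
    rw [map_mul, hu, ← map_mul, smul_mul', mul_assoc]
  -- norm
  have hn : (∏ σ : G, σ • x ^ N) ∈ fixedSubring G S := by
    intro σ
    rw [Finset.smul_prod']
    exact Fintype.prod_equiv (Equiv.mulLeft σ) _ _ (fun τ => by simp [mul_smul])
  obtain ⟨w, hw⟩ : x ^ N ∣ ∏ σ : G, σ • x ^ N := by
    have := Finset.dvd_prod_of_mem (fun σ : G => σ • x ^ N) (Finset.mem_univ 1)
    simpa using this
  obtain ⟨d, hd⟩ : ∃ d, q d = φ t := Ideal.Quotient.mk_surjective _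
  have e2 := hφ ⟨_, hn⟩ t
  have e3 : φ ((∏ σ : G, σ • x ^ N) * t) = q ((∏ σ : G, σ • x ^ N) * ∑ τ : G, u τ * τ • t) := by
    conv_lhs => rw [hw, mul_assoc, e1, ← mul_assoc, ← hw]
    congr 1
    rw [Finset.mul_sum]
    refine Finset.sum_congr rfl fun τ _ => ?_
    rw [smul_mul', hn τ]; ring
  have e4 : q ((d - ∑ τ : G, u τ * τ • t) * ∏ σ : G, σ • x ^ N) = 0 := by
    rw [e3] at e2
    simp only at e2
    rw [← hd, ← map_mul, ← sub_eq_zero, ← map_sub, ← neg_eq_zero, ← map_neg] at e2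
    rw [← e2]
    congr 1; ring
  have e5 : ∀ (J : Finset G) (s : S), q (s * ∏ σ ∈ J, σ • x ^ N) = 0 → q s = 0 := by
    intro J
    induction J using Finset.induction_on with
    | empty => intro s; simp
    | insert a J ha ih =>
      intro s hs
      rw [Finset.prod_insert ha, ← mul_assoc] at hs
      exact h2' _ _ _ (ih _ hs)
  have e6 := e5 _ _ e4
  rw [map_sub, sub_eq_zero] at e6
  rw [← hd, e6]

end Aux

section PS

variable {V : Type*} [CommRing V] [IsDomain V]

theorem X_dvd_iff_order (i : Fin 2) (f : MvPowerSeries (Fin 2) V) :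
    (X i : MvPowerSeries (Fin 2) V) ∣ f ↔ f.weightedOrder (Pi.single i 1) ≠ 0 := by
  have hw : ∀ m : Fin 2 →₀ ℕ, Finsupp.weight (Pi.single i 1 : Fin 2 → ℕ) m = m i := by
    intro m
    simp [Finsupp.weight_apply, Finsupp.sum_fintype, Pi.single_apply]
  rw [X_dvd_iff]
  constructor
  · intro h h0
    have := (weightedOrder_eq_nat (Pi.single i 1) (f := f) (n := 0)).1 (by simpa using h0)
    obtain ⟨⟨d, hd, hd'⟩, -⟩ := this
    rw [hw] at hd'
    exact hd (h d hd')
  · intro h m hm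
    apply coeff_eq_zero_of_lt_weightedOrder (Pi.single i 1)
    rw [hw, hm]
    exact pos_iff_ne_zero.2 h

theorem X_prime_aux (i : Fin 2) (f g : MvPowerSeries (Fin 2) V)
    (h : (X i : MvPowerSeries (Fin 2) V) ∣ f * g) : X i ∣ f ∨ X i ∣ g := by
  simp only [X_dvd_iff_order, weightedOrder_mul] at *
  by_contra! H
  exact h (by simp [H.1, H.2])

theorem X_dvd_of_const (i : Fin 2) (f g : MvPowerSeries (Fin 2) V) (hf : constantCoeff f ≠ 0)
    (h : (X i : MvPowerSeries (Fin 2) V) ∣ f * g) : X i ∣ g := by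
  rcases X_prime_aux i f g h with ⟨c, rfl⟩ | h
  · simp at hf
  · exact h

theorem X_dvd_of_X_mul (i j : Fin 2) (hij : i ≠ j) (g : MvPowerSeries (Fin 2) V)
    (h : (X i : MvPowerSeries (Fin 2) V) ∣ X j * g) : X i ∣ g := by
  rcases X_prime_aux i _ g h with h | h
  · exfalso
    rw [X_dvd_iff] at h
    have := h (Finsupp.single j 1) (by simp [hij.symm])
    simp at this
  · exact h

theorem exists_of_const_zero (f : MvPowerSeries (Fin 2) V) (hf : constantCoeff f = 0) :
    ∃ a b, f = X 0 * a + X 1 * b := by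
  classical
  let f0 : MvPowerSeries (Fin 2) V := fun m => if m 1 = 0 then coeff m f else 0
  have c0 : ∀ m, coeff m f0 = if m 1 = 0 then coeff m f else 0 := fun m => rfl
  have h0 : (X 0 : MvPowerSeries (Fin 2) V) ∣ f0 := by
    rw [X_dvd_iff]
    intro m hm
    rw [c0]
    split_ifs with h
    · have : m = 0 := by ext k; fin_cases k <;> simp [hm, h]
      rw [this]; simpa using hf
    · rfl
  have h1 : (X 1 : MvPowerSeries (Fin 2) V) ∣ f - f0 := by
    rw [X_dvd_iff]
    intro m hm
    rw [map_sub, c0, if_pos hm, sub_self]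
  obtain ⟨a, ha⟩ := h0
  obtain ⟨b, hb⟩ := h1
  exact ⟨a, b, by rw [← ha, ← hb]; ring⟩

theorem regA (θ : MvPowerSeries (Fin 2) V) (hθ : constantCoeff θ ≠ 0) (N : ℕ) :
    ∀ b a c, θ * b = X 0 ^ N * a + X 1 * c → ∃ b' b'', b = X 0 ^ N * b' + X 1 * b'' := by
  induction N with
  | zero => intro b a c _; exact ⟨b, 0, by simp⟩
  | succ N ih =>
    intro b a c h
    have hb : constantCoeff b = 0 := by
      have := congrArg (constantCoeff) h
      simp at this
      exact this.resolve_left hθ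
    obtain ⟨b1, b2, rfl⟩ := exists_of_const_zero b hb
    have h1 : (X 1 : MvPowerSeries (Fin 2) V) ∣ X 0 * (θ * b1 - X 0 ^ N * a) :=
      ⟨c - θ * b2, by linear_combination h⟩
    obtain ⟨d, hd⟩ := X_dvd_of_X_mul 1 0 (by decide) _ h1
    obtain ⟨e, e', rfl⟩ := ih b1 a d (by linear_combination hd)
    exact ⟨e, X 0 * e' + b2, by ring⟩

theorem regB (θ : MvPowerSeries (Fin 2) V) (hθ : constantCoeff θ ≠ 0) (N M : ℕ) :
    ∀ s a b, s * X 1 ^ M = X 0 ^ N * a + θ * b → ∃ a' b', s = X 0 ^ N * a' + θ * b' := by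
  induction M with
  | zero => intro s a b h; exact ⟨a, b, by simpa using h⟩
  | succ M ih =>
    intro s a b h
    obtain ⟨b', b'', rfl⟩ := regA θ hθ N b (-a) (s * X 1 ^ M) (by linear_combination -h)
    have h1 : ∀ n : ℕ, ∀ f : MvPowerSeries (Fin 2) V, X 1 ∣ X 0 ^ n * f → X 1 ∣ f := by
      intro n
      induction n with
      | zero => intro f; simp
      | succ n ihn =>
        intro f hf
        rw [pow_succ, mul_assoc] at hf
        exact X_dvd_of_X_mul 1 0 (by decide) _ (ihn _ hf)
    obtain ⟨d, hd⟩ := h1 N (a + θ * b') ⟨s * X 1 ^ M - θ * b'', by linear_combination -h⟩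
    have hX : (X 1 : MvPowerSeries (Fin 2) V) ≠ 0 := by
      intro h0
      have := congrArg (coeff (Finsupp.single (1 : Fin 2) 1)) h0
      simp at this
    apply ih s d b''
    apply mul_left_cancel₀ hX
    linear_combination h + X 0 ^ N * hd

end PS

section Add

variable {A : Type*} [CommRing A]

/-- Maps which are linear modulo `θ` lift to linear maps. -/
def LiftP (θ : A) (L₁ L₂ : Type*) [AddCommGroup L₁] [AddCommGroup L₂] [Module A L₁] [Module A L₂] :
    Prop :=
  ∀ φ : L₁ → L₂, (∀ x y, ∃ z, φ (x + y) = φ x + φ y + θ • z) →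
    (∀ (r : A) x, ∃ z, φ (r • x) = r • φ x + θ • z) →
    ∃ f : L₁ →ₗ[A] L₂, ∀ x, ∃ z, φ x = f x + θ • z

variable {θ : A} {L L₁ L₂ : Type*} [AddCommGroup L] [Module A L]
  [AddCommGroup L₁] [AddCommGroup L₂] [Module A L₁] [Module A L₂]

theorem LiftP.retract_right (h : LiftP θ L L₁) (i : L₂ →ₗ[A] L₁) (p : L₁ →ₗ[A] L₂)
    (hpi : ∀ x, p (i x) = x) : LiftP θ L L₂ := by
  intro φ hadd hsmul
  obtain ⟨f, hf⟩ := h (fun x => i (φ x))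
    (fun x y => by obtain ⟨z, hz⟩ := hadd x y; exact ⟨i z, by simp [hz]⟩)
    (fun r x => by obtain ⟨z, hz⟩ := hsmul r x; exact ⟨i z, by simp [hz]⟩)
  refine ⟨p ∘ₗ f, fun x => ?_⟩
  obtain ⟨z, hz⟩ := hf x
  exact ⟨p z, by rw [← hpi (φ x), hz]; simp⟩

theorem LiftP.retract_left (h : LiftP θ L₁ L) (i : L₂ →ₗ[A] L₁) (p : L₁ →ₗ[A] L₂)
    (hpi : ∀ x, p (i x) = x) : LiftP θ L₂ L := by
  intro φ hadd hsmul
  obtain ⟨f, hf⟩ := h (fun x => φ (p x))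
    (fun x y => by obtain ⟨z, hz⟩ := hadd (p x) (p y); exact ⟨z, by simp [hz]⟩)
    (fun r x => by obtain ⟨z, hz⟩ := hsmul r (p x); exact ⟨z, by simp [hz]⟩)
  refine ⟨f ∘ₗ i, fun x => ?_⟩
  obtain ⟨z, hz⟩ := hf (i x)
  exact ⟨z, by rw [hpi] at hz; simpa using hz⟩

theorem LiftP.pi_right (h : LiftP θ L L₁) (n : ℕ) : LiftP θ L (Fin n → L₁) := by
  intro φ hadd hsmul
  have := fun j : Fin n => h (fun x => φ x j)
    (fun x y => by obtain ⟨z, hz⟩ := hadd x y; exact ⟨z j, by simp [hz]⟩)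
    (fun r x => by obtain ⟨z, hz⟩ := hsmul r x; exact ⟨z j, by simp [hz]⟩)
  choose f z hz using this
  exact ⟨LinearMap.pi f, fun x => ⟨fun j => z j x, by ext j; simpa using hz j x⟩⟩

theorem LiftP.pi_left (h : LiftP θ L₁ L) (n : ℕ) : LiftP θ (Fin n → L₁) L := by
  intro φ hadd hsmul
  have := fun j : Fin n => h (fun x => φ (Pi.single j x))
    (fun x y => by
      obtain ⟨z, hz⟩ := hadd (Pi.single j x) (Pi.single j y)
      exact ⟨z, by rw [Pi.single_add, hz]⟩)
    (fun r x => by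
      obtain ⟨z, hz⟩ := hsmul r (Pi.single j x)
      exact ⟨z, by rw [Pi.single_smul, hz]⟩)
  choose f z hz using this
  refine ⟨∑ j, f j ∘ₗ LinearMap.proj j, fun x => ?_⟩
  have hsum : ∀ s : Finset (Fin n), ∃ w, φ (∑ j ∈ s, Pi.single j (x j)) =
      ∑ j ∈ s, f j (x j) + θ • w := by
    intro s
    induction s using Finset.induction_on with
    | empty =>
      obtain ⟨w, hw⟩ := hadd 0 0
      refine ⟨-w, ?_⟩
      simp only [add_zero] at hw
      simp only [Finset.sum_empty, smul_neg, zero_add]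
      rw [eq_neg_iff_add_eq_zero]
      rw [add_assoc] at hw
      exact left_eq_add.1 hw
    | insert a s ha ih =>
      obtain ⟨w, hw⟩ := ih
      obtain ⟨w', hw'⟩ := hadd (Pi.single a (x a)) (∑ j ∈ s, Pi.single j (x j))
      refine ⟨z a (x a) + w + w', ?_⟩
      rw [Finset.sum_insert ha, Finset.sum_insert ha, hw', hw, hz]
      simp only [smul_add]
      abel
  obtain ⟨w, hw⟩ := hsum Finset.univ
  rw [Finset.univ_sum_single] at hw
  exact ⟨w, by simpa using hw⟩

theorem MemAdd.exists_retract {S M : Type*} [AddCommGroup S] [Module A S]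
    [AddCommGroup M] [Module A M] (h : MemAdd A S M) :
    ∃ (n : ℕ) (i : M →ₗ[A] (Fin n → S)) (p : (Fin n → S) →ₗ[A] M), ∀ x, p (i x) = x := by
  obtain ⟨n, N, N', hc, ⟨e⟩⟩ := h
  refine ⟨n, N.subtype ∘ₗ e.toLinearMap, e.symm.toLinearMap ∘ₗ N.projectionOnto N' hc, fun x => ?_⟩
  simp

end Add

theorem det_of_rank {k : Type*} [Field k] (M : Matrix (Fin 2) (Fin 2) k) (h : ¬ M.rank ≤ 1) :
    M.det ≠ 0 := by
  intro h0
  obtain ⟨v, hv, hv0⟩ := Matrix.exists_mulVec_eq_zero_iff.2 h0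
  apply h
  have h1 := LinearMap.finrank_range_add_finrank_ker M.mulVecLin
  have h2 : 0 < Module.finrank k (LinearMap.ker M.mulVecLin) := by
    rw [Module.finrank_pos_iff_exists_ne_zero]
    exact ⟨⟨v, by simpa using hv0⟩, fun h => hv (congrArg Subtype.val h)⟩
  simp at h1
  rw [Matrix.rank]
  omega

theorem X_mem_span {V : Type*} [CommRing V] [IsLocalRing V] (m : Matrix (Fin 2) (Fin 2) V)
    (hm : ¬ Matrix.rank (m.map (residue V) - 1) ≤ 1)
    (T : Set (MvPowerSeries (Fin 2) V))
    (hT : ∀ i, (X i - ∑ j : Fin 2, C (σ := Fin 2) (R := V) (m j i) * X j) ∈ T) (i : Fin 2) :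
    (X i : MvPowerSeries (Fin 2) V) ∈ Ideal.span T := by
  have h1 := det_of_rank _ hm
  have h2 : IsUnit (m - 1).det := by
    rw [← residue_ne_zero_iff_isUnit]
    have : residue V (m - 1).det = (m.map (residue V) - 1).det := by
      rw [RingHom.map_det]
      congr 1
      ext i j
      by_cases hij : i = j <;> simp [Matrix.one_apply, hij]
    rwa [this]
  have h3 := Matrix.mul_nonsing_inv (m - 1) h2
  set E := (m - 1)⁻¹
  have e0 := fun j i => congrArg (C (σ := Fin 2) (R := V)) (congrFun (congrFun h3 j) i)
  have : (X i : MvPowerSeries (Fin 2) V) =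
      ∑ k : Fin 2, C (σ := Fin 2) (R := V) (-E k i) *
        (X k - ∑ j : Fin 2, C (σ := Fin 2) (R := V) (m j k) * X j) := by
    have e00 := e0 0 i
    have e11 := e0 1 i
    simp only [Matrix.mul_apply, Fin.sum_univ_two, Matrix.sub_apply, map_add, map_mul, map_sub] at e00 e11
    simp only [Fin.sum_univ_two, map_neg]
    rcases (by fin_cases i <;> simp : i = 0 ∨ i = 1) with rfl | rfl
    · simp at e00 e11 ⊢
      linear_combination (-X 0) * e00 - X 1 * e11
    · simp at e00 e11 ⊢
      linear_combination (-X 0) * e00 - X 1 * e11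
  rw [this]
  exact Ideal.sum_mem _ fun k _ => Ideal.mul_mem_left _ _ (Ideal.subset_span (hT k))

theorem liftP_self {G S : Type*} [Group G] [CommRing S] [MulSemiringAction G S] [Fintype G]
    (θ : fixedSubring G S) (x y : S)
    (hx : ∀ σ : G, σ ≠ 1 → x ∈ Ideal.span (Set.range fun b : S => b - σ • b))
    (hy : ∀ σ : G, σ ≠ 1 → y ∈ Ideal.span (Set.range fun b : S => b - σ • b))
    (h2 : ∀ s : S, (θ : S) ∣ s * x → (θ : S) ∣ s)
    (h3 : ∀ (N : ℕ) (s t : S), (θ : S) ∣ s * y ^ N - t * x ^ N → ∃ u, (θ : S) ∣ s - u * x ^ N) :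
    LiftP θ S S := by
  intro φ hadd hsmul
  have hθ0 : Ideal.Quotient.mk (Ideal.span {(θ : S)}) (θ : S) = 0 := by
    rw [Ideal.Quotient.eq_zero_iff_mem]; exact Ideal.mem_span_singleton_self _
  obtain ⟨u, hu⟩ := auslander_mod θ x y hx hy h2 h3
    (AddMonoidHom.mk' (fun s => Ideal.Quotient.mk (Ideal.span {(θ : S)}) (φ s)) (by
      intro a b
      obtain ⟨z, hz⟩ := hadd a b
      rw [hz, Subring.smul_def, smul_eq_mul]
      simp [hθ0]))
    (by
      intro r s
      obtain ⟨z, hz⟩ := hsmul r s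
      rw [Subring.smul_def, smul_eq_mul, Subring.smul_def, smul_eq_mul, Subring.smul_def,
        smul_eq_mul] at hz
      simp [hz, hθ0])
  refine ⟨{ toFun := fun t => ∑ τ : G, u τ * τ • t, map_add' := ?_, map_smul' := ?_ }, ?_⟩
  · intro a b
    simp [mul_add, Finset.sum_add_distrib]
  · intro r a
    rw [RingHom.id_apply, Finset.smul_sum]
    refine Finset.sum_congr rfl fun τ _ => ?_
    rw [Subring.smul_def, smul_eq_mul, Subring.smul_def, smul_eq_mul, smul_mul', r.2 τ]
    ring
  · intro t
    have := hu t
    rw [AddMonoidHom.mk'_apply, Ideal.Quotient.eq, Ideal.mem_span_singleton] at this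
    obtain ⟨z, hz⟩ := this
    refine ⟨z, ?_⟩
    rw [Subring.smul_def, smul_eq_mul, ← hz]
    simp

theorem mem_span_smul_top {A L : Type*} [CommRing A] [AddCommGroup L] [Module A L] (θ : A) (x : L) :
    x ∈ (Ideal.span {θ} • ⊤ : Submodule A L) ↔ ∃ z, x = θ • z := by
  rw [Submodule.ideal_span_singleton_smul, Submodule.mem_smul_pointwise_iff_exists]
  exact ⟨fun ⟨z, _, h⟩ => ⟨z, h.symm⟩, fun ⟨z, h⟩ => ⟨z, trivial, h.symm⟩⟩

theorem hom_mod_of_liftP {A L₁ L₂ : Type*} [CommRing A] [AddCommGroup L₁] [Module A L₁]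
    [AddCommGroup L₂] [Module A L₂] (θ : A) (h : LiftP θ L₁ L₂)
    (hreg : ∀ z : L₂, θ • z = 0 → z = 0) :
    (∀ φ : (L₁ ⧸ (Ideal.span {θ} • ⊤ : Submodule A L₁)) →ₗ[A]
        (L₂ ⧸ (Ideal.span {θ} • ⊤ : Submodule A L₂)),
      ∃ f : L₁ →ₗ[A] L₂, ∀ x : L₁, φ (Submodule.Quotient.mk x) = Submodule.Quotient.mk (f x)) ∧
    (∀ f : L₁ →ₗ[A] L₂,
      (∀ x : L₁, (Submodule.Quotient.mk (f x) :
          L₂ ⧸ (Ideal.span {θ} • ⊤ : Submodule A L₂)) = 0)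
        ↔ f ∈ (Ideal.span {θ} • ⊤ : Submodule A (L₁ →ₗ[A] L₂))) := by
  have key : ∀ a b : L₂, (Submodule.Quotient.mk a : L₂ ⧸ (Ideal.span {θ} • ⊤ : Submodule A L₂)) =
      Submodule.Quotient.mk b ↔ ∃ z, a = b + θ • z := by
    intro a b
    rw [Submodule.Quotient.eq, mem_span_smul_top]
    simp only [sub_eq_iff_eq_add']
  constructor
  · intro φ
    have := fun x : L₁ => Submodule.Quotient.mk_surjective _ (φ (Submodule.Quotient.mk x))
    choose ψ hψ using this
    obtain ⟨f, hf⟩ := h ψ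
      (fun x y => by
        rw [← key, Submodule.Quotient.mk_add, hψ, hψ, hψ, Submodule.Quotient.mk_add, map_add])
      (fun r x => by
        rw [← key, Submodule.Quotient.mk_smul, hψ, hψ, Submodule.Quotient.mk_smul, map_smul])
    refine ⟨f, fun x => ?_⟩
    rw [← hψ, key]
    exact hf x
  · intro f
    rw [mem_span_smul_top]
    constructor
    · intro hf
      have : ∀ x, ∃ z, f x = θ • z := fun x => by
        have := hf x
        rwa [Submodule.Quotient.mk_eq_zero, mem_span_smul_top] at this
      choose k hk using this
      have inj : ∀ a b : L₂, θ • a = θ • b → a = b := fun a b hab =>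
        sub_eq_zero.1 (hreg _ (by rw [smul_sub, hab, sub_self]))
      refine ⟨{ toFun := k, map_add' := ?_, map_smul' := ?_ }, ?_⟩
      · intro x y
        apply inj
        rw [← hk, smul_add, ← hk, ← hk, map_add]
      · intro r x
        apply inj
        rw [← hk, RingHom.id_apply, smul_comm, ← hk, map_smul]
      · ext x
        exact hk x
    · rintro ⟨k, rfl⟩ x
      rw [Submodule.Quotient.mk_eq_zero, mem_span_smul_top]
      exact ⟨k x, rfl⟩

/-- With `S = V[[x₁,x₂]]`, `G ⊆ GL₂(V)` finite without pseudo-reflections, `p ∤ |G|`,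
let `θ = π − g ∈ S^G` where `g ∈ (x₁,x₂)² ∩ S^G`, and set `B = S^G/(θ)`.  Then for
`L₁, L₂ ∈ add_{S^G}(S)`, `Hom_B(L₁/θL₁, L₂/θL₂) ≅ Hom_{S^G}(L₁,L₂)/θ·Hom_{S^G}(L₁,L₂)`:
every homomorphism of the quotient modules lifts, and a homomorphism induces `0` on
the quotients iff it lies in `θ·Hom_{S^G}(L₁,L₂)`. -/
theorem hom_mod_theta
    (V : Type) [CommRing V] [IsDomain V] [IsDiscreteValuationRing V] [CharZero V]
    [IsAdicComplete (maximalIdeal V) V]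
    (p : ℕ) (hp : p.Prime)
    [CharP (ResidueField V) p] [IsAlgClosed (ResidueField V)]
    (G : Subgroup (GL (Fin 2) V)) [Finite G] (hG : ¬ (p ∣ Nat.card G))
    [MulSemiringAction G (MvPowerSeries (Fin 2) V)]
    (hlin : ∀ (σ : G) (i : Fin 2),
      σ • (X i : MvPowerSeries (Fin 2) V) =
        ∑ j : Fin 2, C (σ := Fin 2) (R := V) (((σ : GL (Fin 2) V) : Matrix (Fin 2) (Fin 2) V) j i) * X j)
    (hconst : ∀ (σ : G) (v : V),
      σ • (C (σ := Fin 2) (R := V) v) = C (σ := Fin 2) (R := V) v)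
    (hpr : ∀ σ : G, σ ≠ 1 →
      ¬ Matrix.rank
          ((((σ : GL (Fin 2) V) : Matrix (Fin 2) (Fin 2) V)).map (residue V) - 1) ≤ 1)
    (π : V) (hπ : maximalIdeal V = Ideal.span {π})
    (g : MvPowerSeries (Fin 2) V)
    (hg : g ∈ (Ideal.span {(X 0 : MvPowerSeries (Fin 2) V), X 1}) ^ 2)
    (θ : fixedSubring G (MvPowerSeries (Fin 2) V))
    (hθ : (θ : MvPowerSeries (Fin 2) V) = C (σ := Fin 2) (R := V) π - g)
    (L₁ L₂ : Type) [AddCommGroup L₁] [AddCommGroup L₂]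
    [Module (fixedSubring G (MvPowerSeries (Fin 2) V)) L₁]
    [Module (fixedSubring G (MvPowerSeries (Fin 2) V)) L₂]
    [Module.Finite (fixedSubring G (MvPowerSeries (Fin 2) V)) L₁]
    [Module.Finite (fixedSubring G (MvPowerSeries (Fin 2) V)) L₂]
    (h₁ : MemAdd (fixedSubring G (MvPowerSeries (Fin 2) V)) (MvPowerSeries (Fin 2) V) L₁)
    (h₂ : MemAdd (fixedSubring G (MvPowerSeries (Fin 2) V)) (MvPowerSeries (Fin 2) V) L₂) :
    (∀ φ : (L₁ ⧸ (Ideal.span {θ} • ⊤ : Submodule (fixedSubring G (MvPowerSeries (Fin 2) V)) L₁))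
        →ₗ[fixedSubring G (MvPowerSeries (Fin 2) V)]
        (L₂ ⧸ (Ideal.span {θ} • ⊤ : Submodule (fixedSubring G (MvPowerSeries (Fin 2) V)) L₂)),
      ∃ f : L₁ →ₗ[fixedSubring G (MvPowerSeries (Fin 2) V)] L₂,
        ∀ x : L₁, φ (Submodule.Quotient.mk x) = Submodule.Quotient.mk (f x)) ∧
    (∀ f : L₁ →ₗ[fixedSubring G (MvPowerSeries (Fin 2) V)] L₂,
      (∀ x : L₁, (Submodule.Quotient.mk (f x) :
          L₂ ⧸ (Ideal.span {θ} • ⊤ : Submodule (fixedSubring G (MvPowerSeries (Fin 2) V)) L₂)) = 0)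
        ↔ f ∈ (Ideal.span {θ} • ⊤ :
            Submodule (fixedSubring G (MvPowerSeries (Fin 2) V))
              (L₁ →ₗ[fixedSubring G (MvPowerSeries (Fin 2) V)] L₂))) := by
  have hπ0 : π ≠ 0 := by
    rintro rfl
    apply IsDiscreteValuationRing.not_a_field V
    rw [hπ]; simp
  have hgc : constantCoeff g = 0 := by
    have h1 := Ideal.pow_le_self (two_ne_zero) hg
    have h2 : Ideal.span {(X 0 : MvPowerSeries (Fin 2) V), X 1} ≤
        RingHom.ker (constantCoeff (σ := Fin 2) (R := V)) := by
      rw [Ideal.span_le]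
      rintro a (rfl | rfl) <;> simp
    exact h2 h1
  have hc : constantCoeff (θ : MvPowerSeries (Fin 2) V) ≠ 0 := by
    rw [hθ, map_sub, hgc]
    simpa using hπ0
  have hθ0 : (θ : MvPowerSeries (Fin 2) V) ≠ 0 := by
    intro h
    rw [h] at hc
    simp at hc
  have : Fintype G := Fintype.ofFinite G
  have hX : ∀ (i : Fin 2) (σ : G), σ ≠ 1 → (X i : MvPowerSeries (Fin 2) V) ∈
      Ideal.span (Set.range fun b : MvPowerSeries (Fin 2) V => b - σ • b) := by
    intro i σ hσ
    refine X_mem_span _ (hpr σ hσ) _ (fun k => ?_) i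
    exact ⟨X k, by simp only [hlin]⟩
  have hX0 : (X 0 : MvPowerSeries (Fin 2) V) ≠ 0 := by
    intro h0
    have := congrArg (coeff (Finsupp.single (0 : Fin 2) 1)) h0
    simp at this
  have hself : LiftP θ (MvPowerSeries (Fin 2) V) (MvPowerSeries (Fin 2) V) := by
    refine liftP_self θ (X 0) (X 1) (hX 0) (hX 1) ?_ ?_
    · rintro s ⟨t, ht⟩
      obtain ⟨c, rfl⟩ := X_dvd_of_const 0 _ t hc ⟨s, by rw [← ht]; ring⟩
      exact ⟨c, mul_right_cancel₀ hX0 (by rw [ht]; ring)⟩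
    · rintro N s t ⟨b, hb⟩
      obtain ⟨a', b', h⟩ := regB _ hc N N s t b (by linear_combination hb)
      exact ⟨a', b', by rw [h]; ring⟩
  obtain ⟨n, i₁, p₁, h₁⟩ := h₁.exists_retract
  obtain ⟨m, i₂, p₂, h₂⟩ := h₂.exists_retract
  refine hom_mod_of_liftP θ
    ((((hself.pi_left n).retract_left i₁ p₁ h₁).pi_right m).retract_right i₂ p₂ h₂) ?_
  intro z hz
  have h0 : i₂ z = 0 := by
    ext1 j
    have := congrFun (congrArg i₂ hz) j
    rw [map_smul, map_zero, Pi.smul_apply, Subring.smul_def, smul_eq_mul] at this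
    exact (mul_eq_zero.1 this).resolve_left hθ0
  rw [← h₂ z, h0, map_zero]
end
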